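/- For every integer i ≥ 0 there exists N such that for all n ≥ N the homotopy groups π_i(U(n), I) and π_{i+2}(U(n), I) are isomorphic; that is, the stable homotopy groups of the unitary groups are periodic with period two. -/

import Mathlib

/-!
The proof is an elementary form of the Atiyah-Bott argument, carried out for families of invertible
matrices over cubes.

By polar decomposition (`pi_unitary`) the unitary group `U(n)` may be replaced by `GL(n)`. Homotopy classes
relative to the boundary of maps into a topological group are handled by `Nul` (null-homotopic maps) and
`Eqv` (homotopic maps). Stabilization `GL(ι) → GL(κ)` is done along a `Frame`, an embedding of `ℂ^ι` in
`ℂ^κ` with a chosen retraction; up to homotopy and further stabilization its choice is immaterial (`SE`).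
In degrees small compared with the size of the matrices stabilization is bijective (`null_of_inr`,
`exists_compress`), because the smooth image of a space of smaller dimension has dense complement
(`exists_vec_null`).

The Bott map sends a family `a` to the family `bott a` of iterated commutators
`⁅⁅a ⊕ 1, R t⁆, diag (exp (2 π i s), 1)⁆` with two more parameters `t` and `s`, where `R t` is the rotation
that interchanges the two summands at `t = 1`. In `s` it is a loop of the form `g λ g⁻¹ λ⁻¹` for
the loop `λ` attached to a projection, so it is governed by the idempotents `g P g⁻¹`.

For surjectivity, a family of loops `s ↦ F s` is approximated by Laurent polynomials in
`z = exp (2 π i s)` (`exists_laurent_unit`). The polynomial loop is linearized by its companion matrix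
(`LL`), which gives a loop `1 + (z - 1) A`, and `A` is deformed to its spectral projection `PP A`, defined
by a contour integral. Thus every family of loops is stably given by a family of idempotents
(`clutch`), and lifting a path of idempotents to a path of conjugating matrices shows that it is
stably in the image of the Bott map (`bott_surj`).

For injectivity, the same construction is applied to a null-homotopy of `bott a`. It produces a homotopy of
families of idempotents, starting from a constant one. For the loops `1 + (z - 1) P` themselves, multiplied
by `z ^ m`, the idempotent is `R1 ⊗ P + R0 ⊗ (1 - P)` with `R1` and `R0` of ranks `m + 1` and `m`. Transport
around the `t`-loop in these families is a null-homotopy of `a ^ (m + 1) * a ^ (-m) = a` (`bott_inj`).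

On cubes this yields `π_k(GL(n)) ≃ π_{k+2}(GL(2n))` for large `n` (`pi_bott`). In degree zero, `π_0` and
`π_2` are trivial.
-/

open scoped Topology

namespace BottPer
open unitInterval Matrix
open scoped commutatorElement

/-! ### Relative homotopy of maps into topological groups -/

section Nul
variable {Z : Type*} [TopologicalSpace Z] {Z' : Type*} [TopologicalSpace Z']
variable {G' : Type*} [Group G'] [TopologicalSpace G'] [IsTopologicalGroup G']
variable {G : Type*} [Group G] [TopologicalSpace G] [IsTopologicalGroup G]

/-- The maps `Z → G` which are null-homotopic relative to `W` (the homotopy starts at the constant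
map `1` and is equal to `1` on `W` throughout). -/
def Nul (W : Set Z) : Subgroup C(Z, G) where
  carrier := {f | ∃ H : C(I × Z, G), (∀ z, H (0, z) = 1) ∧ (∀ z, H (1, z) = f z) ∧
    ∀ t, ∀ w ∈ W, H (t, w) = 1}
  one_mem' := ⟨1, by simp, by simp, by simp⟩
  mul_mem' := by
    rintro f g ⟨H, h0, h1, hw⟩ ⟨K, k0, k1, kw⟩
    refine ⟨H * K, ?_, ?_, ?_⟩
    · intro z; simp [h0, k0]
    · intro z; simp [h1, k1]
    · intro t w m; simp [hw t w m, kw t w m]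
  inv_mem' := by
    rintro f ⟨H, h0, h1, hw⟩
    refine ⟨H⁻¹, ?_, ?_, ?_⟩
    · intro z; simp [h0]
    · intro z; simp [h1]
    · intro t w m; simp [hw t w m]

theorem mem_Nul {W : Set Z} {f : C(Z, G)} : f ∈ Nul W ↔ ∃ H : C(I × Z, G),
    (∀ z, H (0, z) = 1) ∧ (∀ z, H (1, z) = f z) ∧ ∀ t, ∀ w ∈ W, H (t, w) = 1 := Iff.rfl

instance (W : Set Z) : (Nul (G := G) W).Normal where
  conj_mem := by
    rintro f ⟨H, h0, h1, hw⟩ g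
    refine ⟨g.comp ContinuousMap.snd * H * (g.comp ContinuousMap.snd)⁻¹, ?_, ?_, ?_⟩
    · intro z; simp [h0]
    · intro z; simp [h1]
    · intro t w m; simp [hw t w m]

/-- Homotopy relative to `W` of maps into a topological group. -/
def Eqv (W : Set Z) (f g : C(Z, G)) : Prop := f⁻¹ * g ∈ Nul W

theorem Eqv.refl (W : Set Z) (f : C(Z, G)) : Eqv W f f := by
  simp [Eqv]

theorem Eqv.symm {W : Set Z} {f g : C(Z, G)} (h : Eqv W f g) : Eqv W g f := by
  have := (Nul W).inv_mem h
  simpa [Eqv] using this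

theorem Eqv.trans {W : Set Z} {f g k : C(Z, G)} (h : Eqv W f g) (h' : Eqv W g k) : Eqv W f k := by
  have := (Nul W).mul_mem h h'
  simpa [Eqv, mul_assoc] using this

theorem Eqv.mul {W : Set Z} {f g f' g' : C(Z, G)} (h : Eqv W f g) (h' : Eqv W f' g') :
    Eqv W (f * f') (g * g') := by
  have := (Nul W).mul_mem ((inferInstance : (Nul (G := G) W).Normal).conj_mem _ h f'⁻¹) h'
  simpa [Eqv, mul_assoc] using this

theorem Eqv.inv {W : Set Z} {f g : C(Z, G)} (h : Eqv W f g) : Eqv W f⁻¹ g⁻¹ := by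
  have := (inferInstance : (Nul (G := G) W).Normal).conj_mem _ h.symm f
  simpa [Eqv, mul_assoc] using this

theorem eqv_one {W : Set Z} {f : C(Z, G)} : Eqv W f 1 ↔ f ∈ Nul W := by
  simp [Eqv]

theorem Eqv.mem_iff {W : Set Z} {f g : C(Z, G)} (h : Eqv W f g) : f ∈ Nul W ↔ g ∈ Nul W := by
  rw [← eqv_one, ← eqv_one]; exact ⟨h.symm.trans, h.trans⟩

/-- A homotopy that is stationary on `W`. -/
theorem Eqv.of_homotopy {W : Set Z} {f g : C(Z, G)} (H : C(I × Z, G)) (h0 : ∀ z, H (0, z) = f z)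
    (h1 : ∀ z, H (1, z) = g z) (hw : ∀ t, ∀ w ∈ W, H (t, w) = H (0, w)) : Eqv W f g := by
  refine ⟨(f.comp ContinuousMap.snd)⁻¹ * H, ?_, ?_, ?_⟩
  · intro z; simp [h0]
  · intro z; simp [h1]
  · intro t w m; simp [hw t w m, h0]

theorem Eqv.homotopicRel {W : Set Z} {f g : C(Z, G)} (h : Eqv W f g) : f.HomotopicRel g W := by
  obtain ⟨H, h0, h1, hw⟩ := h
  refine ⟨⟨⟨f.comp ContinuousMap.snd * H, ?_, ?_⟩, ?_⟩⟩
  · intro z; simp [h0]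
  · intro z; simp [h1]
  · intro t w m; simp [hw t w m]

theorem Eqv.of_homotopicRel {W : Set Z} {f g : C(Z, G)} (h : f.HomotopicRel g W) : Eqv W f g := by
  obtain ⟨H⟩ := h
  refine Eqv.of_homotopy H.toContinuousMap ?_ ?_ ?_
  · intro z; simp
  · intro z; simp
  · intro t w m
    have := H.eq_fst t m
    simpa using this

theorem Nul.eq_one {W : Set Z} {f : C(Z, G)} (h : f ∈ Nul W) {w : Z} (hw : w ∈ W) : f w = 1 := by
  obtain ⟨H, h0, h1, h2⟩ := h
  rw [← h1, h2 1 w hw]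

theorem Eqv.eq_on {W : Set Z} {f g : C(Z, G)} (h : Eqv W f g) {w : Z} (hw : w ∈ W) :
    f w = g w := by
  have := Nul.eq_one h hw
  simpa [inv_mul_eq_one] using this

/-- Post-composition with a continuous homomorphism. -/
def mapHom (φ : G →* G') (hφ : Continuous φ) : C(Z, G) →* C(Z, G') where
  toFun f := (⟨φ, hφ⟩ : C(G, G')).comp f
  map_one' := by ext; simp
  map_mul' f g := by ext; simp

@[simp] theorem mapHom_apply (φ : G →* G') (hφ : Continuous φ) (f : C(Z, G)) (z : Z) :
    mapHom φ hφ f z = φ (f z) := rfl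

theorem Nul.map {W : Set Z} {f : C(Z, G)} (h : f ∈ Nul W) (φ : G →* G') (hφ : Continuous φ) :
    mapHom φ hφ f ∈ Nul W := by
  obtain ⟨H, h0, h1, hw⟩ := h
  refine ⟨mapHom φ hφ H, ?_, ?_, ?_⟩
  · intro z; simp [h0]
  · intro z; simp [h1]
  · intro t w m; simp [hw t w m]

theorem Eqv.map {W : Set Z} {f g : C(Z, G)} (h : Eqv W f g) (φ : G →* G') (hφ : Continuous φ) :
    Eqv W (mapHom φ hφ f) (mapHom φ hφ g) := by
  have := Nul.map h φ hφ
  simpa [Eqv] using this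

theorem Nul.comp {W : Set Z} {f : C(Z, G)} (h : f ∈ Nul W) (p : C(Z', Z)) {W' : Set Z'}
    (hp : ∀ w ∈ W', p w ∈ W) : f.comp p ∈ Nul W' := by
  obtain ⟨H, h0, h1, hw⟩ := h
  refine ⟨H.comp ((ContinuousMap.id I).prodMap p), ?_, ?_, ?_⟩
  · intro z; simp [h0]
  · intro z; simp [h1]
  · intro t w m; simp [hw t _ (hp w m)]

theorem Eqv.comp {W : Set Z} {f g : C(Z, G)} (h : Eqv W f g) (p : C(Z', Z)) {W' : Set Z'}
    (hp : ∀ w ∈ W', p w ∈ W) : Eqv W' (f.comp p) (g.comp p) := Nul.comp h p hp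

theorem Nul.mono {W W' : Set Z} {f : C(Z, G)} (h : f ∈ Nul W) (hW : W' ⊆ W) : f ∈ Nul W' := by
  obtain ⟨H, h0, h1, hw⟩ := h
  exact ⟨H, h0, h1, fun t w m => hw t w (hW m)⟩

end Nul

/-! ### General linear groups and stabilization along frames -/

section GLC
variable {Z : Type*} [TopologicalSpace Z]
variable {ι κ lam : Type} [Fintype ι] [DecidableEq ι] [Fintype κ] [DecidableEq κ]
  [Fintype lam] [DecidableEq lam]

/-- The general linear group over `ℂ` as a topological group. -/
abbrev GLC (ι : Type) [Fintype ι] [DecidableEq ι] := (Matrix ι ι ℂ)ˣ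

theorem continuous_of_val {f : Z → GLC ι} (h : Continuous fun z => (f z : Matrix ι ι ℂ)) :
    Continuous f := by
  rw [Units.continuous_iff]
  refine ⟨h, ?_⟩
  have : (fun z => ((f z)⁻¹ : GLC ι).val) =
      fun z => ((f z : Matrix ι ι ℂ).det)⁻¹ • (f z : Matrix ι ι ℂ).adjugate := by
    funext z
    rw [Matrix.coe_units_inv, Matrix.inv_def, Ring.inverse_eq_inv']
  rw [this]
  refine Continuous.smul (Continuous.inv₀ h.matrix_det ?_) h.matrix_adjugate
  intro z
  have := (Matrix.isUnit_iff_isUnit_det _).1 (f z).isUnit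
  exact this.ne_zero

/-- A continuous family of invertible matrices as a map to the general linear group. -/
noncomputable def mkGL (f : Z → Matrix ι ι ℂ) (hf : Continuous f) (hu : ∀ z, IsUnit (f z)) :
    C(Z, GLC ι) := ⟨fun z => (hu z).unit, continuous_of_val (by simpa using hf)⟩

@[simp] theorem mkGL_val (f : Z → Matrix ι ι ℂ) (hf : Continuous f) (hu : ∀ z, IsUnit (f z)) (z : Z) :
    ((mkGL f hf hu z : GLC ι) : Matrix ι ι ℂ) = f z := rfl

theorem continuous_val (f : C(Z, GLC ι)) : Continuous fun z => (f z : Matrix ι ι ℂ) :=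
  Units.continuous_val.comp f.continuous

theorem continuous_inv_val (f : C(Z, GLC ι)) : Continuous fun z => ((f z)⁻¹ : GLC ι).val :=
  Units.continuous_val.comp (f⁻¹).continuous

theorem isUnit_of_mul_eq_one {A B : Matrix ι ι ℂ} (h : A * B = 1) : IsUnit A :=
  IsUnit.of_mul_eq_one _ h

/-- Extending matrices by the identity along a split injection `ℂ^ι → ℂ^lam`, given by the injection
`V` and a left inverse `V'`. -/
structure Frame (ι lam : Type) [Fintype ι] [DecidableEq ι] [Fintype lam] [DecidableEq lam] where
  V : Matrix lam ι ℂ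
  V' : Matrix ι lam ℂ
  h : V' * V = 1

namespace Frame
attribute [simp] Frame.h

theorem h_assoc (F : Frame ι lam) {μ : Type*} (A : Matrix ι μ ℂ) : F.V' * (F.V * A) = A := by
  rw [← Matrix.mul_assoc, F.h, Matrix.one_mul]

/-- `M` acting on the image of the frame, and the identity on the complement `ker V'`. -/
def extM (F : Frame ι lam) : Matrix ι ι ℂ →* Matrix lam lam ℂ where
  toFun M := F.V * M * F.V' + (1 - F.V * F.V')
  map_one' := by simp
  map_mul' M N := by
    have := F.h_assoc (μ := lam)
    simp only [Matrix.mul_add, Matrix.add_mul, Matrix.mul_sub, Matrix.sub_mul, Matrix.mul_assoc, this,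
      Matrix.mul_one, Matrix.one_mul]
    abel

theorem extM_apply (F : Frame ι lam) (M : Matrix ι ι ℂ) :
    F.extM M = F.V * M * F.V' + (1 - F.V * F.V') := rfl

theorem extM_continuous (F : Frame ι lam) : Continuous F.extM := by
  have : Continuous fun M => F.extM M := by
    simp only [extM_apply]; fun_prop
  exact this

/-- The induced homomorphism of general linear groups. -/
noncomputable def ext (F : Frame ι lam) : GLC ι →* GLC lam := Units.map F.extM

@[simp] theorem ext_val (F : Frame ι lam) (a : GLC ι) :
    ((F.ext a : GLC lam) : Matrix lam lam ℂ) = F.extM a := rfl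

theorem ext_continuous (F : Frame ι lam) : Continuous F.ext :=
  continuous_of_val (F.extM_continuous.comp Units.continuous_val)

/-- Stabilization of a family of invertible matrices along a frame. -/
noncomputable def app (F : Frame ι lam) : C(Z, GLC ι) →* C(Z, GLC lam) := mapHom F.ext F.ext_continuous

@[simp] theorem app_apply (F : Frame ι lam) (f : C(Z, GLC ι)) (z : Z) : F.app f z = F.ext (f z) := rfl

theorem app_eqv (F : Frame ι lam) {W : Set Z} {f g : C(Z, GLC ι)} (h : Eqv W f g) :
    Eqv W (F.app f) (F.app g) := h.map _ _

theorem app_nul (F : Frame ι lam) {W : Set Z} {f : C(Z, GLC ι)} (h : f ∈ Nul W) :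
    F.app f ∈ Nul W := Nul.map h _ _

/-- Composition of frames. -/
def comp (F : Frame κ lam) (E : Frame ι κ) : Frame ι lam where
  V := F.V * E.V
  V' := E.V' * F.V'
  h := by rw [Matrix.mul_assoc, F.h_assoc, E.h]

theorem comp_extM (F : Frame κ lam) (E : Frame ι κ) (M : Matrix ι ι ℂ) :
    (F.comp E).extM M = F.extM (E.extM M) := by
  simp only [extM_apply, comp, Matrix.mul_add, Matrix.add_mul, Matrix.mul_sub, Matrix.sub_mul,
    Matrix.mul_assoc, Matrix.mul_one, Matrix.one_mul]
  abel

theorem comp_ext (F : Frame κ lam) (E : Frame ι κ) (a : GLC ι) :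
    (F.comp E).ext a = F.ext (E.ext a) := Units.ext (comp_extM F E a)

theorem comp_app (F : Frame κ lam) (E : Frame ι κ) (f : C(Z, GLC ι)) :
    (F.comp E).app f = F.app (E.app f) := ContinuousMap.ext fun _ => comp_ext _ _ _

/-- If `T` acts on the frame through `T₀`, then commutators with `T` are computed before extending. -/
theorem ext_commutator (F : Frame ι lam) (g T₀ : GLC ι) (T : GLC lam)
    (h1 : T.val * F.V = F.V * T₀.val) (h2 : F.V' * T.val = T₀.val * F.V') :
    ⁅F.ext g, T⁆ = F.ext ⁅g, T₀⁆ := by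
  have key : ∀ a : GLC ι, T * F.ext a = F.ext (T₀ * a * T₀⁻¹) * T := by
    intro a
    apply Units.ext
    simp only [Units.val_mul, ext_val, extM_apply, Matrix.mul_add, Matrix.add_mul, Matrix.mul_sub,
      Matrix.sub_mul, Matrix.mul_assoc, Matrix.mul_one, Matrix.one_mul, h2]
    simp only [← Matrix.mul_assoc, h1]
    simp only [Matrix.mul_assoc, h2, Units.inv_mul_cancel_left]
    simp only [← Matrix.mul_assoc]
    rw [show F.V * T₀.val * a.val * (T₀⁻¹ : GLC ι).val * T₀.val = F.V * T₀.val * a.val by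
      rw [Matrix.mul_assoc _ (T₀⁻¹ : GLC ι).val]; simp]
  have := key g⁻¹
  rw [commutatorElement_def, commutatorElement_def, ← map_inv, mul_assoc, mul_assoc, ← mul_assoc T, this]
  simp [mul_assoc]

end Frame
end GLC
end BottPer

namespace BottPer
open unitInterval Matrix
open scoped commutatorElement

/-! ### Orthogonal frames, rotations and stable homotopy -/

section Frames2
variable {Z : Type*} [TopologicalSpace Z]
variable {ι κ lam mu : Type} [Fintype ι] [DecidableEq ι] [Fintype κ] [DecidableEq κ]
  [Fintype lam] [DecidableEq lam] [Fintype mu] [DecidableEq mu]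

namespace Frame

/-- The inclusion of the first summand. -/
def inl : Frame ι (ι ⊕ κ) where
  V := fromRows 1 0
  V' := fromCols 1 0
  h := by simp [fromCols_mul_fromRows]

/-- The inclusion of the second summand. -/
def inr : Frame κ (ι ⊕ κ) where
  V := fromRows 0 1
  V' := fromCols 0 1
  h := by simp [fromCols_mul_fromRows]

theorem inl_extM (M : Matrix ι ι ℂ) : (inl (κ := κ)).extM M = fromBlocks M 0 0 1 := by
  ext (i | i) (j | j) <;>
  simp [extM_apply, inl, fromRows_mul, Matrix.mul_fromCols, Matrix.sub_apply, Matrix.one_apply]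

theorem inr_extM (M : Matrix κ κ ℂ) : (inr (ι := ι)).extM M = fromBlocks 1 0 0 M := by
  ext (i | i) (j | j) <;>
  simp [extM_apply, inr, fromRows_mul, Matrix.mul_fromCols, Matrix.sub_apply, Matrix.one_apply]

theorem commute_inl_inr (a : GLC ι) (b : GLC κ) : Commute (inl.ext a) (inr.ext b) := by
  apply Units.ext
  simp [inl_extM, inr_extM, fromBlocks_multiply]

/-- Two frames are orthogonal if each lands in the distinguished complement of the other. -/
def Orth (F : Frame ι lam) (E : Frame κ lam) : Prop := F.V' * E.V = 0 ∧ E.V' * F.V = 0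

theorem orth_inl_inr : Orth (inl : Frame ι (ι ⊕ κ)) inr := by
  constructor <;> simp [inl, inr, fromCols_mul_fromRows]

theorem Orth.symm {F : Frame ι lam} {E : Frame κ lam} (h : Orth F E) : Orth E F := ⟨h.2, h.1⟩

theorem Orth.comp_left {F : Frame ι lam} {E : Frame κ lam} (h : Orth F E) (F' : Frame mu ι) :
    Orth (F.comp F') E := by
  constructor
  · simp [comp, Matrix.mul_assoc, h.1]
  · simp [comp, ← Matrix.mul_assoc, h.2]

theorem Orth.comp_right {F : Frame ι lam} {E : Frame κ lam} (h : Orth F E) (F₁ : Frame mu κ) :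
    Orth F (E.comp F₁) := (h.symm.comp_left F₁).symm

/-- Two orthogonal frames assembled into one. -/
def pair (F : Frame ι lam) (E : Frame κ lam) (h : Orth F E) : Frame (ι ⊕ κ) lam where
  V := fromCols F.V E.V
  V' := fromRows F.V' E.V'
  h := by
    rw [fromRows_mul_fromCols, F.h, E.h, h.1, h.2, fromBlocks_one]

theorem pair_extM_inl (F : Frame ι lam) (E : Frame κ lam) (h : Orth F E) (M : Matrix ι ι ℂ) :
    (F.pair E h).extM (inl.extM M) = F.extM M := by
  rw [inl_extM]
  simp [extM_apply, pair, fromCols_mul_fromBlocks, fromCols_mul_fromRows]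
  abel

theorem pair_extM_inr (F : Frame ι lam) (E : Frame κ lam) (h : Orth F E) (M : Matrix κ κ ℂ) :
    (F.pair E h).extM (inr.extM M) = E.extM M := by
  rw [inr_extM]
  simp only [extM_apply, pair, fromCols_mul_fromBlocks, fromCols_mul_fromRows]
  simp
  abel

theorem pair_ext_inl (F : Frame ι lam) (E : Frame κ lam) (h : Orth F E) (a : GLC ι) :
    (F.pair E h).ext (inl.ext a) = F.ext a := Units.ext (pair_extM_inl ..)

theorem pair_ext_inr (F : Frame ι lam) (E : Frame κ lam) (h : Orth F E) (a : GLC κ) :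
    (F.pair E h).ext (inr.ext a) = E.ext a := Units.ext (pair_extM_inr ..)

/-- Direct sum of frames. -/
def prod (F : Frame ι lam) (E : Frame κ mu) : Frame (ι ⊕ κ) (lam ⊕ mu) where
  V := fromBlocks F.V 0 0 E.V
  V' := fromBlocks F.V' 0 0 E.V'
  h := by simp [fromBlocks_multiply]

theorem prod_extM (F : Frame ι lam) (E : Frame κ mu) (A : Matrix ι ι ℂ) (B : Matrix ι κ ℂ)
    (C : Matrix κ ι ℂ) (D : Matrix κ κ ℂ) : (F.prod E).extM (fromBlocks A B C D) =
      fromBlocks (F.extM A) (F.V * B * E.V') (E.V * C * F.V') (E.extM D) := by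
  simp only [extM_apply, prod, fromBlocks_multiply]
  rw [← fromBlocks_one, sub_eq_add_neg, fromBlocks_neg, fromBlocks_add, fromBlocks_add]
  simp [sub_eq_add_neg]

theorem prod_ext_inl (F : Frame ι lam) (E : Frame κ mu) (a : GLC ι) :
    (F.prod E).ext (inl.ext a) = inl.ext (F.ext a) := by
  apply Units.ext
  simp [inl_extM, prod_extM]

end Frame

/-- The angle functions of the rotation path. -/
noncomputable def rc (t : I) : ℂ := ((Real.cos (Real.pi / 2 * t) : ℝ) : ℂ)
/-- The angle functions of the rotation path. -/
noncomputable def rs (t : I) : ℂ := ((Real.sin (Real.pi / 2 * t) : ℝ) : ℂ)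

theorem rcs (t : I) : rc t * rc t + rs t * rs t = 1 := by
  have := Real.sin_sq_add_cos_sq (Real.pi / 2 * t)
  simp only [rc, rs]; norm_cast; nlinarith

@[fun_prop] theorem rc_continuous : Continuous rc := by unfold rc; fun_prop
@[fun_prop] theorem rs_continuous : Continuous rs := by unfold rs; fun_prop
@[simp] theorem rc_zero : rc 0 = 1 := by simp [rc]
@[simp] theorem rs_zero : rs 0 = 0 := by simp [rs]
@[simp] theorem rc_one : rc 1 = 0 := by simp [rc]
@[simp] theorem rs_one : rs 1 = 1 := by simp [rs]

/-- The block matrix with scalar blocks. -/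
def sblk (ι : Type) [Fintype ι] [DecidableEq ι] (a b c d : ℂ) : Matrix (ι ⊕ ι) (ι ⊕ ι) ℂ :=
  fromBlocks (a • 1) (b • 1) (c • 1) (d • 1)

theorem sblk_mul (a b c d a' b' c' d' : ℂ) : sblk ι a b c d * sblk ι a' b' c' d' =
    sblk ι (a * a' + b * c') (a * b' + b * d') (c * a' + d * c') (c * b' + d * d') := by
  simp [sblk, fromBlocks_multiply, smul_smul, add_smul, mul_comm]

theorem sblk_one : sblk ι 1 0 0 1 = 1 := by simp [sblk]

theorem sblk_intertwine (F : Frame ι lam) (a b c d : ℂ) :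
    sblk lam a b c d * (F.prod F).V = (F.prod F).V * sblk ι a b c d := by
  simp [sblk, Frame.prod, fromBlocks_multiply]

theorem sblk_intertwine' (F : Frame ι lam) (a b c d : ℂ) :
    (F.prod F).V' * sblk lam a b c d = sblk ι a b c d * (F.prod F).V' := by
  simp [sblk, Frame.prod, fromBlocks_multiply]

/-- The rotation by the angle `π t / 2` in `ℂ^ι ⊕ ℂ^ι`. -/
noncomputable def rot (ι : Type) [Fintype ι] [DecidableEq ι] (t : I) : GLC (ι ⊕ ι) where
  val := sblk ι (rc t) (-rs t) (rs t) (rc t)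
  inv := sblk ι (rc t) (rs t) (-rs t) (rc t)
  val_inv := by
    have h := rcs t
    rw [sblk_mul, ← sblk_one]; congr 1 <;> first | linear_combination h | ring1
  inv_val := by
    have h := rcs t
    rw [sblk_mul, ← sblk_one]; congr 1 <;> first | linear_combination h | ring1

/-- The rotation path. -/
noncomputable def rotC (ι : Type) [Fintype ι] [DecidableEq ι] : C(I, GLC (ι ⊕ ι)) :=
  ⟨rot ι, continuous_of_val (by simp only [rot, sblk]; fun_prop)⟩

@[simp] theorem rotC_apply (t : I) : rotC ι t = rot ι t := rfl

theorem rot_zero : rot ι 0 = 1 := Units.ext (by simp [rot, sblk_one])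

theorem rot_one_mul (a : GLC ι) : rot ι 1 * Frame.inl.ext a = Frame.inr.ext a * rot ι 1 := by
  apply Units.ext
  simp [rot, sblk, Frame.inl_extM, Frame.inr_extM, fromBlocks_multiply]

/-- The rotation path from `a ⊕ 1` to `1 ⊕ a`. -/
theorem inl_eqv_inr {W : Set Z} (a : C(Z, GLC ι)) (ha : ∀ w ∈ W, a w = 1) :
    Eqv W ((Frame.inl (κ := ι)).app a) (Frame.inr.app a) := by
  refine Eqv.of_homotopy ((rotC ι).comp ContinuousMap.fst *
    (Frame.inl.app a).comp ContinuousMap.snd * ((rotC ι).comp ContinuousMap.fst)⁻¹) ?_ ?_ ?_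
  · intro z; simp [rot_zero]
  · intro z; simp [rot_one_mul]
  · intro t w hw; simp [ha w hw]

/-- Stabilizations along orthogonal frames agree up to homotopy. -/
theorem eqv_of_orth {W : Set Z} (a : C(Z, GLC ι)) (ha : ∀ w ∈ W, a w = 1) {F E : Frame ι lam}
    (h : F.Orth E) : Eqv W (F.app a) (E.app a) := by
  have := (F.pair E h).app_eqv (inl_eqv_inr a ha)
  convert this using 1
  · ext1 z; simp [Frame.pair_ext_inl]
  · ext1 z; simp [Frame.pair_ext_inr]

/-- Stable homotopy relative to `W`: homotopy after stabilization along some frames. -/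
def SE (W : Set Z) (f : C(Z, GLC ι)) (g : C(Z, GLC κ)) : Prop :=
  ∃ (lam : Type) (_ : Fintype lam) (_ : DecidableEq lam) (F : Frame ι lam) (E : Frame κ lam),
    Eqv W (F.app f) (E.app g)

theorem SE.symm {W : Set Z} {f : C(Z, GLC ι)} {g : C(Z, GLC κ)} (h : SE W f g) : SE W g f := by
  obtain ⟨l, i1, i2, F, E, h⟩ := h
  exact ⟨l, i1, i2, E, F, h.symm⟩

theorem SE.trans {W : Set Z} {f : C(Z, GLC ι)} {g : C(Z, GLC κ)} {k : C(Z, GLC lam)}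
    (hg : ∀ w ∈ W, g w = 1) (h : SE W f g) (h' : SE W g k) : SE W f k := by
  obtain ⟨l, i1, i2, F, E, h⟩ := h
  obtain ⟨l', i1', i2', F', E', h'⟩ := h'
  refine ⟨l ⊕ l', inferInstance, inferInstance, Frame.inl.comp F, Frame.inr.comp E', ?_⟩
  rw [Frame.comp_app, Frame.comp_app]
  refine (Frame.app_eqv _ h).trans (Eqv.trans ?_ (Frame.app_eqv _ h'))
  rw [← Frame.comp_app, ← Frame.comp_app]
  exact eqv_of_orth g hg ((Frame.orth_inl_inr.comp_left _).comp_right _)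

theorem SE.exists_inr {W : Set Z} {f g : C(Z, GLC ι)} (hf : ∀ w ∈ W, f w = 1)
    (hg : ∀ w ∈ W, g w = 1) (h : SE W f g) : ∃ (mu : Type) (_ : Fintype mu) (_ : DecidableEq mu),
      Eqv W ((Frame.inr (ι := mu)).app f) (Frame.inr.app g) := by
  obtain ⟨l, i1, i2, F, E, h⟩ := h
  refine ⟨l, i1, i2, ?_⟩
  refine Eqv.trans ?_ (((Frame.inl (κ := ι)).app_eqv h).trans ?_)
  · rw [← Frame.comp_app]
    exact eqv_of_orth f hf (Frame.orth_inl_inr.symm.comp_right _)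
  · rw [← Frame.comp_app]
    exact eqv_of_orth g hg (Frame.orth_inl_inr.comp_left _)

theorem SE.of_app {W : Set Z} {f : C(Z, GLC ι)} {g : C(Z, GLC κ)} (F : Frame κ lam)
    (h : SE W f (F.app g)) : SE W f g := by
  obtain ⟨l, i1, i2, E, E', h⟩ := h
  exact ⟨l, i1, i2, E, E'.comp F, by rwa [Frame.comp_app]⟩

theorem SE.of_eqv {W : Set Z} {f g : C(Z, GLC ι)} (h : Eqv W f g) : SE W f g :=
  ⟨ι ⊕ ι, inferInstance, inferInstance, Frame.inl, Frame.inl, Frame.app_eqv _ h⟩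

/-! ### Loops of the form `1 + (ζ - 1) P` and the Bott map -/

/-- For an idempotent `P` and `ζ = u`, the operator that is `ζ` on the image of `P` and `1` on the
kernel. -/
def ddU (P : Matrix ι ι ℂ) (hP : P * P = P) (u : ℂˣ) : GLC ι where
  val := 1 + (u.val - 1) • P
  inv := 1 + (u⁻¹.val - 1) • P
  val_inv := by
    simp only [mul_add, add_mul, Matrix.smul_mul, Matrix.mul_smul, hP, mul_one, one_mul, smul_smul]
    rw [add_assoc, ← add_smul, ← add_smul]
    convert add_zero _
    convert zero_smul ℂ _
    have := u.mul_inv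
    linear_combination this
  inv_val := by
    simp only [mul_add, add_mul, Matrix.smul_mul, Matrix.mul_smul, hP, mul_one, one_mul, smul_smul]
    rw [add_assoc, ← add_smul, ← add_smul]
    convert add_zero _
    convert zero_smul ℂ _
    have := u.mul_inv
    linear_combination this

/-- The loop `s ↦ exp (2 π i s)`. -/
noncomputable def eU (s : I) : ℂˣ where
  val := Complex.exp (2 * Real.pi * Complex.I * s)
  inv := Complex.exp (-(2 * Real.pi * Complex.I * s))
  val_inv := by rw [← Complex.exp_add]; simp
  inv_val := by rw [← Complex.exp_add]; simp

@[simp] theorem eU_zero : eU 0 = 1 := Units.ext (by simp [eU])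
@[simp] theorem eU_one : eU 1 = 1 := Units.ext (by simp [eU, Complex.exp_two_pi_mul_I])
@[fun_prop] theorem eU_continuous : Continuous fun s => (eU s).val := by simp only [eU]; fun_prop

@[simp] theorem ddU_one (P : Matrix ι ι ℂ) (hP : P * P = P) : ddU P hP 1 = 1 :=
  Units.ext (by simp [ddU])

theorem ddU_conj (P : Matrix ι ι ℂ) (hP : P * P = P) (g : GLC ι) (u : ℂˣ)
    (hP' : (g.val * P * g⁻¹.val) * (g.val * P * g⁻¹.val) = g.val * P * g⁻¹.val) :
    ddU (g.val * P * g⁻¹.val) hP' u = g * ddU P hP u * g⁻¹ := by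
  apply Units.ext
  simp [ddU, mul_add, add_mul]

/-- The projection to the first summand of `ℂ^ι ⊕ ℂ^ι`. -/
def pz (ι : Type) [Fintype ι] [DecidableEq ι] : Matrix (ι ⊕ ι) (ι ⊕ ι) ℂ := sblk ι 1 0 0 0

theorem pz_mul : pz ι * pz ι = pz ι := by simp [pz, sblk_mul]

theorem ddU_pz_val (u : ℂˣ) : (ddU (pz ι) pz_mul u).val = sblk ι u.val 0 0 1 := by
  ext (i | i) (j | j) <;> simp [ddU, pz, sblk, Matrix.one_apply]
  split_ifs <;> simp

/-- The family `s ↦ diag (exp (2 π i s), 1)`. -/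
noncomputable def dC (P : Matrix ι ι ℂ) (hP : P * P = P) : C(I, GLC ι) :=
  ⟨fun s => ddU P hP (eU s), continuous_of_val (by simp only [ddU]; fun_prop)⟩

@[simp] theorem dC_apply (P : Matrix ι ι ℂ) (hP : P * P = P) (s : I) :
    dC P hP s = ddU P hP (eU s) := rfl

variable {X : Type*} [TopologicalSpace X]

/-- The boundary of `Y ⊆ X` times an interval, together with the two end faces. -/
def bd (Y : Set X) : Set (X × I) := {p | p.1 ∈ Y ∨ p.2 = 0 ∨ p.2 = 1}

/-- The commutator of `a ⊕ 1` with the rotations: a path from `1` to `a ⊕ a⁻¹`. -/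
noncomputable def wh (a : C(X, GLC ι)) : C(X × I, GLC (ι ⊕ ι)) :=
  ⁅((Frame.inl (κ := ι)).app a).comp (ContinuousMap.fst : C(X × I, X)),
    (rotC ι).comp (ContinuousMap.snd : C(X × I, I))⁆

theorem wh_apply (a : C(X, GLC ι)) (p : X × I) : wh a p = ⁅(Frame.inl (κ := ι)).ext (a p.1), rot ι p.2⁆ := rfl

/-- The Bott map: the commutator of `wh a` with the loop of diagonal matrices attached to the projection
`pz` onto the first summand. -/
noncomputable def bott (a : C(X, GLC ι)) : C((X × I) × I, GLC (ι ⊕ ι)) :=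
  ⁅(wh a).comp (ContinuousMap.fst : C((X × I) × I, X × I)),
    (dC (pz ι) pz_mul).comp (ContinuousMap.snd : C((X × I) × I, I))⁆

theorem bott_apply (a : C(X, GLC ι)) (p : (X × I) × I) :
    bott a p = ⁅⁅(Frame.inl (κ := ι)).ext (a p.1.1), rot ι p.1.2⁆, ddU (pz ι) pz_mul (eU p.2)⁆ := rfl

theorem commute_inl_pz (a : GLC ι) (u : ℂˣ) : Commute ((Frame.inl (κ := ι)).ext a) (ddU (pz ι) pz_mul u) := by
  apply Units.ext
  rw [Units.val_mul, Units.val_mul, ddU_pz_val]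
  simp [sblk, Frame.inl_extM, fromBlocks_multiply]

theorem commute_inr_pz (a : GLC ι) (u : ℂˣ) : Commute ((Frame.inr (ι := ι)).ext a) (ddU (pz ι) pz_mul u) := by
  apply Units.ext
  rw [Units.val_mul, Units.val_mul, ddU_pz_val]
  simp [sblk, Frame.inr_extM, fromBlocks_multiply]

theorem wh_one (a : GLC ι) : ⁅(Frame.inl (κ := ι)).ext a, rot ι 1⁆ = Frame.inl.ext a * Frame.inr.ext a⁻¹ := by
  rw [commutatorElement_def, mul_assoc, mul_assoc, ← mul_assoc (rot ι 1), ← map_inv, rot_one_mul]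
  simp

/-- The Bott map is trivial on the end faces. -/
theorem bott_boundary (a : GLC ι) {t s : I} (h : (t = 0 ∨ t = 1) ∨ s = 0 ∨ s = 1) :
    ⁅⁅(Frame.inl (κ := ι)).ext a, rot ι t⁆, ddU (pz ι) pz_mul (eU s)⁆ = 1 := by
  obtain (rfl | rfl) | rfl | rfl := h
  · simp [rot_zero]
  · rw [wh_one, commutatorElement_eq_one_iff_commute]
    exact (commute_inl_pz _ _).mul_left (commute_inr_pz _ _)
  · simp
  · simp

theorem bott_eq_one {Y : Set X} (a : C(X, GLC ι)) (ha : ∀ y ∈ Y, a y = 1) :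
    ∀ w ∈ bd (bd Y), bott a w = 1 := by
  rintro ⟨⟨x, t⟩, s⟩ h
  rw [bott_apply]
  by_cases hx : x ∈ Y
  · simp [ha x hx]
  · exact bott_boundary _ (by simpa [bd, hx] using h)

theorem bott_eqv {Y : Set X} {a b : C(X, GLC ι)} (h : Eqv Y a b) :
    Eqv (bd (bd Y)) (bott a) (bott b) := by
  obtain ⟨H, h0, h1, hw⟩ := h
  let K : C(I × X, GLC ι) := a.comp ContinuousMap.snd * H
  refine Eqv.of_homotopy ((bott K).comp ⟨fun p => (((p.1, p.2.1.1), p.2.1.2), p.2.2), by fun_prop⟩)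
    ?_ ?_ ?_
  · intro z; simp [bott_apply, K, h0]
  · intro z; simp [bott_apply, K, h1]
  · rintro τ ⟨⟨x, t⟩, s⟩ h
    simp only [ContinuousMap.comp_apply, ContinuousMap.coe_mk, bott_apply]
    by_cases hx : x ∈ Y
    · simp [K, hw _ x hx]
    · rw [bott_boundary, bott_boundary] <;> simpa [bd, hx] using h

/-- The Bott map commutes with stabilization. -/
theorem bott_app (F : Frame ι lam) (a : C(X, GLC ι)) : bott (F.app a) = (F.prod F).app (bott a) := by
  ext1 p
  simp only [Frame.app_apply, bott_apply]
  rw [← Frame.prod_ext_inl F F, Frame.ext_commutator _ _ (rot ι p.1.2), Frame.ext_commutator]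
  · rw [ddU_pz_val, ddU_pz_val, sblk_intertwine]
  · rw [ddU_pz_val, ddU_pz_val, sblk_intertwine']
  · simp [rot, sblk_intertwine]
  · simp [rot, sblk_intertwine']

end Frames2
end BottPer

namespace BottPer
open unitInterval Matrix
open scoped commutatorElement ComplexOrder

/-! ### Lifting paths of idempotents and of vectors -/

section Transport
variable {V : Type*} [TopologicalSpace V] [CompactSpace V]
variable {κ : Type} [Fintype κ] [DecidableEq κ]

/-- By compactness, `w` is invertible along the paths `q (v, ·)` for all pairs of sufficiently close
parameters, uniformly in `v`. -/
theorem exists_step {S : Type*} [TopologicalSpace S] (w : S → S → Matrix κ κ ℂ)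
    (hw : Continuous fun p : S × S => w p.1 p.2) (hw1 : ∀ s, w s s = 1) (q : C(V × I, S)) :
    ∃ δ > 0, ∀ v t t', dist t t' < δ → IsUnit (w (q (v, t)) (q (v, t'))) := by
  have hop : IsOpen {p : I × I | ∀ v : V, (w (q (v, p.1)) (q (v, p.2))).det ≠ 0} := by
    have hc : Continuous fun x : (I × I) × V => (w (q (x.2, x.1.1)) (q (x.2, x.1.2))).det := by
      refine Continuous.matrix_det ?_
      exact hw.comp (f := fun x : (I × I) × V => (q (x.2, x.1.1), q (x.2, x.1.2))) (by fun_prop)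
    have := (isOpen_ne.preimage hc : IsOpen {x : (I × I) × V |
      (w (q (x.2, x.1.1)) (q (x.2, x.1.2))).det ≠ 0})
    have h2 := isClosedMap_fst_of_compactSpace (X := I × I) (Y := V) _ this.isClosed_compl
    convert h2.isOpen_compl using 1
    ext p
    simp
  have hmem : {p : I × I | ∀ v : V, (w (q (v, p.1)) (q (v, p.2))).det ≠ 0} ∈ uniformity I := by
    rw [compactSpace_uniformity, Filter.mem_iSup]
    intro t
    exact hop.mem_nhds (by simp [hw1])
  obtain ⟨δ, hδ, h⟩ := Metric.mem_uniformity_dist.1 hmem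
  refine ⟨δ, hδ, fun v t t' ht => ?_⟩
  rw [Matrix.isUnit_iff_isUnit_det]
  exact (h ht v).isUnit

/-- Parallel transport: infinitesimal transports `w s s'` (with `w s s = 1`) can be multiplied up
along the paths `q (v, ·)`. Cutting off the time parameter makes the product continuous without any
gluing. -/
theorem exists_transport {S : Type*} [TopologicalSpace S] (w : S → S → Matrix κ κ ℂ)
    (hw : Continuous fun p : S × S => w p.1 p.2) (hw1 : ∀ s, w s s = 1) (q : C(V × I, S))
    (Φ : S → S → GLC κ → Prop) (h1 : ∀ s, Φ s s 1)
    (hmul : ∀ s s' s'' g h, Φ s s' g → Φ s' s'' h → Φ s s'' (h * g))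
    (hΦ : ∀ s s' g, g.val = w s s' → Φ s s' g) :
    ∃ g : C(V × I, GLC κ), (∀ v, g (v, 0) = 1) ∧ (∀ v t, Φ (q (v, 0)) (q (v, t)) (g (v, t))) ∧
      (∀ v, (∀ t, q (v, t) = q (v, 0)) → ∀ t, g (v, t) = 1) ∧
      (∀ v v', (∀ t, q (v, t) = q (v', t)) → ∀ t, g (v, t) = g (v', t)) := by
  obtain ⟨δ, hδ, hu⟩ := exists_step w hw hw1 q
  obtain ⟨N, hN⟩ := exists_nat_one_div_lt hδ
  let τ : ℕ → I := fun j => Set.projIcc 0 1 zero_le_one ((j : ℝ) / (N + 1))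
  have hτ : ∀ j t, dist (min t (τ j)) (min t (τ (j + 1))) < δ := by
    intro j t
    refine lt_of_le_of_lt ?_ hN
    have e1 : |(τ j : ℝ) - τ (j + 1)| ≤ 1 / (N + 1) := by
      refine (Set.abs_projIcc_sub_projIcc zero_le_one).trans ?_
      push_cast
      rw [show (j : ℝ) / (N + 1) - (j + 1) / (N + 1) = - (1 / (N + 1)) by ring, abs_neg, abs_of_pos]
      positivity
    rw [Subtype.dist_eq, Real.dist_eq]
    have e2 := abs_min_sub_min_le_max (t : ℝ) (τ j : ℝ) (t : ℝ) (τ (j + 1) : ℝ)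
    simp only [sub_self, abs_zero] at e2
    have e3 : ∀ a b : I, ((min a b : I) : ℝ) = min (a : ℝ) b := fun a b =>
      Subtype.coe_injective.eq_iff.2 rfl ▸ (by
        rcases le_total a b with h | h
        · rw [min_eq_left h, min_eq_left (by exact_mod_cast h)]
        · rw [min_eq_right h, min_eq_right (by exact_mod_cast h)])
    rw [e3, e3]
    exact e2.trans (max_le (by positivity) e1)
  have key : ∀ j : ℕ, ∃ g : C(V × I, GLC κ), (∀ v, g (v, 0) = 1) ∧
      (∀ v t, Φ (q (v, 0)) (q (v, min t (τ j))) (g (v, t))) ∧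
      (∀ v, (∀ t, q (v, t) = q (v, 0)) → ∀ t, g (v, t) = 1) ∧
      (∀ v v', (∀ t, q (v, t) = q (v', t)) → ∀ t, g (v, t) = g (v', t)) := by
    intro j
    induction j with
    | zero =>
      refine ⟨1, by simp, ?_, by simp, by simp⟩
      intro v t
      have : τ 0 = 0 := by simp [τ]
      rw [this, min_eq_right (show (0 : I) ≤ t from t.2.1)]
      exact h1 _
    | succ j ih =>
      obtain ⟨g, g0, g1, g2, g3⟩ := ih
      let u : C(V × I, GLC κ) := mkGL (fun p => w (q (p.1, min p.2 (τ j))) (q (p.1, min p.2 (τ (j + 1)))))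
        (hw.comp (f := fun p : V × I => (q (p.1, min p.2 (τ j)), q (p.1, min p.2 (τ (j + 1)))))
          (by fun_prop)) (fun p => hu _ _ _ (hτ j p.2))
      refine ⟨u * g, ?_, ?_, ?_, ?_⟩
      · intro v
        apply Units.ext
        simp [u, g0, hw1]
      · intro v t
        exact hmul _ _ _ _ _ (g1 v t) (hΦ _ _ _ rfl)
      · intro v hv t
        apply Units.ext
        simp only [ContinuousMap.mul_apply, g2 v hv, u, mul_one, mkGL_val]
        rw [hv (min t (τ j)), hv (min t (τ (j + 1))), hw1]; rfl
      · intro v v' hv t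
        apply Units.ext
        simp only [ContinuousMap.mul_apply, g3 v v' hv, u, Units.val_mul, mkGL_val, hv]
  obtain ⟨g, g0, g1, g2, g3⟩ := key (N + 1)
  refine ⟨g, g0, ?_, g2, g3⟩
  intro v t
  have : τ (N + 1) = 1 := by
    simp only [τ]
    push_cast
    rw [div_self (by positivity), Set.projIcc_right]; rfl
  have := this ▸ g1 v t
  rwa [min_eq_left (show t ≤ (1 : I) from t.2.2)] at this

/-- A path of idempotents is obtained by conjugating its start by a path of invertible matrices. -/
theorem exists_idem_lift (q : C(V × I, Matrix κ κ ℂ)) (hq : ∀ p, q p * q p = q p) :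
    ∃ g : C(V × I, GLC κ), (∀ v, g (v, 0) = 1) ∧
      (∀ v t, (g (v, t)).val * q (v, 0) = q (v, t) * (g (v, t)).val) ∧
      (∀ v, (∀ t, q (v, t) = q (v, 0)) → ∀ t, g (v, t) = 1) ∧
      (∀ v v', (∀ t, q (v, t) = q (v', t)) → ∀ t, g (v, t) = g (v', t)) := by
  obtain ⟨g, g0, g1, g2, g3⟩ := exists_transport (S := {e : Matrix κ κ ℂ // e * e = e})
    (fun e f => f.1 * e.1 + (1 - f.1) * (1 - e.1)) (by fun_prop)
    (fun s => by
      have := s.2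
      simp only [mul_sub, sub_mul, this, mul_one, one_mul]
      abel) ⟨fun p => ⟨q p, hq p⟩, by fun_prop⟩
    (fun s s' g => g.val * s.1 = s'.1 * g.val) (by simp)
    (by
      intro s s' s'' g h e1 e2
      rw [Units.val_mul, mul_assoc, e1, ← mul_assoc, e2, mul_assoc])
    (by
      intro s s' g hg
      have h1 := s.2
      have h2 := s'.2
      rw [hg]
      simp only [mul_sub, sub_mul, mul_add, add_mul, mul_one, one_mul, h1, h2, mul_assoc]
      simp only [← mul_assoc, h2]
      abel)
  refine ⟨g, g0, g1, ?_, ?_⟩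
  · intro v hv
    exact g2 v (fun t => Subtype.ext (hv t))
  · intro v v' hv
    exact g3 v v' (fun t => Subtype.ext (hv t))

/-- A path of nonzero vectors is obtained by moving its start by a path of invertible matrices. -/
theorem exists_vec_lift (q : C(V × I, κ → ℂ)) (hq : ∀ p, q p ≠ 0) :
    ∃ g : C(V × I, GLC κ), (∀ v, g (v, 0) = 1) ∧
      (∀ v t, (g (v, t)).val *ᵥ q (v, 0) = q (v, t)) ∧
      (∀ v, (∀ t, q (v, t) = q (v, 0)) → ∀ t, g (v, t) = 1) ∧
      (∀ v v', (∀ t, q (v, t) = q (v', t)) → ∀ t, g (v, t) = g (v', t)) := by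
  have hS : ∀ s : {c : κ → ℂ // c ≠ 0}, star s.1 ⬝ᵥ s.1 ≠ 0 := fun s h =>
    s.2 (dotProduct_star_self_eq_zero.1 h)
  obtain ⟨g, g0, g1, g2, g3⟩ := exists_transport (S := {c : κ → ℂ // c ≠ 0})
    (fun c c' => 1 + (star c.1 ⬝ᵥ c.1)⁻¹ • vecMulVec (c'.1 - c.1) (star c.1))
    (by
      have e1 : Continuous fun p : {c : κ → ℂ // c ≠ 0} × {c : κ → ℂ // c ≠ 0} =>
          (star p.1.1 ⬝ᵥ p.1.1)⁻¹ :=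
        Continuous.inv₀ (Continuous.dotProduct (by fun_prop) (by fun_prop)) (fun p => hS _)
      have e2 : Continuous fun p : {c : κ → ℂ // c ≠ 0} × {c : κ → ℂ // c ≠ 0} =>
          vecMulVec (p.2.1 - p.1.1) (star p.1.1) :=
        Continuous.matrix_vecMulVec (by fun_prop) (by fun_prop)
      exact continuous_const.add (e1.smul e2))
    (fun s => by simp) ⟨fun p => ⟨q p, hq p⟩, by fun_prop⟩
    (fun s s' g => g.val *ᵥ s.1 = s'.1) (by simp)
    (by
      intro s s' s'' g h e1 e2
      rw [Units.val_mul, ← Matrix.mulVec_mulVec, e1, e2])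
    (by
      intro s s' g hg
      have h1 := hS s
      rw [hg, Matrix.add_mulVec, Matrix.smul_mulVec, Matrix.vecMulVec_mulVec]
      simp [smul_smul, h1])
  refine ⟨g, g0, g1, ?_, ?_⟩
  · intro v hv
    exact g2 v (fun t => Subtype.ext (hv t))
  · intro v v' hv
    exact g3 v v' (fun t => Subtype.ext (hv t))
end Transport
end BottPer

namespace BottPer
open unitInterval Matrix
open scoped commutatorElement ComplexOrder

/-! ### Spectral projections by contour integrals -/

section Spectral
open MeasureTheory Filter

/-- The character `s ↦ exp (2 π i s)` on the real line. -/
noncomputable def ee (s : ℝ) : ℂ := Complex.exp (2 * Real.pi * Complex.I * s)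

theorem ee_add (s t : ℝ) : ee (s + t) = ee s * ee t := by
  simp only [ee, ← Complex.exp_add]; push_cast; ring_nf

@[simp] theorem ee_zero : ee 0 = 1 := by simp [ee]
@[fun_prop] theorem ee_continuous : Continuous ee := by unfold ee; fun_prop
theorem ee_norm (s : ℝ) : ‖ee s‖ = 1 := by
  rw [ee, show (2 * Real.pi * Complex.I * s : ℂ) = ((2 * Real.pi * s : ℝ) : ℂ) * Complex.I by
    push_cast; ring]
  exact Complex.norm_exp_ofReal_mul_I _

theorem ee_int (k : ℤ) : ee k = 1 := by
  rw [ee, show (2 * Real.pi * Complex.I * (k : ℝ) : ℂ) = k * (2 * Real.pi * Complex.I) by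
    push_cast; ring]
  exact Complex.exp_int_mul_two_pi_mul_I k

theorem ee_eq_eU (s : I) : (eU s).val = ee s := rfl

theorem ee_ne (s : ℝ) : ee s ≠ 0 := Complex.exp_ne_zero _

theorem exists_ee {u : ℂ} (hu : ‖u‖ = 1) : ∃ s, ee s = u := by
  refine ⟨u.arg / (2 * Real.pi), ?_⟩
  rw [ee, show (2 * Real.pi * Complex.I * ((u.arg / (2 * Real.pi) : ℝ) : ℂ) : ℂ) = u.arg * Complex.I by
    have := Real.pi_ne_zero
    push_cast; field_simp]
  have := Complex.norm_mul_exp_arg_mul_I u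
  simpa [hu] using this

theorem integral_ee (k : ℤ) : ∫ s in (0 : ℝ)..1, ee (-(k * s)) = if k = 0 then 1 else 0 := by
  split_ifs with h
  · simp [h]
  · have h2 : (-(2 * Real.pi * Complex.I * k) : ℂ) ≠ 0 := by
      simp [Real.pi_ne_zero, h]
    have := integral_exp_mul_complex (a := 0) (b := 1) h2
    simp only [ee]
    convert this using 1
    · congr 1; ext s; congr 1; push_cast; ring
    · rw [show (-(2 * Real.pi * Complex.I * k) * ((1 : ℝ) : ℂ) : ℂ) = ((-k : ℤ) : ℂ) * (2 * Real.pi * Complex.I) by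
        push_cast; ring, Complex.exp_int_mul_two_pi_mul_I]
      simp

variable {κ lam : Type} [Fintype κ] [DecidableEq κ] [Fintype lam] [DecidableEq lam]

/-- The matrices `A` for which `1 + (ζ - 1) A` is invertible on the unit circle. -/
def Qs (κ : Type) [Fintype κ] [DecidableEq κ] : Set (Matrix κ κ ℂ) :=
  {A | ∀ s : ℝ, IsUnit (1 + (ee s - 1) • A)}

/-- The inverse of `1 + (ζ - 1) A`. -/
noncomputable def Fs (A : Matrix κ κ ℂ) (s : ℝ) : Matrix κ κ ℂ := (1 + (ee s - 1) • A)⁻¹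

theorem Fs_mul {A : Matrix κ κ ℂ} (hA : A ∈ Qs κ) (s : ℝ) : (1 + (ee s - 1) • A) * Fs A s = 1 :=
  Matrix.mul_nonsing_inv _ ((Matrix.isUnit_iff_isUnit_det _).1 (hA s))

theorem mul_Fs {A : Matrix κ κ ℂ} (hA : A ∈ Qs κ) (s : ℝ) : Fs A s * (1 + (ee s - 1) • A) = 1 :=
  Matrix.nonsing_inv_mul _ ((Matrix.isUnit_iff_isUnit_det _).1 (hA s))

theorem Fs_continuous : Continuous fun p : Qs κ × ℝ => Fs p.1.1 p.2 := by
  have hc : Continuous fun p : Qs κ × ℝ => (1 + (ee p.2 - 1) • p.1.1) := by fun_prop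
  have : (fun p : Qs κ × ℝ => Fs p.1.1 p.2) = fun p => (1 + (ee p.2 - 1) • p.1.1).det⁻¹ •
      (1 + (ee p.2 - 1) • p.1.1).adjugate := by
    ext1 p
    rw [Fs, Matrix.inv_def, Ring.inverse_eq_inv']
  rw [this]
  refine Continuous.smul (hc.matrix_det.inv₀ ?_) hc.matrix_adjugate
  intro p
  exact ((Matrix.isUnit_iff_isUnit_det _).1 (p.1.2 p.2)).ne_zero

theorem Fs_continuous' {A : Matrix κ κ ℂ} (hA : A ∈ Qs κ) : Continuous (Fs A) :=
  Fs_continuous.comp (f := fun s : ℝ => ((⟨A, hA⟩ : Qs κ), s)) (by fun_prop)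

/-- The entrywise integral of a matrix-valued function over `[0, 1]`. -/
noncomputable def mint (F : ℝ → Matrix κ κ ℂ) : Matrix κ κ ℂ :=
  Matrix.of fun i j => ∫ s in (0 : ℝ)..1, F s i j

theorem entry_integrable {F : ℝ → Matrix κ κ ℂ} (hF : Continuous F) (i j : κ) :
    IntervalIntegrable (fun s => F s i j) volume 0 1 :=
  (hF.matrix_elem i j).intervalIntegrable _ _

theorem mint_add {F G : ℝ → Matrix κ κ ℂ} (hF : Continuous F) (hG : Continuous G) :
    mint (fun s => F s + G s) = mint F + mint G := by
  ext i j
  exact intervalIntegral.integral_add (entry_integrable hF i j) (entry_integrable hG i j)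

/-- Linear maps can be applied under the integral. -/
theorem map_mint {F : ℝ → Matrix κ κ ℂ} (hF : Continuous F)
    (L : Matrix κ κ ℂ →ₗ[ℂ] Matrix lam lam ℂ) : L (mint F) = mint (fun s => L (F s)) := by
  have hL : ∀ (M : Matrix κ κ ℂ) i j, L M i j = ∑ a, ∑ b, M a b * L (Matrix.single a b 1) i j := by
    intro M i j
    conv_lhs => rw [Matrix.matrix_eq_sum_single M]
    simp only [map_sum, Matrix.sum_apply]
    refine Finset.sum_congr rfl fun a _ => Finset.sum_congr rfl fun b _ => ?_
    have : Matrix.single a b (M a b) = M a b • Matrix.single a b (1 : ℂ) := by simp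
    rw [this, map_smul]; simp
  ext i j
  simp only [mint, Matrix.of_apply]
  rw [hL]
  simp only [hL (F _)]
  rw [intervalIntegral.integral_finsetSum]
  · refine Finset.sum_congr rfl fun a _ => ?_
    rw [intervalIntegral.integral_finsetSum]
    · refine Finset.sum_congr rfl fun b _ => ?_
      rw [intervalIntegral.integral_mul_const]; rfl
    · intro b _
      exact (entry_integrable hF a b).mul_const _
  · intro a _
    refine (Continuous.intervalIntegrable ?_ _ _)
    exact continuous_finsetSum _ fun b _ => (hF.matrix_elem a b).mul continuous_const

/-- The Fourier coefficients of the inverse of `1 + (ζ - 1) A`. -/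
noncomputable def cf (A : Matrix κ κ ℂ) (k : ℤ) : Matrix κ κ ℂ :=
  mint fun s => ee (-(k * s)) • Fs A s

theorem cf_continuous (k : ℤ) : Continuous fun A : Qs κ => cf A.1 k := by
  refine continuous_matrix fun i j => ?_
  simp only [cf, mint, Matrix.of_apply]
  apply intervalIntegral.continuous_parametric_intervalIntegral_of_continuous'
  have := (Fs_continuous (κ := κ)).matrix_elem i j
  exact Continuous.smul (f := fun p : Qs κ × ℝ => ee (-(k * p.2))) (by fun_prop) this

theorem cf_cont {A : Matrix κ κ ℂ} (hA : A ∈ Qs κ) (k : ℤ) :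
    Continuous (fun s : ℝ => ee (-(k * s)) • Fs A s) := by
  have := Fs_continuous' hA
  fun_prop

theorem map_cf {A : Matrix κ κ ℂ} (hA : A ∈ Qs κ) (k : ℤ)
    (L : Matrix κ κ ℂ →ₗ[ℂ] Matrix lam lam ℂ) :
    L (cf A k) = mint fun s => ee (-(k * s)) • L (Fs A s) := by
  rw [cf, map_mint (cf_cont hA k)]
  simp only [map_smul]

/-- Comparing the Fourier coefficients in `(1 - A) F + ζ A F = 1`, where `F` is the inverse of
`1 + (ζ - 1) A`. -/
theorem cf_rec {A : Matrix κ κ ℂ} (hA : A ∈ Qs κ) (k : ℤ) :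
    A * cf A (k - 1) + (1 - A) * cf A k = if k = 0 then 1 else 0 := by
  have h1 := map_cf hA (k - 1) (LinearMap.mulLeft ℂ A)
  have h2 := map_cf hA k (LinearMap.mulLeft ℂ (1 - A))
  simp only [LinearMap.mulLeft_apply] at h1 h2
  have hc := Fs_continuous' hA
  rw [h1, h2, ← mint_add (by fun_prop) (by fun_prop)]
  · have : ∀ s : ℝ, ee (-(((k - 1 : ℤ) : ℝ) * s)) • (A * Fs A s) + ee (-(k * s)) • ((1 - A) * Fs A s) =
        ee (-(k * s)) • 1 := by
      intro s
      have h3 : ee s • (A * Fs A s) + (1 - A) * Fs A s = 1 := by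
        refine Eq.trans ?_ (Fs_mul hA s)
        rw [← Matrix.smul_mul, ← add_mul, sub_smul, one_smul]
        congr 1; abel
      rw [show (-(((k - 1 : ℤ) : ℝ) * s)) = -(k * s) + s by push_cast; ring, ee_add,
        mul_smul, ← smul_add, h3]
    simp only [this]
    ext i j
    have := integral_ee k
    simp only [mint, Matrix.of_apply, Matrix.smul_apply, smul_eq_mul]
    rw [intervalIntegral.integral_mul_const, integral_ee]
    split_ifs <;> simp

theorem Fs_commute {A M : Matrix κ κ ℂ} (hA : A ∈ Qs κ) (h : Commute M A) (s : ℝ) :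
    Commute M (Fs A s) := by
  have h1 : Commute M (1 + (ee s - 1) • A) := (Commute.one_right _).add_right (h.smul_right _)
  have : M * Fs A s = (Fs A s * (1 + (ee s - 1) • A)) * (M * Fs A s) := by rw [mul_Fs hA, one_mul]
  rw [Commute, SemiconjBy, this, mul_assoc, ← mul_assoc _ M, ← h1.eq, mul_assoc, Fs_mul hA, mul_one]

theorem cf_commute {A M : Matrix κ κ ℂ} (hA : A ∈ Qs κ) (h : Commute M A) (k : ℤ) :
    Commute M (cf A k) := by
  have h1 := map_cf hA k (LinearMap.mulLeft ℂ M)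
  have h2 := map_cf hA k (LinearMap.mulRight ℂ M)
  simp only [LinearMap.mulLeft_apply, LinearMap.mulRight_apply] at h1 h2
  rw [Commute, SemiconjBy, h1, h2]
  simp only [(Fs_commute hA h _).eq]

theorem cf_commute_cf {A : Matrix κ κ ℂ} (hA : A ∈ Qs κ) (k l : ℤ) :
    Commute (cf A k) (cf A l) :=
  cf_commute hA (cf_commute hA (Commute.refl A) k).symm l

/-- The Riemann-Lebesgue lemma for the Fourier coefficients. -/
theorem cf_tendsto (A : Matrix κ κ ℂ) :
    Tendsto (fun k : ℤ => cf A k) cofinite (𝓝 0) := by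
  refine tendsto_pi_nhds.2 fun i => tendsto_pi_nhds.2 fun j => ?_
  have := (Real.tendsto_integral_exp_smul_cocompact
    ((Set.Ioc (0 : ℝ) 1).indicator (fun s => Fs A s i j))).comp Int.tendsto_coe_cofinite
  refine Tendsto.congr (fun k => ?_) this
  symm
  simp only [Function.comp_apply]
  simp only [cf, mint, Matrix.of_apply]
  rw [intervalIntegral.integral_of_le zero_le_one, ← integral_indicator measurableSet_Ioc]
  congr 1
  ext1 s
  by_cases hs : s ∈ Set.Ioc (0 : ℝ) 1
  · simp only [Set.indicator_of_mem hs]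
    rw [Circle.smul_def, Real.fourierChar_apply, ee, Matrix.smul_apply]
    congr 2
    push_cast; ring
  · simp [Set.indicator_of_notMem hs]

/-- The spectral projection of `A` for the part of the spectrum with real part greater than `1/2`,
written as a contour integral. -/
noncomputable def PP (A : Matrix κ κ ℂ) : Matrix κ κ ℂ := A * cf A (-1)

theorem PP_continuous : Continuous fun A : Qs κ => PP A.1 := by
  have := cf_continuous (κ := κ) (-1)
  exact Continuous.mul (by fun_prop) this

theorem one_sub_PP {A : Matrix κ κ ℂ} (hA : A ∈ Qs κ) : 1 - PP A = (1 - A) * cf A 0 := by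
  have := cf_rec hA 0
  simp only [zero_sub, if_true] at this
  rw [PP, sub_eq_iff_eq_add, add_comm]
  exact this.symm

/-- The spectral projection is `A c₋₁`, and its complement is `(1 - A) c₀` for the Fourier coefficients
`c` of the inverse loop. By the recursion of the coefficients, their product does not change when the
indices are moved apart, and therefore vanishes by the Riemann-Lebesgue lemma. -/
theorem PP_idem {A : Matrix κ κ ℂ} (hA : A ∈ Qs κ) : PP A * PP A = PP A := by
  have cA : ∀ k, Commute A (cf A k) := cf_commute hA (Commute.refl A)
  let B := 1 - A
  have cB : ∀ k, Commute B (cf A k) := fun k => (Commute.one_left _).sub_left (cA k)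
  have cAB : Commute A B := (Commute.one_right _).sub_right (Commute.refl A)
  let d : ℕ → Matrix κ κ ℂ := fun k => (B * cf A (-k - 1)) * (A * cf A k)
  have hd' : ∀ k, d k = A * B * (cf A (-k - 1) * cf A k) := by
    intro k
    simp only [d]
    rw [mul_assoc B, ← mul_assoc (cf A _) A, ← (cA _).eq, mul_assoc A (cf A _), ← mul_assoc B A,
      ← cAB.eq]
  have hd : ∀ k, d (k + 1) = d k := by
    intro k
    have e1 := cf_rec hA (k + 1)
    have e2 := cf_rec hA (-k - 1)
    rw [if_neg (by omega)] at e1 e2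
    have e1' : A * cf A k = - (B * cf A (k + 1)) := by
      rw [eq_neg_iff_add_eq_zero]; simpa using e1
    have e2' : B * cf A (-k - 1) = - (A * cf A (-k - 1 - 1)) := by
      rw [eq_neg_iff_add_eq_zero, add_comm]; simpa using e2
    rw [hd' (k + 1)]
    simp only [d]
    rw [e1', e2', neg_mul_neg, mul_assoc A (cf A _), ← mul_assoc (cf A _) B, ← (cB _).eq, mul_assoc B,
      ← mul_assoc A B]
    push_cast
    rw [neg_add']
  have hc : ∀ k, d k = d 0 := by
    intro k
    induction k with
    | zero => rfl
    | succ k ih => rw [hd, ih]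
  have hlim : Tendsto d atTop (𝓝 0) := by
    have h := cf_tendsto A
    have h1 : Tendsto (fun k : ℕ => cf A (-k - 1)) atTop (𝓝 0) := by
      refine h.comp ?_
      rw [← Nat.cofinite_eq_atTop]
      exact Function.Injective.tendsto_cofinite (fun a b hab => by simpa using hab)
    have h2 : Tendsto (fun k : ℕ => cf A k) atTop (𝓝 0) := by
      refine h.comp ?_
      rw [← Nat.cofinite_eq_atTop]
      exact Function.Injective.tendsto_cofinite (fun a b hab => by simpa using hab)
    have := (tendsto_const_nhds (x := A * B)).mul (h1.mul h2)
    simp only [mul_zero] at this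
    rwa [show d = fun k : ℕ => A * B * (cf A (-k - 1) * cf A k) from funext hd']
  have h0 : d 0 = 0 := by
    have : d = fun _ => d 0 := funext hc
    rw [this] at hlim
    exact tendsto_nhds_unique tendsto_const_nhds hlim
  have h1 : PP A * (1 - PP A) = 0 := by
    rw [one_sub_PP hA, PP]
    have := hd' 0
    rw [h0] at this
    rw [mul_assoc, ← mul_assoc (cf A _), ← (cB _).eq, mul_assoc B, ← mul_assoc A B]
    simpa using this.symm
  rw [mul_sub, mul_one, sub_eq_zero] at h1
  exact h1.symm

theorem PP_commute {A M : Matrix κ κ ℂ} (hA : A ∈ Qs κ) (h : Commute M A) : Commute M (PP A) :=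
  h.mul_right (cf_commute hA h _)

/-- Naturality of the spectral projection. -/
theorem PP_map {κ' : Type} [Fintype κ'] [DecidableEq κ']
    (φ : (Matrix κ κ ℂ × Matrix κ' κ' ℂ) →ₐ[ℂ] Matrix lam lam ℂ) {A : Matrix κ κ ℂ}
    {A' : Matrix κ' κ' ℂ} (hA : A ∈ Qs κ) (hA' : A' ∈ Qs κ') :
    φ (A, A') ∈ Qs lam ∧ PP (φ (A, A')) = φ (PP A, PP A') := by
  have hF : ∀ s, (1 + (ee s - 1) • φ (A, A')) * φ (Fs A s, Fs A' s) = 1 := by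
    intro s
    rw [← map_smul, ← map_one φ, ← map_add, ← map_mul]
    congr 1
    ext1
    · exact Fs_mul hA s
    · exact Fs_mul hA' s
  have hQ : φ (A, A') ∈ Qs lam := fun s => isUnit_of_mul_eq_one (hF s)
  refine ⟨hQ, ?_⟩
  have hF' : ∀ s, Fs (φ (A, A')) s = φ (Fs A s, Fs A' s) := by
    intro s
    rw [Fs]; exact Matrix.inv_eq_right_inv (hF s)
  have hcf : cf (φ (A, A')) (-1) = φ (cf A (-1), cf A' (-1)) := by
    have e1 := map_cf hA (-1) (φ.toLinearMap ∘ₗ LinearMap.inl ℂ _ (Matrix κ' κ' ℂ))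
    have e2 := map_cf hA' (-1) (φ.toLinearMap ∘ₗ LinearMap.inr ℂ (Matrix κ κ ℂ) _)
    have e3 : φ (cf A (-1), cf A' (-1)) = (φ.toLinearMap ∘ₗ LinearMap.inl ℂ _ _) (cf A (-1)) +
        (φ.toLinearMap ∘ₗ LinearMap.inr ℂ _ _) (cf A' (-1)) := by
      simp [← map_add]
    have c1 := Fs_continuous' hA
    have c2 := Fs_continuous' hA'
    have c3 : Continuous (φ.toLinearMap ∘ₗ LinearMap.inl ℂ _ (Matrix κ' κ' ℂ)) :=
      LinearMap.continuous_of_finiteDimensional _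
    have c4 : Continuous (φ.toLinearMap ∘ₗ LinearMap.inr ℂ (Matrix κ κ ℂ) _) :=
      LinearMap.continuous_of_finiteDimensional _
    rw [e3, e1, e2, ← mint_add (by fun_prop) (by fun_prop), cf]
    congr 1; ext1 s
    rw [hF', ← smul_add]
    simp [← map_add]
  rw [PP, hcf, ← map_mul]; rfl

theorem norm_sub_lt_iff (z : ℂ) : ‖1 - z‖ < ‖z‖ ↔ 1 / 2 < z.re := by
  rw [← sq_lt_sq₀ (norm_nonneg _) (norm_nonneg _), Complex.sq_norm, Complex.sq_norm,
    Complex.normSq_apply, Complex.normSq_apply]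
  simp only [Complex.sub_re, Complex.one_re, Complex.sub_im, Complex.one_im]
  constructor <;> intro h <;> nlinarith

theorem norm_lt_sub_iff (z : ℂ) : ‖z‖ < ‖1 - z‖ ↔ z.re < 1 / 2 := by
  rw [← sq_lt_sq₀ (norm_nonneg _) (norm_nonneg _), Complex.sq_norm, Complex.sq_norm,
    Complex.normSq_apply, Complex.normSq_apply]
  simp only [Complex.sub_re, Complex.one_re, Complex.sub_im, Complex.one_im]
  constructor <;> intro h <;> nlinarith

theorem re_ne_of_unit {z : ℂ} (h : ∀ s, 1 + (ee s - 1) * z ≠ 0) : z.re ≠ 1 / 2 := by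
  intro hz
  have h1 : ‖1 - z‖ = ‖z‖ := by
    refine le_antisymm (not_lt.1 fun hlt => ?_) (not_lt.1 fun hlt => ?_)
    · exact absurd ((norm_lt_sub_iff z).1 hlt) (by linarith)
    · exact absurd ((norm_sub_lt_iff z).1 hlt) (by linarith)
  have h0 : z ≠ 0 := by rintro rfl; norm_num at hz
  obtain ⟨s, hs⟩ := exists_ee (u := -((1 - z) / z)) (by
    rw [norm_neg, norm_div, h1, div_self (norm_ne_zero_iff.2 h0)])
  apply h s
  rw [hs]; field_simp; ring

theorem unit_of_re_ne {z : ℂ} (hz : z.re ≠ 1 / 2) (s : ℝ) : 1 + (ee s - 1) * z ≠ 0 := by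
  intro h
  have h1 : 1 - z = -(ee s * z) := by linear_combination h
  have h2 : ‖1 - z‖ = ‖z‖ := by rw [h1, norm_neg, norm_mul, ee_norm, one_mul]
  rcases lt_or_gt_of_ne hz with h3 | h3
  · exact absurd ((norm_lt_sub_iff z).2 h3) (by rw [h2]; exact lt_irrefl _)
  · exact absurd ((norm_sub_lt_iff z).2 h3) (by rw [h2]; exact lt_irrefl _)

theorem mulVec_unit_ne {M : Matrix κ κ ℂ} (hM : IsUnit M) {v : κ → ℂ} (hv : v ≠ 0) :
    M *ᵥ v ≠ 0 := by
  intro h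
  have := Matrix.mulVec_injective_of_isUnit hM (h.trans (Matrix.mulVec_zero M).symm)
  exact hv this

theorem eigen_re_ne {A : Matrix κ κ ℂ} (hA : A ∈ Qs κ) {v : κ → ℂ} (hv : v ≠ 0) {z : ℂ}
    (h : A *ᵥ v = z • v) : z.re ≠ 1 / 2 := by
  refine re_ne_of_unit fun s hs => ?_
  apply mulVec_unit_ne (hA s) hv
  rw [Matrix.add_mulVec, Matrix.one_mulVec, Matrix.smul_mulVec, h, smul_smul]
  have : v + ((ee s - 1) * z) • v = (1 + (ee s - 1) * z) • v := by rw [add_smul, one_smul]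
  rw [this, hs, zero_smul]

theorem cf_rec_vec {A : Matrix κ κ ℂ} (hA : A ∈ Qs κ) {v : κ → ℂ} {z : ℂ}
    (h : A *ᵥ v = z • v) (k : ℤ) :
    z • (cf A (k - 1) *ᵥ v) + (1 - z) • (cf A k *ᵥ v) = if k = 0 then v else 0 := by
  have h1 := congrArg (· *ᵥ v) (cf_rec hA k)
  have cA : ∀ k, cf A k *ᵥ (A *ᵥ v) = A *ᵥ (cf A k *ᵥ v) := by
    intro k
    rw [Matrix.mulVec_mulVec, Matrix.mulVec_mulVec, (cf_commute hA (Commute.refl A) k).eq]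
  have e : ∀ k, A *ᵥ (cf A k *ᵥ v) = z • (cf A k *ᵥ v) := by
    intro k; rw [← cA, h, Matrix.mulVec_smul]
  simp only [Matrix.add_mulVec, ← Matrix.mulVec_mulVec, Matrix.sub_mulVec, Matrix.one_mulVec, e] at h1
  rw [sub_smul, one_smul, h1]
  split_ifs <;> simp

theorem cf_vec_tendsto (A : Matrix κ κ ℂ) (v : κ → ℂ) :
    Tendsto (fun k : ℤ => ‖cf A k *ᵥ v‖) cofinite (𝓝 0) := by
  have hc : Continuous fun M : Matrix κ κ ℂ => ‖M *ᵥ v‖ := by fun_prop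
  have := (hc.tendsto 0).comp (cf_tendsto A)
  simpa [Function.comp_def] using this

/-- The spectral projection fixes eigenvectors whose eigenvalue has real part above `1/2`. -/
theorem PP_mulVec_of_gt {A : Matrix κ κ ℂ} (hA : A ∈ Qs κ) {v : κ → ℂ} {z : ℂ}
    (h : A *ᵥ v = z • v) (hz : 1 / 2 < z.re) : PP A *ᵥ v = v := by
  have hn := (norm_sub_lt_iff z).2 hz
  have step : ∀ k : ℕ, ‖cf A 0 *ᵥ v‖ ≤ ‖cf A k *ᵥ v‖ := by
    intro k
    induction k with
    | zero => simp
    | succ k ih =>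
      refine ih.trans ?_
      have := cf_rec_vec hA h ((k : ℤ) + 1)
      rw [if_neg (by omega), add_sub_cancel_right, add_eq_zero_iff_eq_neg] at this
      have h2 := congrArg norm this
      rw [norm_neg, norm_smul, norm_smul] at h2
      have hz0 : 0 < ‖z‖ := (norm_nonneg _).trans_lt hn
      refine le_of_mul_le_mul_left ?_ hz0
      rw [h2]
      push_cast
      exact mul_le_mul_of_nonneg_right hn.le (norm_nonneg _)
  have h0 : ‖cf A 0 *ᵥ v‖ ≤ 0 := by
    have hl : Tendsto (fun k : ℕ => ‖cf A k *ᵥ v‖) atTop (𝓝 0) := by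
      refine (cf_vec_tendsto A v).comp ?_
      rw [← Nat.cofinite_eq_atTop]
      exact Function.Injective.tendsto_cofinite (fun a b hab => by simpa using hab)
    exact ge_of_tendsto' hl step
  have h0' : cf A 0 *ᵥ v = 0 := norm_le_zero_iff.1 h0
  have := congrArg (· *ᵥ v) (one_sub_PP hA)
  simp only [← Matrix.mulVec_mulVec, h0', Matrix.mulVec_zero, Matrix.sub_mulVec,
    Matrix.one_mulVec] at this
  exact (sub_eq_zero.1 this).symm

/-- The spectral projection kills eigenvectors whose eigenvalue has real part below `1/2`. -/
theorem PP_mulVec_of_lt {A : Matrix κ κ ℂ} (hA : A ∈ Qs κ) {v : κ → ℂ} {z : ℂ}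
    (h : A *ᵥ v = z • v) (hz : z.re < 1 / 2) : PP A *ᵥ v = 0 := by
  have hn := (norm_lt_sub_iff z).2 hz
  have step : ∀ k : ℕ, ‖cf A (-1) *ᵥ v‖ ≤ ‖cf A (-1 - k) *ᵥ v‖ := by
    intro k
    induction k with
    | zero => simp
    | succ k ih =>
      refine ih.trans ?_
      have := cf_rec_vec hA h (-1 - (k : ℤ))
      rw [if_neg (by omega), add_comm, add_eq_zero_iff_eq_neg] at this
      have h2 := congrArg norm this
      rw [norm_neg, norm_smul, norm_smul] at h2
      have hz0 : 0 < ‖1 - z‖ := (norm_nonneg _).trans_lt hn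
      refine le_of_mul_le_mul_left ?_ hz0
      rw [h2]
      push_cast
      rw [sub_sub]
      exact mul_le_mul_of_nonneg_right hn.le (norm_nonneg _)
  have h0 : ‖cf A (-1) *ᵥ v‖ ≤ 0 := by
    have hl : Tendsto (fun k : ℕ => ‖cf A (-1 - k) *ᵥ v‖) atTop (𝓝 0) := by
      refine (cf_vec_tendsto A v).comp ?_
      rw [← Nat.cofinite_eq_atTop]
      exact Function.Injective.tendsto_cofinite (fun a b hab => by simpa using hab)
    exact ge_of_tendsto' hl step
  have h0' : cf A (-1) *ᵥ v = 0 := norm_le_zero_iff.1 h0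
  rw [PP, ← Matrix.mulVec_mulVec, h0', Matrix.mulVec_zero]

/-- A singular matrix commuting with `A` kills an eigenvector of `A`. -/
theorem exists_eigen_of_not_isUnit {A M : Matrix κ κ ℂ} (h : Commute M A) (hM : ¬ IsUnit M) :
    ∃ v : κ → ℂ, v ≠ 0 ∧ M *ᵥ v = 0 ∧ ∃ z : ℂ, A *ᵥ v = z • v := by
  let E := LinearMap.ker M.mulVecLin
  have hE : ∀ v ∈ E, A.mulVecLin v ∈ E := by
    intro v hv
    simp only [E, LinearMap.mem_ker, Matrix.mulVecLin_apply] at hv ⊢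
    rw [Matrix.mulVec_mulVec, h.eq, ← Matrix.mulVec_mulVec, hv, Matrix.mulVec_zero]
  have hdet : M.det = 0 := by
    by_contra hd
    exact hM ((Matrix.isUnit_iff_isUnit_det _).2 (isUnit_iff_ne_zero.2 hd))
  obtain ⟨w, hw0, hw⟩ := Matrix.exists_mulVec_eq_zero_iff.2 hdet
  have : Nontrivial E := ⟨⟨⟨w, hw⟩, 0, fun h => hw0 (congrArg Subtype.val h)⟩⟩
  obtain ⟨z, hz⟩ := Module.End.exists_eigenvalue (A.mulVecLin.restrict hE)
  obtain ⟨v, hv⟩ := hz.exists_hasEigenvector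
  refine ⟨v.1, fun h => hv.2 (Subtype.ext h), v.2, z, ?_⟩
  have := congrArg Subtype.val (Module.End.mem_eigenspace_iff.1 hv.1)
  simpa using this

/-- The straight line from `A` to its spectral projection stays inside `Qs`. -/
theorem line_mem_Qs {A : Matrix κ κ ℂ} (hA : A ∈ Qs κ) (t : I) :
    (1 - (t : ℂ)) • A + (t : ℂ) • PP A ∈ Qs κ := by
  intro s
  by_contra hM
  have hc : Commute (1 + (ee s - 1) • ((1 - (t : ℂ)) • A + (t : ℂ) • PP A)) A := by
    refine (Commute.one_left _).add_left (Commute.smul_left (Commute.add_left ?_ ?_) _)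
    · exact (Commute.refl A).smul_left _
    · exact (PP_commute hA (Commute.refl A)).symm.smul_left _
  obtain ⟨v, hv0, hv, z, hz⟩ := exists_eigen_of_not_isUnit hc hM
  have key : ∀ w : ℂ, PP A *ᵥ v = w • v → ((1 - (t : ℂ)) * z + t * w).re ≠ 1 / 2 → False := by
    intro w hw hre
    apply smul_ne_zero (unit_of_re_ne hre s) hv0
    rw [← hv]
    simp only [Matrix.add_mulVec, Matrix.one_mulVec, Matrix.smul_mulVec, hz, hw, smul_smul, smul_add,
      add_smul, mul_add, one_smul, mul_assoc]
  have t0 := t.2.1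
  have t1 := t.2.2
  rcases lt_or_gt_of_ne (eigen_re_ne hA hv0 hz) with h | h
  · refine key 0 (by rw [PP_mulVec_of_lt hA hz h, zero_smul]) ?_
    have : ((1 - (t : ℂ)) * z + t * 0).re = (1 - (t : ℝ)) * z.re := by simp
    rw [this]
    nlinarith [mul_le_mul_of_nonneg_left h.le (sub_nonneg.2 t1)]
  · refine key 1 (by rw [PP_mulVec_of_gt hA hz h, one_smul]) ?_
    have : ((1 - (t : ℂ)) * z + t * 1).re = (1 - (t : ℝ)) * z.re + t := by simp
    rw [this]
    nlinarith [mul_le_mul_of_nonneg_left h.le (sub_nonneg.2 t1)]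

end Spectral
end BottPer

namespace BottPer
open unitInterval Matrix
open scoped commutatorElement ComplexOrder

/-! ### Linearization of polynomial loops -/

section Companion
open scoped Kronecker

variable {ι κ : Type} [Fintype ι] [DecidableEq ι] [Fintype κ] [DecidableEq κ] {d : ℕ}

/-- The nilpotent shift `e_k ↦ e_{k+1}` on `ℂ^{d+1}`. -/
def Sh (d : ℕ) : Matrix (Fin (d + 1)) (Fin (d + 1)) ℂ :=
  Matrix.of fun i j => if i.val = j.val + 1 then 1 else 0

/-- The value at `z` of the matrix polynomial with coefficients `a 0, …, a d`. -/
noncomputable def ev (a : Fin (d + 1) → Matrix ι ι ℂ) (z : ℂ) : Matrix ι ι ℂ :=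
  ∑ k, z ^ k.val • a k

/-- The block column `x ⊗ 1`. -/
def colM (ι : Type) [DecidableEq ι] (x : κ → ℂ) : Matrix (κ × ι) ι ℂ :=
  Matrix.of fun p j => x p.1 * (1 : Matrix ι ι ℂ) p.2 j

/-- The block row `x ⊗ 1`. -/
def rowM (ι : Type) [DecidableEq ι] (x : κ → ℂ) : Matrix ι (κ × ι) ℂ :=
  Matrix.of fun j p => x p.1 * (1 : Matrix ι ι ℂ) j p.2

/-- The block row with entries `a k`. -/
def rowA (a : κ → Matrix ι ι ℂ) : Matrix ι (κ × ι) ℂ := Matrix.of fun i p => a p.1 i p.2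

theorem rowM_colM (x y : κ → ℂ) : rowM ι x * colM ι y = (x ⬝ᵥ y) • 1 := by
  ext i j
  simp only [Matrix.mul_apply, rowM, colM, Matrix.of_apply, Matrix.smul_apply, dotProduct,
    Fintype.sum_prod_type, Matrix.one_apply, smul_eq_mul, Finset.sum_mul]
  refine Finset.sum_congr rfl fun k _ => ?_
  simp

theorem rowA_colM (a : κ → Matrix ι ι ℂ) (y : κ → ℂ) : rowA a * colM ι y = ∑ k, y k • a k := by
  ext i j
  simp only [Matrix.mul_apply, rowA, colM, Matrix.of_apply, Matrix.sum_apply, Matrix.smul_apply,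
    Fintype.sum_prod_type, Matrix.one_apply, smul_eq_mul]
  refine Finset.sum_congr rfl fun k _ => ?_
  simp [mul_comm]

theorem kron_colM (N : Matrix κ κ ℂ) (x : κ → ℂ) :
    (N ⊗ₖ (1 : Matrix ι ι ℂ)) * colM ι x = colM ι (N *ᵥ x) := by
  ext p j
  simp only [Matrix.mul_apply, colM, Matrix.of_apply, Matrix.kroneckerMap_apply, mulVec, dotProduct,
    Fintype.sum_prod_type, Matrix.one_apply, Finset.sum_mul]
  refine Finset.sum_congr rfl fun k _ => ?_
  simp [mul_comm, mul_assoc]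

/-- The unit vector `e_0`. -/
def e0 (d : ℕ) : Fin (d + 1) → ℂ := Pi.single 0 1

/-- The companion linearization of the polynomial with coefficients `a`. -/
noncomputable def LL (a : Fin (d + 1) → Matrix ι ι ℂ) (z : ℂ) :
    Matrix (Fin (d + 1) × ι) (Fin (d + 1) × ι) ℂ :=
  (1 - z • Sh d) ⊗ₖ 1 + colM ι (e0 d) * (rowA a - rowM ι (e0 d))

/-- The frame of the zeroth block. -/
def frame0 (ι : Type) [Fintype ι] [DecidableEq ι] (d : ℕ) : Frame ι (Fin (d + 1) × ι) where
  V := colM ι (e0 d)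
  V' := rowM ι (e0 d)
  h := by rw [rowM_colM]; simp [e0]

/-- The reduced first row in the factorization of the linearization. -/
noncomputable def bb (a : Fin (d + 1) → Matrix ι ι ℂ) (z : ℂ) : Matrix ι (Fin (d + 1) × ι) ℂ :=
  (rowA a - rowM ι (e0 d)) * ((1 - z • Sh d).adjugate ⊗ₖ (1 : Matrix ι ι ℂ))

theorem det_T (z : ℂ) : (1 - z • Sh d).det = 1 := by
  rw [Matrix.det_of_lowerTriangular]
  · simp [Sh]
  · intro i j hij
    have h1 : i < j := hij
    have h2 : ¬ (i.val = j.val + 1) := by have := Fin.lt_def.1 h1; omega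
    simp [Sh, h1.ne, h2]

theorem T_pow (z : ℂ) : (1 - z • Sh d) *ᵥ (fun k : Fin (d + 1) => z ^ k.val) = e0 d := by
  ext k
  rw [Matrix.sub_mulVec, Matrix.one_mulVec, Matrix.smul_mulVec]
  simp only [Pi.sub_apply, Pi.smul_apply, mulVec, dotProduct, Sh, Matrix.of_apply, smul_eq_mul, e0]
  refine Fin.cases ?_ (fun k => ?_) k
  · simp
  · rw [Finset.sum_eq_single k.castSucc]
    · simp [pow_succ']
    · intro b _ hb
      rw [if_neg, zero_mul]
      intro h
      apply hb
      ext
      simpa using h.symm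
    · simp

theorem bb_col (a : Fin (d + 1) → Matrix ι ι ℂ) (z : ℂ) : bb a z * colM ι (e0 d) = ev a z - 1 := by
  rw [bb, Matrix.mul_assoc, kron_colM, ← T_pow z, Matrix.mulVec_mulVec, Matrix.adjugate_mul, det_T, one_smul,
    Matrix.one_mulVec, Matrix.sub_mul, rowA_colM, rowM_colM]
  simp only [ev]
  rw [T_pow]
  simp [e0]

/-- A homotopy from the stabilized polynomial to its linearization. -/
noncomputable def LH (a : Fin (d + 1) → Matrix ι ι ℂ) (z : ℂ) (t : ℂ) :
    Matrix (Fin (d + 1) × ι) (Fin (d + 1) × ι) ℂ :=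
  (1 + colM ι (e0 d) * (bb a z * (t • 1 + (1 - t) • (colM ι (e0 d) * rowM ι (e0 d))))) *
    ((1 - (t * z) • Sh d) ⊗ₖ 1)

theorem LH_zero (a : Fin (d + 1) → Matrix ι ι ℂ) (z : ℂ) :
    LH a z 0 = (frame0 ι d).extM (ev a z) := by
  rw [LH, Frame.extM_apply]
  simp only [zero_smul, zero_mul, sub_zero, one_smul, zero_add, Matrix.one_kronecker_one, mul_one]
  rw [← Matrix.mul_assoc (bb a z), bb_col, ← Matrix.mul_assoc, Matrix.mul_sub, Matrix.sub_mul,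
    Matrix.mul_one]
  simp only [frame0]
  abel

theorem LH_one (a : Fin (d + 1) → Matrix ι ι ℂ) (z : ℂ) : LH a z 1 = LL a z := by
  rw [LH, LL]
  simp only [one_smul, one_mul, sub_self, zero_smul, add_zero, mul_one]
  rw [Matrix.add_mul, Matrix.one_mul, bb, Matrix.mul_one, Matrix.mul_assoc, Matrix.mul_assoc,
    ← Matrix.mul_kronecker_mul, Matrix.adjugate_mul, det_T, one_smul, Matrix.mul_one, Matrix.one_kronecker_one,
    Matrix.mul_one]

/-- The determinant does not change along the linearizing homotopy, by `det (1 + A B) = det (1 + B A)`. -/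
theorem det_LH (a : Fin (d + 1) → Matrix ι ι ℂ) (z t : ℂ) : (LH a z t).det = (ev a z).det := by
  rw [LH, Matrix.det_mul, Matrix.det_kronecker, det_T, Matrix.det_one_add_mul_comm]
  simp only [one_pow, Matrix.det_one, mul_one]
  congr 1
  have h := (frame0 ι d).h
  simp only [frame0] at h
  rw [Matrix.mul_assoc (bb a z), Matrix.add_mul, Matrix.smul_mul, Matrix.smul_mul, Matrix.one_mul,
    Matrix.mul_assoc, h, Matrix.mul_one,
    ← add_smul, add_sub_cancel, one_smul, bb_col, add_sub_cancel]

theorem det_LL (a : Fin (d + 1) → Matrix ι ι ℂ) (z : ℂ) : (LL a z).det = (ev a z).det := by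
  rw [← LH_one, det_LH]

theorem rowA_continuous : Continuous fun a : κ → Matrix ι ι ℂ => rowA a := by
  refine continuous_matrix fun i p => ?_
  exact (continuous_apply p.1).matrix_elem i p.2

theorem kron_continuous : Continuous fun N : Matrix κ κ ℂ => N ⊗ₖ (1 : Matrix ι ι ℂ) := by
  refine continuous_matrix fun i p => ?_
  simp only [Matrix.kroneckerMap_apply]
  fun_prop

theorem LH_continuous : Continuous fun p : (Fin (d + 1) → Matrix ι ι ℂ) × ℂ × ℂ =>
    LH p.1 p.2.1 p.2.2 := by
  have h1 := rowA_continuous (ι := ι) (κ := Fin (d + 1))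
  have h2 := kron_continuous (ι := ι) (κ := Fin (d + 1))
  have h3 : Continuous fun z : ℂ => (1 - z • Sh d).adjugate :=
    Continuous.matrix_adjugate (by fun_prop)
  have hb : Continuous fun p : (Fin (d + 1) → Matrix ι ι ℂ) × ℂ × ℂ => bb p.1 p.2.1 := by
    unfold bb
    refine Continuous.matrix_mul ?_ ?_
    · exact (h1.comp continuous_fst).sub continuous_const
    · exact h2.comp (h3.comp (by fun_prop))
  unfold LH
  refine Continuous.matrix_mul ?_ ?_
  · refine continuous_const.add (continuous_const.matrix_mul (hb.matrix_mul ?_))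
    fun_prop
  · exact h2.comp (f := fun p : (Fin (d + 1) → Matrix ι ι ℂ) × ℂ × ℂ => (1 - (p.2.2 * p.2.1) • Sh d)) (by fun_prop)

/-- The matrix `A` such that the linearization is `(1 + (z - 1) A) · LL a 1`. -/
noncomputable def AA (a : Fin (d + 1) → Matrix ι ι ℂ) :
    Matrix (Fin (d + 1) × ι) (Fin (d + 1) × ι) ℂ :=
  -((Sh d ⊗ₖ 1) * (LL a 1)⁻¹)

/-- The linearization is affine in `z`, hence of the form `1 + (z - 1) A` up to its value at `z = 1`. -/
theorem LL_eq {a : Fin (d + 1) → Matrix ι ι ℂ} (ha : IsUnit (ev a 1)) (z : ℂ) :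
    LL a z = (1 + (z - 1) • AA a) * LL a 1 := by
  have hu : IsUnit (LL a 1).det := by
    rw [det_LL]; exact (Matrix.isUnit_iff_isUnit_det _).1 ha
  rw [add_mul, one_mul, AA, Matrix.smul_mul, neg_mul, mul_assoc, Matrix.nonsing_inv_mul _ hu, mul_one]
  simp only [LL]
  ext p q
  simp only [Matrix.add_apply, Matrix.kroneckerMap_apply, Matrix.sub_apply, Matrix.smul_apply,
    Matrix.neg_apply, smul_eq_mul]
  ring

/-- Coefficients of polynomials which are invertible on the unit circle. -/
def Us (ι : Type) [Fintype ι] [DecidableEq ι] (d : ℕ) : Set (Fin (d + 1) → Matrix ι ι ℂ) :=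
  {a | ∀ s : ℝ, IsUnit (ev a (ee s))}

theorem Us.one {a : Fin (d + 1) → Matrix ι ι ℂ} (ha : a ∈ Us ι d) : IsUnit (ev a 1) := by
  simpa using ha 0

theorem AA_mem {a : Fin (d + 1) → Matrix ι ι ℂ} (ha : a ∈ Us ι d) : AA a ∈ Qs _ := by
  intro s
  have h := LL_eq (Us.one ha) (ee s)
  have h1 : IsUnit (LL a (ee s)).det := by
    rw [det_LL]; exact (Matrix.isUnit_iff_isUnit_det _).1 (ha s)
  rw [h, Matrix.det_mul] at h1
  exact (Matrix.isUnit_iff_isUnit_det _).2 (isUnit_of_mul_isUnit_left h1)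

theorem AA_continuous : Continuous fun a : Us ι d => AA a.1 := by
  have h0 : Continuous fun a : Us ι d => LL a.1 1 := by
    simp only [← LH_one]
    exact LH_continuous.comp (f := fun a : Us ι d => (a.1, (1 : ℂ), (1 : ℂ))) (by fun_prop)
  have : (fun a : Us ι d => AA a.1) = fun a => -((Sh d ⊗ₖ 1) * ((LL a.1 1).det⁻¹ • (LL a.1 1).adjugate)) := by
    ext1 a
    rw [AA, Matrix.inv_def, Ring.inverse_eq_inv']
  rw [this]
  refine Continuous.neg (continuous_const.matrix_mul (Continuous.smul (h0.matrix_det.inv₀ ?_)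
    h0.matrix_adjugate))
  intro a
  rw [det_LL]
  exact ((Matrix.isUnit_iff_isUnit_det _).1 (Us.one a.2)).ne_zero

/-- The idempotent attached to a polynomial which is invertible on the unit circle. -/
noncomputable def QQ (a : Fin (d + 1) → Matrix ι ι ℂ) :
    Matrix (Fin (d + 1) × ι) (Fin (d + 1) × ι) ℂ := PP (AA a)

theorem QQ_continuous : Continuous fun a : Us ι d => QQ a.1 :=
  PP_continuous.comp (f := fun a : Us ι d => (⟨AA a.1, AA_mem a.2⟩ : Qs _))
    (AA_continuous.subtype_mk _)

theorem QQ_idem {a : Fin (d + 1) → Matrix ι ι ℂ} (ha : a ∈ Us ι d) : QQ a * QQ a = QQ a :=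
  PP_idem (AA_mem ha)

/-- Conjugation acts on everything. -/
theorem ev_conj (g : GLC ι) (a : Fin (d + 1) → Matrix ι ι ℂ) (z : ℂ) :
    ev (fun k => g.val * a k * g⁻¹.val) z = g.val * ev a z * g⁻¹.val := by
  simp only [ev, Finset.mul_sum, Finset.sum_mul, Matrix.mul_smul, Matrix.smul_mul]

/-- The algebra map `(X, Y) ↦ X ⊗ P + Y ⊗ (1 - P)` for an idempotent `P`. -/
def kronAlg (P : Matrix ι ι ℂ) (hP : P * P = P) :
    (Matrix (κ × Unit) (κ × Unit) ℂ × Matrix (κ × Unit) (κ × Unit) ℂ) →ₐ[ℂ]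
      Matrix (κ × ι) (κ × ι) ℂ :=
  AlgHom.ofLinearMap
    { toFun := fun X => (X.1.submatrix (fun k => (k, ())) (fun k => (k, ()))) ⊗ₖ P +
        (X.2.submatrix (fun k => (k, ())) (fun k => (k, ()))) ⊗ₖ (1 - P)
      map_add' := by
        intro X Y
        ext p q
        simp [add_mul]; ring
      map_smul' := by
        intro c X
        ext p q
        simp; ring }
    (by
      ext p q
      obtain ⟨p1, p2⟩ := p
      obtain ⟨q1, q2⟩ := q
      by_cases h : p1 = q1
      · subst h; simp [Matrix.one_apply]
      · simp [Matrix.one_apply, h])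
    (by
      intro X Y
      have hs : ∀ X Y : Matrix (κ × Unit) (κ × Unit) ℂ,
          (X * Y).submatrix (fun k => (k, ())) (fun k => (k, ())) =
          X.submatrix (fun k : κ => (k, ())) (fun k : κ => (k, ())) *
            Y.submatrix (fun k : κ => (k, ())) (fun k : κ => (k, ())) := by
        intro X Y
        ext p q
        simp [Matrix.mul_apply, Fintype.sum_prod_type]
      have h1 : P * (1 - P) = 0 := by rw [mul_sub, hP, mul_one, sub_self]
      have h2 : (1 - P) * P = 0 := by rw [sub_mul, hP, one_mul, sub_self]
      have h3 : (1 - P) * (1 - P) = 1 - P := by rw [mul_sub, h2, mul_one, sub_zero]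
      simp only [LinearMap.coe_mk, AddHom.coe_mk, Prod.fst_mul, Prod.snd_mul, hs, add_mul, mul_add,
        ← Matrix.mul_kronecker_mul, hP, h1, h2, h3, Matrix.kronecker_zero, add_zero, zero_add])

theorem kronAlg_apply (P : Matrix ι ι ℂ) (hP : P * P = P)
    (X Y : Matrix (κ × Unit) (κ × Unit) ℂ) : kronAlg P hP (X, Y) =
      (X.submatrix (fun k => (k, ())) (fun k => (k, ()))) ⊗ₖ P +
        (Y.submatrix (fun k => (k, ())) (fun k => (k, ()))) ⊗ₖ (1 - P) := rfl

/-- The coefficients of the monomial `z ^ k`. -/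
def mono (d : ℕ) (k : Fin (d + 1)) : Fin (d + 1) → Matrix Unit Unit ℂ := Pi.single k 1

theorem ev_single (k : Fin (d + 1)) (M : Matrix ι ι ℂ) (z : ℂ) :
    ev (Pi.single k M) z = z ^ k.val • M := by
  rw [ev, Finset.sum_eq_single k]
  · simp
  · intro b _ hb; simp [hb]
  · simp

theorem mono_mem (k : Fin (d + 1)) : mono d k ∈ Us Unit d := by
  intro s
  rw [mono, ev_single]
  refine (Matrix.isUnit_iff_isUnit_det _).2 ?_
  rw [isUnit_iff_ne_zero]
  simp [ee_ne]

/-- The idempotent of the monomial `z ^ k`. -/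
noncomputable def Pm (d : ℕ) (k : Fin (d + 1)) : Matrix (Fin (d + 1) × Unit) (Fin (d + 1) × Unit) ℂ :=
  QQ (mono d k)

theorem kron_LL (P : Matrix ι ι ℂ) (hP : P * P = P) (a b : Fin (d + 1) → ℂ) (z : ℂ) :
    kronAlg P hP (LL (fun k => a k • (1 : Matrix Unit Unit ℂ)) z,
      LL (fun k => b k • (1 : Matrix Unit Unit ℂ)) z) =
    LL (fun k => a k • P + b k • (1 - P)) z := by
  rw [kronAlg_apply]
  ext p q
  obtain ⟨p1, p2⟩ := p
  obtain ⟨q1, q2⟩ := q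
  simp only [LL, Matrix.add_apply, Matrix.kroneckerMap_apply, Matrix.submatrix_apply,
    Matrix.mul_apply, colM, rowA, rowM, Matrix.of_apply, Matrix.sub_apply, Matrix.smul_apply,
    Matrix.one_apply, smul_eq_mul]
  by_cases h : p2 = q2 <;> simp [h] <;> ring

/-- The idempotent of the loop `z ^ j P + z ^ k (1 - P)` is `R ⊗ P + S ⊗ (1 - P)` with the idempotents `R`
and `S` of the scalar loops `z ^ j` and `z ^ k`, as spectral projections are natural. -/
theorem QQ_kron (P : Matrix ι ι ℂ) (hP : P * P = P) (j k : Fin (d + 1)) :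
    (fun l => (Pi.single j P : Fin (d + 1) → Matrix ι ι ℂ) l +
      (Pi.single k (1 - P) : Fin (d + 1) → Matrix ι ι ℂ) l) ∈ Us ι d ∧
    QQ (fun l => (Pi.single j P : Fin (d + 1) → Matrix ι ι ℂ) l +
      (Pi.single k (1 - P) : Fin (d + 1) → Matrix ι ι ℂ) l) = kronAlg P hP (Pm d j, Pm d k) := by
  set c : Fin (d + 1) → Matrix ι ι ℂ := fun l => (Pi.single j P : Fin (d + 1) → Matrix ι ι ℂ) l +
      (Pi.single k (1 - P) : Fin (d + 1) → Matrix ι ι ℂ) l with hc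
  have hL : ∀ z, kronAlg P hP (LL (mono d j) z, LL (mono d k) z) = LL c z := by
    intro z
    have hm : ∀ j : Fin (d + 1), mono d j =
        fun l => (Pi.single j 1 : Fin (d + 1) → ℂ) l • (1 : Matrix Unit Unit ℂ) := by
      intro j; ext1 l
      by_cases h : l = j
      · subst h; simp [mono]
      · simp [mono, h]
    rw [hm, hm, kron_LL]
    congr 1
    ext1 l
    have : ∀ (j : Fin (d + 1)) (M : Matrix ι ι ℂ), (Pi.single j 1 : Fin (d + 1) → ℂ) l • M =
        (Pi.single j M : Fin (d + 1) → Matrix ι ι ℂ) l := by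
      intro j M
      by_cases h : l = j
      · subst h; simp
      · simp [h]
    rw [this, this]
  have hU : ∀ j : Fin (d + 1), IsUnit (LL (mono d j) 1).det := by
    intro j
    rw [det_LL]
    exact (Matrix.isUnit_iff_isUnit_det _).1 (Us.one (mono_mem j))
  have hS : kronAlg P hP (Sh d ⊗ₖ 1, Sh d ⊗ₖ 1) = Sh d ⊗ₖ 1 := by
    rw [kronAlg_apply]
    ext p q
    simp; ring
  have hA : kronAlg P hP (AA (mono d j), AA (mono d k)) = AA c := by
    have e1 : (LL c 1)⁻¹ = kronAlg P hP ((LL (mono d j) 1)⁻¹, (LL (mono d k) 1)⁻¹) := by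
      apply Matrix.inv_eq_right_inv
      rw [← hL, ← map_mul, Prod.mk_mul_mk, Matrix.mul_nonsing_inv _ (hU j),
        Matrix.mul_nonsing_inv _ (hU k)]
      exact map_one _
    rw [AA, AA, AA, e1]
    refine Eq.trans ?_ (congrArg (fun M => -(M * kronAlg P hP ((LL (mono d j) 1)⁻¹,
      (LL (mono d k) 1)⁻¹))) hS)
    rw [← map_mul, ← map_neg]
    rfl
  constructor
  · intro s
    have e : ev c (ee s) = ee s ^ j.val • P + ee s ^ k.val • (1 - P) := by
      rw [← ev_single, ← ev_single]
      simp only [ev, hc, smul_add, Finset.sum_add_distrib]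
    rw [e]
    refine isUnit_of_mul_eq_one (B := (ee s ^ j.val)⁻¹ • P + (ee s ^ k.val)⁻¹ • (1 - P)) ?_
    have h1 : P * (1 - P) = 0 := by rw [mul_sub, hP, mul_one, sub_self]
    have h2 : (1 - P) * P = 0 := by rw [sub_mul, hP, one_mul, sub_self]
    have h3 : (1 - P) * (1 - P) = 1 - P := by rw [mul_sub, h2, mul_one, sub_zero]
    have n1 : ee s ^ j.val ≠ 0 := pow_ne_zero _ (ee_ne s)
    have n2 : ee s ^ k.val ≠ 0 := pow_ne_zero _ (ee_ne s)
    simp only [add_mul, mul_add, Matrix.smul_mul, Matrix.mul_smul, smul_smul, h1, h2, h3, hP,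
      smul_zero, add_zero, zero_add]
    rw [inv_mul_cancel₀ n1, inv_mul_cancel₀ n2]
    simp
  · have := (PP_map (kronAlg P hP) (AA_mem (mono_mem j)) (AA_mem (mono_mem k))).2
    rw [hA] at this
    exact this

end Companion
end BottPer

namespace BottPer
open unitInterval Matrix
open scoped commutatorElement ComplexOrder

/-! ### Ranks of the idempotents attached to monomials -/

section Rank
open Polynomial in
/-- The determinant of `1 + X A` is a polynomial, determined by its values at the infinitely many points
`ζ - 1`. -/
theorem det_poly {κ : Type} [Fintype κ] [DecidableEq κ] (A : Matrix κ κ ℂ) (j : ℕ)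
    (h : ∀ s : ℝ, (1 + (ee s - 1) • A).det = ee s ^ j) :
    (1 + (X : ℂ[X]) • A.map C).det = (X + 1) ^ j := by
  have he : ∀ z : ℂ, eval z (1 + (X : ℂ[X]) • A.map C).det = (1 + z • A).det := by
    intro z
    rw [← Polynomial.coe_evalRingHom, RingHom.map_det]
    congr 1
    ext i k
    simp [Matrix.one_apply, apply_ite]
    ring
  refine Polynomial.eq_of_infinite_eval_eq _ _ ?_
  refine Set.Infinite.mono (s := Set.range fun s : Set.Ico (0 : ℝ) 1 => ee s - 1) ?_ ?_
  · rintro _ ⟨s, rfl⟩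
    simp only [Set.mem_ofPred_eq, he, h]
    simp
  · have : Set.Infinite (Set.Ico (0 : ℝ) 1) := Set.Ico_infinite zero_lt_one
    have := this.to_subtype
    refine Set.infinite_range_of_injective ?_
    intro s t hst
    have hst' : ee s = ee t := sub_left_injective hst
    rw [ee, ee, Complex.exp_eq_exp_iff_exists_int] at hst'
    obtain ⟨n, hn⟩ := hst'
    have h2 : (2 * Real.pi * Complex.I : ℂ) ≠ 0 := Complex.two_pi_I_ne_zero
    have h3 : (s.1 : ℂ) = t.1 + n := by
      apply mul_left_cancel₀ h2
      rw [hn]; ring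
    have h4 : s.1 = t.1 + n := by exact_mod_cast h3
    have hs := s.2
    have ht := t.2
    have h5 : n = 0 := by
      have a1 : (n : ℝ) < 1 := by linarith [hs.2, ht.1]
      have a2 : (-1 : ℝ) < n := by linarith [hs.1, ht.2]
      have a1' : n < 1 := by exact_mod_cast a1
      have a2' : -1 < n := by exact_mod_cast a2
      omega
    apply Subtype.ext
    rw [h4, h5]; simp

variable {κ : Type} [Fintype κ] [DecidableEq κ]

/-- The trace is the linear coefficient of the determinant of `1 + X A`. -/
theorem trace_of_det (A : Matrix κ κ ℂ) (j : ℕ)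
    (h : ∀ s : ℝ, (1 + (ee s - 1) • A).det = ee s ^ j) : A.trace = j := by
  have h1 := det_poly A j h
  have h2 := Matrix.derivative_det_one_add_X_smul A
  rw [h1] at h2
  refine h2.symm.trans ?_
  simp [Polynomial.derivative_pow]

/-- A nonzero eigenvalue of `A` gives the root `-z⁻¹` of `(1 + X) ^ j`. -/
theorem eigen_of_det (A : Matrix κ κ ℂ) (j : ℕ)
    (h : ∀ s : ℝ, (1 + (ee s - 1) • A).det = ee s ^ j) {v : κ → ℂ} (hv : v ≠ 0) {z : ℂ}
    (hz : A *ᵥ v = z • v) : z = 0 ∨ z = 1 := by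
  by_cases h0 : z = 0
  · exact Or.inl h0
  right
  have h1 := congrArg (Polynomial.eval (-z⁻¹)) (det_poly A j h)
  have he : Polynomial.eval (-z⁻¹) (1 + (Polynomial.X : Polynomial ℂ) • A.map Polynomial.C).det =
      (1 + (-z⁻¹) • A).det := by
    rw [← Polynomial.coe_evalRingHom, RingHom.map_det]
    congr 1
    ext i k
    simp [Matrix.one_apply, apply_ite]
    ring
  have hd : (1 + (-z⁻¹) • A).det = 0 := by
    refine Matrix.exists_mulVec_eq_zero_iff.1 ⟨v, hv, ?_⟩
    rw [Matrix.add_mulVec, Matrix.one_mulVec, Matrix.smul_mulVec, hz, smul_smul, neg_mul,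
      inv_mul_cancel₀ h0, neg_smul, one_smul, add_neg_cancel]
  rw [he, hd] at h1
  simp only [Polynomial.eval_pow, Polynomial.eval_add, Polynomial.eval_X, Polynomial.eval_one] at h1
  have h2 : -z⁻¹ + 1 = 0 := by
    rcases Nat.eq_zero_or_pos j with rfl | hj
    · simp at h1
    · exact (pow_eq_zero_iff hj.ne').1 h1.symm
  have h3 : z⁻¹ = 1 := by linear_combination -h2
  exact inv_eq_one.1 h3

/-- As `0` and `1` are the only possible eigenvalues of `A`, all eigenvalues of `A - PP A` are `0`, so
that `A` and its spectral projection have the same trace. -/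
theorem trace_PP {A : Matrix κ κ ℂ} (hA : A ∈ Qs κ) (j : ℕ)
    (h : ∀ s : ℝ, (1 + (ee s - 1) • A).det = ee s ^ j) : (PP A).trace = j := by
  rw [← trace_of_det A j h, eq_comm, ← sub_eq_zero, ← Matrix.trace_sub,
    Matrix.trace_eq_sum_roots_charpoly]
  have hc : Commute (A - PP A) A :=
    (Commute.refl A).sub_left (PP_commute hA (Commute.refl A)).symm
  refine Multiset.sum_eq_zero fun x hx => ?_
  rw [Polynomial.mem_roots', Polynomial.IsRoot.def, Matrix.eval_charpoly] at hx
  have hM : ¬ IsUnit (Matrix.scalar κ x - (A - PP A)) := by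
    intro hu
    exact ((Matrix.isUnit_iff_isUnit_det _).1 hu).ne_zero hx.2
  have hc' : Commute (Matrix.scalar κ x - (A - PP A)) A :=
    (Matrix.scalar_commute x (fun _ => Commute.all _ _) A).sub_left hc
  obtain ⟨v, hv0, hv, z, hz⟩ := exists_eigen_of_not_isUnit hc' hM
  have hz' : (A - PP A) *ᵥ v = 0 := by
    rw [Matrix.sub_mulVec, hz]
    rcases eigen_of_det A j h hv0 hz with rfl | rfl
    · rw [PP_mulVec_of_lt hA hz (by norm_num), zero_smul, sub_zero]
    · rw [PP_mulVec_of_gt hA hz (by norm_num), one_smul, sub_self]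
  rw [Matrix.sub_mulVec, hz', sub_zero] at hv
  have : x • v = 0 := by
    rw [← hv]; ext i; simp [Matrix.scalar_apply, Matrix.mulVec_diagonal]
  exact (smul_eq_zero.1 this).resolve_right hv0

theorem trace_Pm (d : ℕ) (k : Fin (d + 1)) : (Pm d k).trace = k.val := by
  refine trace_PP (AA_mem (mono_mem k)) _ fun s => ?_
  have h := LL_eq (Us.one (mono_mem k)) (ee s)
  have h2 := congrArg Matrix.det h
  have e : ∀ z, (ev (mono d k) z).det = z ^ k.val := by
    intro z; rw [mono, ev_single]; simp
  rw [Matrix.det_mul, det_LL, det_LL, e, e, one_pow, mul_one] at h2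
  exact h2.symm

/-- An idempotent matrix is the projection onto the image of a frame along its kernel. -/
theorem exists_frame (P : Matrix κ κ ℂ) (hP : P * P = P) :
    ∃ (r : ℕ) (F : Frame (Fin r) κ), F.V * F.V' = P := by
  let E := LinearMap.range P.mulVecLin
  let b := Module.finBasis ℂ E
  have hE : ∀ x : E, P.mulVecLin.rangeRestrict x.1 = x := by
    rintro ⟨_, y, rfl⟩
    apply Subtype.ext
    change P *ᵥ (P *ᵥ y) = P *ᵥ y
    rw [Matrix.mulVec_mulVec, hP]
  refine ⟨Module.finrank ℂ E, ⟨LinearMap.toMatrix' (E.subtype ∘ₗ b.equivFun.symm.toLinearMap),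
    LinearMap.toMatrix' (b.equivFun.toLinearMap ∘ₗ P.mulVecLin.rangeRestrict), ?_⟩, ?_⟩
  · rw [← LinearMap.toMatrix'_comp, ← LinearMap.toMatrix'_id]
    congr 1
    refine LinearMap.ext fun x => ?_
    simp only [LinearMap.comp_apply, LinearEquiv.coe_coe, Submodule.subtype_apply, hE,
      LinearEquiv.apply_symm_apply, LinearMap.id_apply]
  · rw [← LinearMap.toMatrix'_comp]
    have : (E.subtype ∘ₗ b.equivFun.symm.toLinearMap) ∘ₗ b.equivFun.toLinearMap ∘ₗ
        P.mulVecLin.rangeRestrict = P.mulVecLin := by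
      refine LinearMap.ext fun x => ?_
      simp only [LinearMap.comp_apply, LinearEquiv.coe_coe, Submodule.subtype_apply,
        LinearEquiv.symm_apply_apply]
      rfl
    rw [this, ← Matrix.toLin'_apply', LinearMap.toMatrix'_toLin']

theorem frame_rank {r : ℕ} (F : Frame (Fin r) κ) : (F.V * F.V').trace = r := by
  rw [Matrix.trace_mul_comm, F.h]; simp

end Rank
end BottPer

namespace BottPer
open unitInterval Matrix
open scoped commutatorElement ComplexOrder

/-! ### Approximation by Laurent polynomials -/

section Approx

theorem ee_pow (s : ℝ) (k : ℕ) : ee s ^ k = ee (k * s) := by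
  induction k with
  | zero => simp
  | succ k ih => rw [pow_succ, ih, ← ee_add]; congr 1; push_cast; ring

/-- Uniform approximation of periodic functions by trigonometric polynomials of any large degree. -/
theorem exists_trig (g : C(I, ℂ)) (hg : g 0 = g 1) {δ : ℝ} (hδ : 0 < δ) :
    ∃ m : ℕ, ∀ M : ℕ, m ≤ M → ∃ x : Fin (2 * M + 1) → ℂ,
      ∀ s : I, ‖g s - ee (-(M * s)) * ∑ k, ee s ^ k.val * x k‖ < δ := by
  let f : ℝ → ℂ := Set.IccExtend zero_le_one g
  have hf : Continuous f := g.continuous.Icc_extend'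
  have hfI : ∀ s : I, f s = g s := fun s => Set.IccExtend_val _ _ s
  have : Fact ((0 : ℝ) < 1) := ⟨zero_lt_one⟩
  have h01 : f 0 = f 1 := by
    have h0 := hfI 0
    have h1 := hfI 1
    simp only [Set.Icc.coe_zero, Set.Icc.coe_one] at h0 h1
    rw [h0, h1, hg]
  let G : C(AddCircle (1 : ℝ), ℂ) := ⟨AddCircle.liftIco 1 0 f,
    AddCircle.liftIco_zero_continuous h01 hf.continuousOn⟩
  have hG : ∀ s : I, G ((s : ℝ) : AddCircle (1 : ℝ)) = g s := by
    intro s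
    rcases eq_or_lt_of_le s.2.2 with h | h
    · have e1 : s = 1 := Subtype.ext h
      have e2 : ((s : ℝ) : AddCircle (1 : ℝ)) = ((0 : ℝ) : AddCircle (1 : ℝ)) := by
        rw [h]; simp
      rw [e2]
      refine (AddCircle.liftIco_zero_coe_apply (f := f) (p := (1:ℝ)) (x := (0:ℝ)) ⟨le_rfl, zero_lt_one⟩ : _).trans ?_
      rw [h01, e1, ← hfI 1]; rfl
    · exact (AddCircle.liftIco_zero_coe_apply ⟨s.2.1, h⟩).trans (hfI s)
  have hmem : G ∈ closure (Submodule.span ℂ (Set.range (@fourier 1)) : Set C(AddCircle (1 : ℝ), ℂ)) := by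
    rw [← Submodule.topologicalClosure_coe, span_fourier_closure_eq_top]
    trivial
  obtain ⟨p, hp, hd⟩ := Metric.mem_closure_iff.1 hmem δ hδ
  obtain ⟨c, rfl⟩ := Finsupp.mem_span_range_iff_exists_finsupp.1 hp
  let m : ℕ := c.support.sup Int.natAbs
  refine ⟨m, fun M hM => ⟨fun k => c (k.val - M), fun s => ?_⟩⟩
  have h1 : ‖G ((s : ℝ) : AddCircle (1 : ℝ)) - (c.sum fun i a => a • fourier i) ((s : ℝ) : AddCircle (1 : ℝ))‖ < δ := by
    rw [← dist_eq_norm]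
    exact (ContinuousMap.dist_apply_le_dist _).trans_lt hd
  rw [hG] at h1
  convert h1 using 3
  have h2 : ∀ k : ℤ, (fourier k) ((s : ℝ) : AddCircle (1 : ℝ)) = ee (k * s) := by
    intro k
    rw [fourier_coe_apply, ee]; congr 1; push_cast; ring
  have h3 : (c.sum fun i a => a • fourier i) ((s : ℝ) : AddCircle (1 : ℝ)) =
      ∑ i ∈ c.support, c i * ee (i * s) := by
    rw [Finsupp.sum, ContinuousMap.sum_apply]
    refine Finset.sum_congr rfl fun i _ => ?_
    rw [ContinuousMap.smul_apply, h2, smul_eq_mul]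
  rw [h3, Finset.mul_sum]
  let e : Fin (2 * M + 1) ↪ ℤ := ⟨fun k => k.val - M, fun a b hab => by
    apply Fin.ext; simp at hab; exact hab⟩
  have hsub : c.support ⊆ Finset.univ.map e := by
    intro i hi
    have hi' : i.natAbs ≤ m := Finset.le_sup (f := Int.natAbs) hi
    refine Finset.mem_map.2 ⟨⟨(i + M).toNat, by omega⟩, Finset.mem_univ _, ?_⟩
    change (((i + M).toNat : ℕ) : ℤ) - M = i
    omega
  rw [Finset.sum_subset hsub, Finset.sum_map]
  · refine Finset.sum_congr rfl fun k _ => ?_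
    change _ = c (k.val - M) * ee (((k.val - M : ℤ) : ℝ) * s)
    rw [ee_pow, ← mul_assoc, ← ee_add, mul_comm]
    congr 2
    push_cast; ring
  · intro i _ hi
    rw [Finsupp.notMem_support_iff.1 hi, zero_mul]

variable {Z : Type} [TopologicalSpace Z] [CompactSpace Z]

/-- Approximation of a periodic family of matrices by Laurent polynomials, naturally in the
parameter. -/
theorem exists_laurent {E : Type} [NormedAddCommGroup E] [NormedSpace ℂ E] (F : C(Z × I, E))
    (hF : ∀ z, F (z, 0) = F (z, 1)) {ε : ℝ} (hε : 0 < ε) :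
    ∃ (m : ℕ) (c : C(Z, Fin (2 * m + 1) → E)), 1 ≤ m ∧
      (∀ z z', (∀ s, F (z, s) = F (z', s)) → c z = c z') ∧
      ∀ z s, ‖F (z, s) - ee (-(m * (s : ℝ))) • ∑ k, ee s ^ k.val • c z k‖ < ε := by
  let _ : NormedSpace ℝ E := NormedSpace.restrictScalars ℝ ℂ E
  -- Bernstein approximation in `s` separates the variables: only scalar weights remain to be treated
  let f : C(I, C(Z, E)) := (F.comp ⟨Prod.swap, continuous_swap⟩).curry
  have hf : ∀ s z, f s z = F (z, s) := fun _ _ => rfl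
  obtain ⟨n, hn0, hn⟩ : ∃ n : ℕ, n ≠ 0 ∧ dist (bernsteinApproximation n f) f < ε / 2 := by
    have h := (Metric.tendsto_nhds.1 (bernsteinApproximation_uniform f)) (ε / 2) (half_pos hε)
    obtain ⟨n, h1, h2⟩ := (h.and (Filter.eventually_ne_atTop 0)).exists
    exact ⟨n, h2, h1⟩
  have hB : ∀ (z : Z) (s : I), ‖F (z, s) - ∑ l : Fin (n + 1), bernstein n l s • F (z, bernstein.z l)‖ < ε / 2 := by
    intro z s
    have h1 : dist (f s z) (bernsteinApproximation n f s z) < ε / 2 := by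
      rw [dist_comm]
      exact ((ContinuousMap.dist_apply_le_dist z).trans (ContinuousMap.dist_apply_le_dist s)).trans_lt hn
    rw [dist_eq_norm, bernsteinApproximation.apply] at h1
    have e : (∑ k : Fin (n + 1), bernstein n k s • f (bernstein.z k)) z =
        ∑ l : Fin (n + 1), bernstein n l s • F (z, bernstein.z l) := by
      rw [ContinuousMap.sum_apply]; rfl
    rw [e] at h1
    exact h1
  -- the first and the last weight can be dropped by periodicity
  let w : Fin (n + 1) → C(I, ℂ) := fun l => if l = 0 ∨ l = Fin.last n then 0 else
    ⟨fun s => ((bernstein n l s : ℝ) : ℂ), by fun_prop⟩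
  have hw : ∀ l, w l 0 = w l 1 := by
    intro l
    by_cases h : l = 0 ∨ l = Fin.last n
    · simp [w, h]
    · have h1 : l.val ≠ 0 := fun h' => h (Or.inl (Fin.ext h'))
      have h2 : l.val ≠ n := fun h' => h (Or.inr (Fin.ext h'))
      have h3 : n - l.val ≠ 0 := by have := l.2; omega
      simp [w, h, bernstein_apply, h1, h3]
  have hsum : ∀ (z : Z) (s : I), ∑ l : Fin (n + 1), bernstein n l s • F (z, bernstein.z l) =
      F (z, 0) + ∑ l, w l s • (F (z, bernstein.z l) - F (z, 0)) := by
    intro z s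
    have h1 : ∑ l : Fin (n + 1), bernstein n l s • F (z, 0) = F (z, 0) := by
      rw [← Finset.sum_smul, bernstein.probability, one_smul]
    rw [← sub_eq_iff_eq_add']
    nth_rewrite 1 [← h1]
    rw [← Finset.sum_sub_distrib]
    refine Finset.sum_congr rfl fun l _ => ?_
    rw [← smul_sub]
    by_cases h : l = 0 ∨ l = Fin.last n
    · have : F (z, bernstein.z l) - F (z, 0) = 0 := by
        rcases h with rfl | rfl
        · rw [bernstein.z_zero, sub_self]
        · rw [bernstein.z_last hn0, hF, sub_self]
      rw [this, smul_zero, smul_zero]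
    · simp only [w, h, if_false, ContinuousMap.coe_mk]
      exact (Complex.coe_smul _ _).symm
  obtain ⟨K, hK0, hK⟩ : ∃ K : ℝ, 0 < K ∧ ∀ z s, ‖F (z, s) - F (z, 0)‖ ≤ K := by
    refine ⟨‖F‖ + ‖F‖ + 1, by positivity, fun z s => ?_⟩
    refine (norm_sub_le _ _).trans ?_
    have := F.norm_coe_le_norm (z, s)
    have := F.norm_coe_le_norm (z, 0)
    linarith
  let δ : ℝ := ε / (2 * (n + 1) * K)
  have hδ : 0 < δ := by positivity
  choose m hm using fun l => exists_trig (w l) (hw l) hδ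
  let M : ℕ := Finset.univ.sup m + 1
  choose x hx using fun l => hm l M ((Finset.le_sup (Finset.mem_univ l)).trans (Nat.le_succ _))
  refine ⟨M, ⟨fun z k => (if k.val = M then F (z, 0) else 0) +
    ∑ l, x l k • (F (z, bernstein.z l) - F (z, 0)), ?_⟩, Nat.le_add_left _ _, ?_, fun z s => ?_⟩
  · refine continuous_pi fun k => ?_
    refine Continuous.add ?_ (by fun_prop)
    split_ifs <;> fun_prop
  · intro z z' h
    ext1 k
    simp only [ContinuousMap.coe_mk, h]
  · have e1 : ee (-(M * (s : ℝ))) • ∑ k : Fin (2 * M + 1), ee s ^ k.val •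
        ((if k.val = M then F (z, 0) else 0) + ∑ l, x l k • (F (z, bernstein.z l) - F (z, 0))) =
        F (z, 0) + ∑ l, (ee (-(M * (s : ℝ))) * ∑ k, ee s ^ k.val * x l k) •
          (F (z, bernstein.z l) - F (z, 0)) := by
      simp only [smul_add, Finset.sum_add_distrib, Finset.smul_sum, Finset.mul_sum, Finset.sum_smul,
        smul_smul]
      congr 1
      · rw [Finset.sum_eq_single ⟨M, by omega⟩]
        · rw [if_pos rfl, ee_pow, ← ee_add]
          simp
        · intro k _ hk
          rw [if_neg, smul_zero]
          exact fun h => hk (Fin.ext h)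
        · simp
      · rw [Finset.sum_comm]
    simp only [ContinuousMap.coe_mk]
    rw [e1]
    have e2 := hB z s
    rw [hsum] at e2
    have e3 : ‖∑ l, (w l s - ee (-(M * (s : ℝ))) * ∑ k, ee s ^ k.val * x l k) •
          (F (z, bernstein.z l) - F (z, 0))‖ ≤ ε / 2 := by
      refine (norm_sum_le _ _).trans ?_
      have : ∀ l ∈ (Finset.univ : Finset (Fin (n + 1))),
          ‖(w l s - ee (-(M * (s : ℝ))) * ∑ k, ee s ^ k.val * x l k) •
          (F (z, bernstein.z l) - F (z, 0))‖ ≤ δ * K := by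
        intro l _
        rw [norm_smul]
        exact mul_le_mul (hx l s).le (hK _ _) (norm_nonneg _) hδ.le
      refine (Finset.sum_le_sum this).trans ?_
      rw [Finset.sum_const, Finset.card_univ, Fintype.card_fin, nsmul_eq_mul]
      simp only [δ]
      push_cast
      have : (n + 1 : ℝ) ≠ 0 := by positivity
      apply le_of_eq
      field_simp
    calc _ = ‖(F (z, s) - (F (z, 0) + ∑ l, w l s • (F (z, bernstein.z l) - F (z, 0)))) +
          ∑ l, (w l s - ee (-(M * (s : ℝ))) * ∑ k, ee s ^ k.val * x l k) •
          (F (z, bernstein.z l) - F (z, 0))‖ := by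
            congr 1
            simp only [sub_smul, Finset.sum_sub_distrib]
            abel
      _ < ε := by
        refine (norm_add_le _ _).trans_lt ?_
        linarith

/-- Small perturbations of a compact family of invertible matrices are invertible. -/
theorem exists_unit_radius {ι : Type} [Fintype ι] [DecidableEq ι] (F : C(Z, GLC ι)) :
    ∃ ε > 0, ∀ (z : Z) (E : ι → ι → ℂ), ‖E‖ < ε → IsUnit ((F z).val + Matrix.of E) := by
  have hc : Continuous fun p : (ι → ι → ℂ) × Z => ((F p.2).val + Matrix.of p.1).det := by
    have h1 : Continuous fun p : (ι → ι → ℂ) × Z => (F p.2).val :=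
      Units.continuous_val.comp (F.continuous.comp continuous_snd)
    have h2 : Continuous fun p : (ι → ι → ℂ) × Z => (Matrix.of p.1 : Matrix ι ι ℂ) := continuous_fst
    exact (h1.add h2).matrix_det
  have hopen : IsOpen {p : (ι → ι → ℂ) × Z | ((F p.2).val + Matrix.of p.1).det ≠ 0} :=
    isOpen_ne_fun hc continuous_const
  have h : ∀ᶠ E : ι → ι → ℂ in 𝓝 0, ∀ z ∈ (Set.univ : Set Z), ((F z).val + Matrix.of E).det ≠ 0 := by
    refine isCompact_univ.eventually_forall_of_forall_eventually fun z _ => ?_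
    refine hopen.mem_nhds ?_
    have : (Matrix.of (0 : ι → ι → ℂ) : Matrix ι ι ℂ) = 0 := rfl
    simp only [Set.mem_ofPred_eq, this, add_zero]
    exact ((Matrix.isUnit_iff_isUnit_det _).1 (F z).isUnit).ne_zero
  obtain ⟨ε, hε, hb⟩ := Metric.eventually_nhds_iff.1 h
  refine ⟨ε, hε, fun z E hE => ?_⟩
  rw [Matrix.isUnit_iff_isUnit_det, isUnit_iff_ne_zero]
  exact hb (by simpa using hE) z (Set.mem_univ z)

end Approx
end BottPer

namespace BottPer
open unitInterval Matrix
open scoped commutatorElement ComplexOrder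

/-! ### Families of loops are given by families of idempotents -/

section Clutch

variable {Z : Type} [TopologicalSpace Z]
variable {ι κ lam : Type} [Fintype ι] [DecidableEq ι] [Fintype κ] [DecidableEq κ]
  [Fintype lam] [DecidableEq lam]

/-- Normalization of a family of loops: the result is trivial on `s = 0` and at `z = z₀`. -/
noncomputable def Nm (z₀ : Z) (H : C(Z × I, GLC ι)) : C(Z × I, GLC ι) :=
  H * (H.comp ⟨fun p => (p.1, 0), by fun_prop⟩)⁻¹ *
    (H.comp ⟨fun p => (z₀, p.2), by fun_prop⟩ * (H.comp ⟨fun _ => (z₀, 0), by fun_prop⟩)⁻¹)⁻¹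

theorem Nm_apply (z₀ : Z) (H : C(Z × I, GLC ι)) (p : Z × I) :
    Nm z₀ H p = H p * (H (p.1, 0))⁻¹ * (H (z₀, p.2) * (H (z₀, 0))⁻¹)⁻¹ := rfl

/-- A homotopy through families of periodic loops, all equal to each other over `W`, becomes a homotopy
relative to the boundary after normalization. -/
theorem Nm_eqv {W : Set Z} {z₀ : Z} (hz : z₀ ∈ W) {H0 H1 : C(Z × I, GLC ι)}
    (K : I × Z × I → Matrix ι ι ℂ) (hc : Continuous K) (hu : ∀ p, IsUnit (K p))
    (k0 : ∀ p, K (0, p) = (H0 p).val) (k1 : ∀ p, K (1, p) = (H1 p).val)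
    (hp : ∀ t z, K (t, z, 1) = K (t, z, 0)) (hw : ∀ t, ∀ w ∈ W, ∀ s, K (t, w, s) = K (t, z₀, s)) :
    Eqv (bd W) (Nm z₀ H0) (Nm z₀ H1) := by
  let L := mkGL K hc hu
  have hL : ∀ p, (L p).val = K p := fun p => rfl
  have l0 : ∀ p, L (0, p) = H0 p := fun p => Units.ext (k0 p)
  have l1 : ∀ p, L (1, p) = H1 p := fun p => Units.ext (k1 p)
  have lp : ∀ t z, L (t, z, 1) = L (t, z, 0) := fun t z => Units.ext (hp t z)
  have lw : ∀ t, ∀ w ∈ W, ∀ s, L (t, w, s) = L (t, z₀, s) := fun t w m s => Units.ext (hw t w m s)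
  have hb : ∀ t, ∀ w ∈ bd W, L (t, w.1, w.2) * (L (t, w.1, 0))⁻¹ *
      (L (t, z₀, w.2) * (L (t, z₀, 0))⁻¹)⁻¹ = 1 := by
    rintro t ⟨z, s⟩ (h | h | h)
    · simp only [lw t z h]; group
    · simp only at h; subst h; group
    · simp only at h; subst h; simp only [lp]; group
  refine Eqv.of_homotopy (L * (L.comp ⟨fun p => (p.1, p.2.1, 0), by fun_prop⟩)⁻¹ *
    (L.comp ⟨fun p => (p.1, z₀, p.2.2), by fun_prop⟩ *
      (L.comp ⟨fun p => (p.1, z₀, 0), by fun_prop⟩)⁻¹)⁻¹) ?_ ?_ ?_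
  · rintro ⟨z, s⟩; simp [Nm_apply, l0]
  · rintro ⟨z, s⟩; simp [Nm_apply, l1]
  · rintro t ⟨z, s⟩ h
    exact (hb t _ h).trans (hb 0 _ h).symm

theorem Nm_app (F : Frame ι lam) (z₀ : Z) (H : C(Z × I, GLC ι)) :
    F.app (Nm z₀ H) = Nm z₀ (F.app H) := by
  ext1 p; simp [Nm_apply]

/-- The normalization only sees `H` up to factors depending on `z` alone, and central factors
depending on `s` alone. -/
theorem Nm_congr (z₀ : Z) (H H' : C(Z × I, GLC ι)) (u : I → ℂ) (hu : ∀ s, u s ≠ 0) (hu0 : u 0 = 1)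
    (C : Z → GLC ι)
    (h : ∀ z s, (H (z, s)).val = u s • ((H' (z, s)).val * (C z).val)) : Nm z₀ H = Nm z₀ H' := by
  let v : I → GLC ι := fun s => Units.map (algebraMap ℂ (Matrix ι ι ℂ)).toMonoidHom (Units.mk0 (u s) (hu s))
  have hv : ∀ s (g : GLC ι), v s * g = g * v s := fun s g => Units.ext (Algebra.commutes _ _)
  have hv0 : v 0 = 1 := by
    apply Units.ext; simp [v, hu0]
  have hH : ∀ z s, H (z, s) = v s * (H' (z, s) * C z) := by
    intro z s
    apply Units.ext
    rw [h, Units.val_mul, Units.val_mul]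
    simp [v, Algebra.smul_def]
  ext1 ⟨z, s⟩
  have e1 : v s * (H' (z, s) * C z) * (H' (z, 0) * C z)⁻¹ = v s * (H' (z, s) * (H' (z, 0))⁻¹) := by group
  have e2 : (v s * (H' (z₀, s) * C z₀) * (H' (z₀, 0) * C z₀)⁻¹)⁻¹ =
    (H' (z₀, s) * (H' (z₀, 0))⁻¹)⁻¹ * (v s)⁻¹ := by group
  simp only [Nm_apply, hH, hv0, one_mul]
  rw [e1, e2, mul_assoc, ← mul_assoc (H' (z, s) * _), hv, mul_assoc, inv_mul_cancel, mul_one]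

/-- The loops `1 + (ζ - 1) P (z)`. -/
noncomputable def DD (P : C(Z, Matrix ι ι ℂ)) (hP : ∀ z, P z * P z = P z) : C(Z × I, GLC ι) :=
  ⟨fun p => ddU (P p.1) (hP p.1) (eU p.2), continuous_of_val (by simp only [ddU]; fun_prop)⟩

theorem DD_apply (P : C(Z, Matrix ι ι ℂ)) (hP : ∀ z, P z * P z = P z) (p : Z × I) :
    DD P hP p = ddU (P p.1) (hP p.1) (eU p.2) := rfl

theorem DD_val (P : C(Z, Matrix ι ι ℂ)) (hP : ∀ z, P z * P z = P z) (p : Z × I) :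
    (DD P hP p).val = 1 + (ee p.2 - 1) • P p.1 := rfl

/-- By periodicity it suffices to know invertibility for `s ∈ [0, 1]`. -/
theorem isUnit_ee {f : ℂ → Matrix ι ι ℂ} (h : ∀ s : I, IsUnit (f (ee s))) (s : ℝ) :
    IsUnit (f (ee s)) := by
  have h1 : ee s = ee (Int.fract s) := by
    conv_lhs => rw [← Int.floor_add_fract s, ee_add, ee_int, one_mul]
  rw [h1]
  exact h ⟨Int.fract s, Int.fract_nonneg s, (Int.fract_lt_one s).le⟩

@[simp] theorem ee_one : ee 1 = 1 := by simpa using ee_int 1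

theorem ev_continuous {d : ℕ} : Continuous fun p : (Fin (d + 1) → Matrix ι ι ℂ) × ℂ => ev p.1 p.2 := by
  simp only [ev]; fun_prop

/-- A family of invertible loops is approximated by Laurent polynomials `z ^ (-m) ∑ c k z ^ k` so closely
that the straight line between the two consists of invertible loops. -/
theorem exists_laurent_unit [CompactSpace Z] (F : C(Z × I, GLC ι)) (hF : ∀ z, F (z, 0) = F (z, 1)) :
    ∃ (m : ℕ) (c : C(Z, Fin (2 * m + 1) → Matrix ι ι ℂ)), 1 ≤ m ∧
      (∀ z z', (∀ s, F (z, s) = F (z', s)) → c z = c z') ∧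
      ∀ (p : Z × I) (t : I), IsUnit ((F p).val +
        (t : ℂ) • (ee (-(m * (p.2 : ℝ))) • ev (c p.1) (ee p.2) - (F p).val)) := by
  obtain ⟨ε, hε, hunit⟩ := exists_unit_radius F
  let F' : Z × I → ι → ι → ℂ := fun p => (F p).val
  have hF' : Continuous F' := continuous_val F
  obtain ⟨m, c, hm, hcw, happ⟩ := exists_laurent (E := ι → ι → ℂ) ⟨F', hF'⟩
    (fun z => congrArg (fun u : GLC ι => (u.val : ι → ι → ℂ)) (hF z)) hε
  refine ⟨m, c, hm, fun z z' h => hcw z z' fun s =>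
    congrArg (fun u : GLC ι => (u.val : ι → ι → ℂ)) (h s), fun p t => ?_⟩
  have h1 : ‖F' p - ee (-(m * (p.2 : ℝ))) • ∑ k, ee p.2 ^ k.val • c p.1 k‖ < ε := happ p.1 p.2
  refine hunit p ((t : ℂ) • (ee (-(m * (p.2 : ℝ))) • ∑ k, ee p.2 ^ k.val • c p.1 k - F' p)) ?_
  refine lt_of_le_of_lt ?_ h1
  rw [norm_sub_rev (F' p)]
  refine (norm_smul_le _ _).trans ?_
  refine mul_le_of_le_one_left (norm_nonneg _) ?_
  rw [Complex.norm_real, Real.norm_of_nonneg t.2.1]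
  exact t.2.2

/-- Every family of loops is, after stabilization, homotopic to the family of loops given by a
family of idempotents. -/
theorem clutch [CompactSpace Z] {W : Set Z} {z₀ : Z} (hz : z₀ ∈ W) (F : C(Z × I, GLC ι))
    (hF : ∀ w ∈ bd W, F w = 1) : ∃ (lam : Type) (_ : Fintype lam) (_ : DecidableEq lam)
      (e : Frame ι lam) (P : C(Z, Matrix lam lam ℂ)) (hP : ∀ z, P z * P z = P z),
      (∀ w ∈ W, P w = P z₀) ∧ Eqv (bd W) (e.app F) (Nm z₀ (DD P hP)) := by
  have hF0 : ∀ z, F (z, 0) = 1 := fun z => hF _ (Or.inr (Or.inl rfl))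
  have hF1 : ∀ z, F (z, 1) = 1 := fun z => hF _ (Or.inr (Or.inr rfl))
  have hFw : ∀ w ∈ W, ∀ s, F (w, s) = 1 := fun w m s => hF _ (Or.inl m)
  have hNF : Nm z₀ F = F := by
    ext1 ⟨z, s⟩; simp [Nm_apply, hF0, hFw z₀ hz]
  obtain ⟨m, c', -, hcw, hKu⟩ := exists_laurent_unit F (fun z => by rw [hF0, hF1])
  let G : Z × I → Matrix ι ι ℂ := fun p => ee (-(m * (p.2 : ℝ))) • ev (c' p.1) (ee p.2)
  have hGc : Continuous G := by
    have := (ev_continuous (ι := ι) (d := 2 * m)).comp (f := fun p : Z × I => (c' p.1, ee p.2)) (by fun_prop)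
    exact Continuous.smul (f := fun p : Z × I => ee (-(m * (p.2 : ℝ)))) (by fun_prop) this
  have hK : ∀ (t : I) p, IsUnit ((F p).val + (t : ℂ) • (G p - (F p).val)) := fun t p => hKu p t
  have hcW : ∀ w ∈ W, c' w = c' z₀ := by
    intro w hw
    refine hcw w z₀ fun s => ?_
    simp [hFw w hw, hFw z₀ hz]
  have hGu : ∀ p, IsUnit (G p) := fun p => by simpa using hK 1 p
  have hG1 : ∀ z, G (z, 1) = G (z, 0) := by
    intro z
    have e2 : ee (-(m : ℝ)) = 1 := by have := ee_int (-m); push_cast at this; exact this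
    simp [G, e2]
  -- the straight line to the Laurent approximation
  have step1 : Eqv (bd W) F (Nm z₀ (mkGL G hGc hGu)) := by
    rw [← hNF]
    have hFc := continuous_val F
    refine Nm_eqv hz (fun p => (F p.2).val + (p.1 : ℂ) • (G p.2 - (F p.2).val)) ?_ (fun p => hK _ _) ?_ ?_ ?_ ?_
    · have h1 : Continuous fun p : I × Z × I => (F p.2).val := hFc.comp continuous_snd
      have h2 : Continuous fun p : I × Z × I => G p.2 := hGc.comp continuous_snd
      fun_prop
    · intro p; simp
    · intro p; simp
    · intro t z
      simp only [hG1, hF0, hF1]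
    · intro t w hw s
      simp only [hFw w hw, hFw z₀ hz, G, hcW w hw]
  have hev : ∀ z (s : I), IsUnit (ev (c' z) (ee s)) := by
    intro z s
    have h1 := hGu (z, s)
    have h2 : ev (c' z) (ee s) = ee (m * (s : ℝ)) • G (z, s) := by
      simp [G, smul_smul, ← ee_add]
    rw [h2]
    rw [Matrix.isUnit_iff_isUnit_det] at h1 ⊢
    rw [Matrix.det_smul]
    exact ((Units.mk0 _ (ee_ne (m * (s : ℝ)))).isUnit.pow _).mul h1
  have hUs : ∀ z, c' z ∈ Us ι (2 * m) := fun z => isUnit_ee (f := ev (c' z)) (hev z)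
  let p : C(Z × I, GLC ι) := mkGL (fun p => ev (c' p.1) (ee p.2))
    ((ev_continuous (ι := ι) (d := 2 * m)).comp (f := fun p : Z × I => (c' p.1, ee p.2)) (by fun_prop))
    (fun p => hev p.1 p.2)
  -- the central factor `z ^ (-m)` is not seen by the normalization
  have step2 : Nm z₀ (mkGL G hGc hGu) = Nm z₀ p := by
    refine Nm_congr z₀ _ _ (fun s => ee (-(m * (s : ℝ)))) (fun s => ee_ne _) (by simp) (fun _ => 1) ?_
    intro z s
    simp [p, G]
  let e := frame0 ι (2 * m)
  have hLc : Continuous fun q : I × Z × I => LH (c' q.2.1) (ee q.2.2) (q.1 : ℂ) :=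
    LH_continuous.comp (f := fun q : I × Z × I => (c' q.2.1, ee q.2.2, (q.1 : ℂ))) (by fun_prop)
  have hLu : ∀ q : I × Z × I, IsUnit (LH (c' q.2.1) (ee q.2.2) (q.1 : ℂ)) := by
    intro q
    rw [Matrix.isUnit_iff_isUnit_det, det_LH, ← Matrix.isUnit_iff_isUnit_det]
    exact hev _ _
  let L : C(Z × I, GLC (Fin (2 * m + 1) × ι)) := mkGL (fun q => LH (c' q.1) (ee q.2) 1)
    (by
      have := hLc.comp (f := fun q : Z × I => ((1 : I), q)) (by fun_prop)
      simpa [Function.comp_def] using this)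
    (fun q => by simpa using hLu (1, q))
  -- the polynomial loop is homotopic to its linearization
  have step3 : Eqv (bd W) (e.app (Nm z₀ p)) (Nm z₀ L) := by
    rw [Nm_app]
    refine Nm_eqv hz _ hLc hLu ?_ ?_ ?_ ?_
    · rintro ⟨z, s⟩
      simp [LH_zero, e, p]
    · rintro ⟨z, s⟩; simp [L]
    · intro t z; simp
    · intro t w hw s; simp [hcW w hw]
  have hAc : Continuous fun z => AA (c' z) :=
    AA_continuous.comp (f := fun z => (⟨c' z, hUs z⟩ : Us ι (2 * m))) (c'.continuous.subtype_mk _)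
  have hQc : Continuous fun z => QQ (c' z) :=
    QQ_continuous.comp (f := fun z => (⟨c' z, hUs z⟩ : Us ι (2 * m))) (c'.continuous.subtype_mk _)
  let P : C(Z, Matrix (Fin (2 * m + 1) × ι) (Fin (2 * m + 1) × ι) ℂ) := ⟨_, hQc⟩
  have hP : ∀ z, P z * P z = P z := fun z => QQ_idem (hUs z)
  let A1 : C(Z × I, GLC (Fin (2 * m + 1) × ι)) := mkGL (fun q => 1 + (ee q.2 - 1) • AA (c' q.1))
    (by
      have h1 : Continuous fun q : Z × I => AA (c' q.1) := hAc.comp continuous_fst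
      fun_prop) (fun q => AA_mem (hUs q.1) _)
  -- dividing by the value at `z = 1` leaves a loop of the form `1 + (z - 1) A`
  have step4 : Nm z₀ L = Nm z₀ A1 := by
    have hl1 : ∀ z, IsUnit (LL (c' z) 1) := fun z => by
      rw [Matrix.isUnit_iff_isUnit_det, det_LL, ← Matrix.isUnit_iff_isUnit_det]
      exact Us.one (hUs z)
    refine Nm_congr z₀ _ _ (fun s => 1) (fun s => one_ne_zero) rfl (fun z => (hl1 z).unit) ?_
    intro z s
    simp only [L, A1, mkGL_val, LH_one, one_smul, IsUnit.unit_spec]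
    exact LL_eq (Us.one (hUs z)) _
  -- the straight line from `A` to its spectral projection
  have step5 : Eqv (bd W) (Nm z₀ A1) (Nm z₀ (DD P hP)) := by
    refine Nm_eqv hz (fun q => 1 + (ee q.2.2 - 1) • ((1 - (q.1 : ℂ)) • AA (c' q.2.1) + (q.1 : ℂ) • QQ (c' q.2.1)))
      ?_ (fun q => line_mem_Qs (AA_mem (hUs q.2.1)) q.1 _) ?_ ?_ ?_ ?_
    · have h1 : Continuous fun q : I × Z × I => AA (c' q.2.1) := hAc.comp (by fun_prop)
      have h2 : Continuous fun q : I × Z × I => QQ (c' q.2.1) := hQc.comp (by fun_prop)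
      fun_prop
    · intro q; simp [A1]
    · intro q; simp [DD_val, P]
    · intro t z; simp
    · intro t w hw s; simp [hcW w hw]
  refine ⟨_, inferInstance, inferInstance, e, P, hP, ?_, ?_⟩
  · intro w hw
    simp only [P, ContinuousMap.coe_mk, hcW w hw]
  · have h1 := e.app_eqv step1
    rw [step2] at h1
    refine h1.trans (step3.trans ?_)
    rw [step4]
    exact step5

end Clutch
end BottPer

namespace BottPer
open unitInterval Matrix
open scoped commutatorElement ComplexOrder

/-! ### Stable surjectivity of the Bott map -/

section Surj

variable {X : Type} [TopologicalSpace X]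
variable {ι κ lam : Type} [Fintype ι] [DecidableEq ι] [Fintype κ] [DecidableEq κ]
  [Fintype lam] [DecidableEq lam]

/-- The commutators of a family `g` with the loop `s ↦ 1 + (ζ - 1) P`. -/
noncomputable def comm (P : Matrix ι ι ℂ) (hP : P * P = P) (g : C(X, GLC ι)) : C(X × I, GLC ι) :=
  ⁅g.comp (ContinuousMap.fst : C(X × I, X)), (dC P hP).comp (ContinuousMap.snd : C(X × I, I))⁆

theorem comm_apply (P : Matrix ι ι ℂ) (hP : P * P = P) (g : C(X, GLC ι)) (p : X × I) :
    comm P hP g p = ⁅g p.1, ddU P hP (eU p.2)⁆ := rfl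

theorem bott_eq_comm (a : C(X, GLC ι)) : bott a = comm (pz ι) pz_mul (wh a) := rfl

/-- `P ⊕ 0`. -/
def up (κ : Type) (P : Matrix ι ι ℂ) : Matrix (ι ⊕ κ) (ι ⊕ κ) ℂ := fromBlocks P 0 0 0

theorem up_mul (P : Matrix ι ι ℂ) (hP : P * P = P) : up κ P * up κ P = up κ P := by
  simp [up, fromBlocks_multiply, hP]

theorem ddU_up (P : Matrix ι ι ℂ) (hP : P * P = P) (u : ℂˣ) :
    (Frame.inl (κ := κ)).ext (ddU P hP u) = ddU (up κ P) (up_mul P hP) u := by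
  apply Units.ext
  rw [Frame.ext_val, Frame.inl_extM]
  simp only [ddU, up]
  rw [fromBlocks_smul, ← fromBlocks_one, fromBlocks_add]
  simp

theorem comm_inl (P : Matrix ι ι ℂ) (hP : P * P = P) (g : C(X, GLC ι)) :
    (Frame.inl (κ := κ)).app (comm P hP g) = comm (up κ P) (up_mul P hP) (Frame.inl.app g) := by
  ext1 p
  simp only [Frame.app_apply, comm_apply, map_commutatorElement, ddU_up]

theorem commute_ddU {P : Matrix ι ι ℂ} (hP : P * P = P) {g : GLC ι} (h : Commute g.val P) (u : ℂˣ) :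
    Commute g (ddU P hP u) := by
  apply Units.ext
  exact ((Commute.one_right _).add_right (h.smul_right _)).eq

/-- Two-sided fixing of a matrix is closed under products. -/
def fixer (Q : Matrix ι ι ℂ) : Subgroup (GLC ι) where
  carrier := {g | g.val * Q = Q ∧ Q * g.val = Q}
  one_mem' := by simp
  mul_mem' := by
    rintro a b ⟨h1, h2⟩ ⟨h3, h4⟩
    exact ⟨by rw [Units.val_mul, mul_assoc, h3, h1], by rw [Units.val_mul, ← mul_assoc, h2, h4]⟩
  inv_mem' := by
    rintro a ⟨h1, h2⟩
    refine ⟨?_, ?_⟩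
    · conv_lhs => rw [← h1]
      simp
    · conv_lhs => rw [← h2]
      simp

theorem fixer_conj {Q : Matrix ι ι ℂ} {g a : GLC ι} (ha : a ∈ fixer Q) (hg : Commute g.val Q) :
    g * a * g⁻¹ ∈ fixer Q := by
  have hg' : Q * g⁻¹.val = g⁻¹.val * Q := (Commute.units_inv_left hg).eq.symm
  refine ⟨?_, ?_⟩
  · rw [Units.val_mul, Units.val_mul, mul_assoc, ← hg', mul_assoc, ← mul_assoc a.val, ha.1, ← mul_assoc,
      hg.eq, mul_assoc]
    simp
  · rw [Units.val_mul, Units.val_mul, ← mul_assoc, ← mul_assoc, ← hg.eq, mul_assoc g.val, ha.2, hg.eq,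
      mul_assoc]
    simp

/-- A right factor commuting with `B` drops out of the commutator with `B`. -/
theorem commutator_mul_left {G : Type} [Group G] {A B C : G} (h : Commute B C) :
    ⁅A * C, B⁆ = ⁅A, B⁆ := by
  have h1 : C * B * C⁻¹ = B := by rw [← h.eq]; group
  calc ⁅A * C, B⁆ = A * (C * B * C⁻¹) * A⁻¹ * B⁻¹ := by rw [commutatorElement_def]; group
    _ = ⁅A, B⁆ := by rw [h1, commutatorElement_def]

/-- The commutators with `1 + (ζ - 1) P` of a path that ends in the two-sided fixer of `P` are
stably null-homotopic. -/
theorem comm_nul {Y : Set X} (P : Matrix ι ι ℂ) (hP : P * P = P) (k : C(X × I, GLC ι))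
    (k0 : ∀ x, k (x, 0) = 1) (kY : ∀ y ∈ Y, ∀ t, k (y, t) = 1) (k1 : ∀ x, k (x, 1) ∈ fixer P) :
    (Frame.inl (κ := ι)).app (comm P hP k) ∈ Nul (bd (bd Y)) := by
  let K : C((X × I) × I, GLC (ι ⊕ ι)) := wh k
  have hfix : ∀ x (τ : I), K ((x, 1), τ) ∈ fixer (fromBlocks P 0 0 P) := by
    intro x τ
    have h1 : (Frame.inl (κ := ι)).ext (k (x, 1)) ∈ fixer (fromBlocks P 0 0 P) := by
      obtain ⟨h, h'⟩ := k1 x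
      constructor <;> simp [Frame.inl_extM, fromBlocks_multiply, h, h']
    have h2 : Commute (rot ι τ).val (fromBlocks P 0 0 P) := by
      simp [Commute, SemiconjBy, rot, sblk, fromBlocks_multiply]
    have h3 : K ((x, 1), τ) = Frame.inl.ext (k (x, 1)) *
        (rot ι τ * (Frame.inl.ext (k (x, 1)))⁻¹ * (rot ι τ)⁻¹) := by
      simp only [K, wh_apply, commutatorElement_def, mul_assoc]
    rw [h3]
    exact mul_mem h1 (fixer_conj (inv_mem h1) h2)
  have hcomm : ∀ x (τ : I), Commute (K ((x, 1), τ)).val (up ι P) := by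
    intro x τ
    obtain ⟨h1, h2⟩ := hfix x τ
    have e1 : fromBlocks P 0 0 P * up ι P = up ι P := by simp [up, fromBlocks_multiply, hP]
    have e2 : up ι P * fromBlocks P 0 0 P = up ι P := by simp [up, fromBlocks_multiply, hP]
    have e3 : (K ((x, 1), τ)).val * up ι P = up ι P := by rw [← e1, ← mul_assoc, h1]
    have e4 : up ι P * (K ((x, 1), τ)).val = up ι P := by rw [← e2, mul_assoc, h2]
    exact e3.trans e4.symm
  -- the homotopy rotates the second factor of `k ⊕ k⁻¹` back; the summand `1 ⊕ k⁻¹` commutes with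
  -- `1 + (ζ - 1) (P ⊕ 0)`
  refine ⟨(comm (up ι P) (up_mul P hP) K).comp ⟨fun p => ((p.2.1, p.1), p.2.2), by fun_prop⟩, ?_, ?_, ?_⟩
  · rintro ⟨⟨x, t⟩, s⟩
    simp [comm_apply, K, wh_apply, rot_zero]
  · rintro ⟨⟨x, t⟩, s⟩
    simp only [ContinuousMap.comp_apply, ContinuousMap.coe_mk, comm_apply, K, wh_apply,
      wh_one, Frame.app_apply, map_commutatorElement, ddU_up]
    rw [← ddU_up P hP]
    have h := Frame.commute_inl_inr (ddU P hP (eU s)) (k (x, t))⁻¹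
    exact commutator_mul_left h
  · rintro τ ⟨⟨x, t⟩, s⟩ h
    simp only [ContinuousMap.comp_apply, ContinuousMap.coe_mk, comm_apply]
    rcases h with (h | h | h) | h | h
    · simp [K, wh_apply, kY x h]
    · simp only at h; subst h; simp [K, wh_apply, k0]
    · simp only at h; subst h
      exact commutatorElement_eq_one_iff_commute.2 (commute_ddU _ (hcomm x τ) _)
    · simp only at h; subst h; simp
    · simp only at h; subst h; simp

theorem comm_mul (P : Matrix ι ι ℂ) (hP : P * P = P) (h k : C(X, GLC ι)) :
    comm P hP (h * k) = (h.comp ContinuousMap.fst) * comm P hP k * (h.comp ContinuousMap.fst)⁻¹ *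
      comm P hP h := by
  ext1 p
  simp only [comm_apply, ContinuousMap.mul_apply, ContinuousMap.inv_apply, ContinuousMap.comp_apply,
    commutatorElement_def]
  change _ = h p.1 * _ * (h p.1)⁻¹ * _
  group

/-- The commutators of a path, ending in the centralizer of `P`, are stably given by the Bott map. -/
theorem comm_SE {Y : Set X} (P : Matrix ι ι ℂ) (hP : P * P = P) (g : C(X × I, GLC ι))
    (g0 : ∀ x, g (x, 0) = 1) (gY : ∀ y ∈ Y, ∀ t, g (y, t) = 1)
    (g1 : ∀ x, Commute (g (x, 1)).val P) :
    ∃ (r : ℕ) (a : C(X, GLC (Fin r))), (∀ y ∈ Y, a y = 1) ∧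
      SE (bd (bd Y)) (comm P hP g) (bott a) := by
  obtain ⟨r, F, hF⟩ := exists_frame P hP
  have hVP : P * F.V = F.V := by rw [← hF, Matrix.mul_assoc, F.h, Matrix.mul_one]
  have hPV : F.V' * P = F.V' := by rw [← hF, ← Matrix.mul_assoc, F.h, Matrix.one_mul]
  have g1' : ∀ x, Commute (g (x, 1))⁻¹.val P := fun x => Commute.units_inv_left (g1 x)
  -- compression of the end point to the image of `P`
  have hmul : ∀ M N : Matrix ι ι ℂ, Commute M P → F.V' * M * F.V * (F.V' * N * F.V) = F.V' * (M * N) * F.V := by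
    intro M N h
    calc F.V' * M * F.V * (F.V' * N * F.V) = F.V' * (M * (F.V * F.V')) * N * F.V := by
          simp only [Matrix.mul_assoc]
      _ = F.V' * (M * N) * F.V := by
          rw [hF, h.eq, ← Matrix.mul_assoc, hPV]; simp only [Matrix.mul_assoc]
  have hcont : Continuous fun x => F.V' * (g (x, 1)).val * F.V := by
    have := (continuous_val g).comp (f := fun x : X => (x, (1 : I))) (by fun_prop)
    simp only [Function.comp_def] at this
    fun_prop
  let a : C(X, GLC (Fin r)) := mkGL (fun x => F.V' * (g (x, 1)).val * F.V) hcont (fun x =>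
    isUnit_of_mul_eq_one (B := F.V' * (g (x, 1))⁻¹.val * F.V) (by rw [hmul _ _ (g1 x)]; simp))
  have ha : ∀ x, (a x).val = F.V' * (g (x, 1)).val * F.V := fun x => rfl
  have ha' : ∀ x, (a x)⁻¹.val = F.V' * (g (x, 1))⁻¹.val * F.V := by
    intro x
    exact Units.inv_eq_of_mul_eq_one_right (by rw [ha, hmul _ _ (g1 x)]; simp)
  have haY : ∀ y ∈ Y, a y = 1 := fun y hy => Units.ext (by rw [ha, gY y hy]; simp)
  -- `E` embeds the source of the Bott map so that `P ⊕ 0` restricts to the projection `pz` on it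
  let V1 : Frame (Fin r) (ι ⊕ Fin r) := Frame.inl.comp F
  let J : Frame (Fin r) (ι ⊕ Fin r) := Frame.inr
  have hO : V1.Orth J := Frame.orth_inl_inr.comp_left F
  let E := V1.pair J hO
  let h : C(X × I, GLC (ι ⊕ Fin r)) := E.app (wh a)
  let g' : C(X × I, GLC (ι ⊕ Fin r)) := Frame.inl.app g
  let P' := up (Fin r) P
  have hP' : P' * P' = P' := up_mul P hP
  have hEV : P' * E.V = E.V * pz (Fin r) := by
    simp only [E, V1, J, Frame.pair, Frame.comp, Frame.inl, Frame.inr, P', up, pz, sblk,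
      Matrix.mul_fromCols, fromRows_mul, fromBlocks_mul_fromRows, fromCols_mul_fromBlocks]
    simp [hVP]
  have hEV' : E.V' * P' = pz (Fin r) * E.V' := by
    simp only [E, V1, J, Frame.pair, Frame.comp, Frame.inl, Frame.inr, P', up, pz, sblk,
      Matrix.mul_fromCols, fromRows_mul, fromBlocks_mul_fromRows, fromCols_mul_fromBlocks]
    simp [hPV]
  have hcomm : comm P' hP' h = E.app (bott a) := by
    ext1 p
    rw [Frame.app_apply, bott_eq_comm, comm_apply, comm_apply]
    refine Frame.ext_commutator E _ _ _ ?_ ?_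
    · simp only [ddU, Matrix.add_mul, Matrix.mul_add, Matrix.smul_mul, Matrix.mul_smul, hEV,
        Matrix.one_mul, Matrix.mul_one]
    · simp only [ddU, Matrix.add_mul, Matrix.mul_add, Matrix.smul_mul, Matrix.mul_smul, hEV',
        Matrix.one_mul, Matrix.mul_one]
  have h1 : ∀ x, h (x, 1) = V1.ext (a x) * J.ext (a x)⁻¹ := by
    intro x
    simp only [h, Frame.app_apply, wh_apply, wh_one, map_mul, E, Frame.pair_ext_inl, Frame.pair_ext_inr]
  -- `h` and `g ⊕ 1` have end points that agree on the image of `P`, so the end point of `k` fixes `P ⊕ 0`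
  let k := h⁻¹ * g'
  have hk : g' = h * k := by simp [k]
  have hnul : (Frame.inl (κ := ι ⊕ Fin r)).app (comm P' hP' k) ∈ Nul (bd (bd Y)) := by
    refine comm_nul P' hP' k ?_ ?_ ?_
    · intro x
      simp [k, h, g', wh_apply, rot_zero, g0]
    · intro y hy t
      simp [k, h, g', wh_apply, haY y hy, gY y hy]
    · intro x
      have hc1 : ∀ M : Matrix ι ι ℂ, Commute M P → F.extM (F.V' * M * F.V) * P = M * P := by
        intro M hM
        have e1 : F.V * (F.V' * M * F.V) * F.V' = P * M * P := by
          rw [← hF]; simp only [Matrix.mul_assoc]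
        rw [Frame.extM_apply, e1, hF, add_mul, sub_mul, one_mul, hP, sub_self, add_zero,
          mul_assoc, hP, ← hM.eq, mul_assoc, hP]
      have hc2 : ∀ M : Matrix ι ι ℂ, Commute M P → P * F.extM (F.V' * M * F.V) = P * M := by
        intro M hM
        have e1 : F.V * (F.V' * M * F.V) * F.V' = P * M * P := by
          rw [← hF]; simp only [Matrix.mul_assoc]
        rw [Frame.extM_apply, e1, hF, mul_add, mul_sub, mul_one, hP, sub_self, add_zero,
          ← mul_assoc, ← mul_assoc, hP, mul_assoc, hM.eq, ← mul_assoc, hP]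
      have e1 : (h (x, 1)).val * P' = (g' (x, 1)).val * P' := by
        rw [h1]
        simp only [V1, J, g', P', up, Frame.app_apply, Frame.comp_ext, Units.val_mul, Frame.ext_val,
          Frame.inl_extM, Frame.inr_extM, fromBlocks_multiply, ha]
        simp [hc1 _ (g1 x)]
      have e2 : P' * (h (x, 1))⁻¹.val = P' * (g' (x, 1))⁻¹.val := by
        have e3 : (h (x, 1))⁻¹ = J.ext (a x) * V1.ext (a x)⁻¹ := by
          rw [h1, _root_.mul_inv_rev, map_inv J.ext, inv_inv, map_inv V1.ext]
        have e4 : (g' (x, 1))⁻¹ = Frame.inl.ext (g (x, 1))⁻¹ := by simp [g']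
        rw [e3, e4]
        simp only [V1, J, P', up, Frame.comp_ext, Units.val_mul, Frame.ext_val,
          Frame.inl_extM, Frame.inr_extM, fromBlocks_multiply, ha']
        simp [-Matrix.coe_units_inv, hc2 _ (g1' x)]
      have e5 : k (x, 1) = (h (x, 1))⁻¹ * g' (x, 1) := rfl
      constructor
      · rw [e5, Units.val_mul, mul_assoc, ← e1, ← mul_assoc, Units.inv_mul, one_mul]
      · rw [e5, Units.val_mul, ← mul_assoc, e2, mul_assoc, Units.inv_mul, mul_one]
  refine ⟨r, a, haY, _, inferInstance, inferInstance, (Frame.inl (κ := ι ⊕ Fin r)).comp Frame.inl,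
    Frame.inl.comp E, ?_⟩
  rw [Frame.comp_app, Frame.comp_app, comm_inl, ← hcomm]
  change Eqv _ (Frame.inl.app (comm P' hP' g')) _
  rw [hk, comm_mul, map_mul, map_mul, map_mul]
  have h2 := eqv_one.2 ((inferInstance : (Nul (G := GLC ((ι ⊕ Fin r) ⊕ (ι ⊕ Fin r))) (bd (bd Y))).Normal).conj_mem
    _ hnul ((Frame.inl (κ := ι ⊕ Fin r)).app (h.comp ContinuousMap.fst)))
  have h4 := h2.mul (Eqv.refl _ ((Frame.inl (κ := ι ⊕ Fin r)).app (comm P' hP' h)))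
  rw [one_mul, ← map_inv] at h4
  exact h4

/-- Surjectivity of the Bott map up to stable homotopy. -/
theorem bott_surj [CompactSpace X] [Nonempty X] {Y : Set X} (F : C((X × I) × I, GLC ι))
    (hF : ∀ w ∈ bd (bd Y), F w = 1) :
    ∃ (r : ℕ) (a : C(X, GLC (Fin r))), (∀ y ∈ Y, a y = 1) ∧ SE (bd (bd Y)) F (bott a) := by
  obtain ⟨x₀⟩ := ‹Nonempty X›
  have hz : (x₀, (0 : I)) ∈ bd Y := Or.inr (Or.inl rfl)
  obtain ⟨l, i1, i2, e, P, hP, hPW, hE⟩ := clutch hz F hF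
  set P1 := P (x₀, 0) with hP1
  have hPP : P1 * P1 = P1 := hP _
  have hx0 : ∀ x, P (x, 0) = P1 := fun x => hPW _ (Or.inr (Or.inl rfl))
  have hx1 : ∀ x, P (x, 1) = P1 := fun x => hPW _ (Or.inr (Or.inr rfl))
  -- the idempotents are constant on the boundary, so `P = g P1 g⁻¹` for a path `g` starting at `1` and
  -- ending in the centralizer of `P1`
  obtain ⟨g, g0, g1, g2, -⟩ := exists_idem_lift P hP
  obtain ⟨r, a, ha, hS⟩ := comm_SE (Y := Y) P1 hPP g g0
    (fun y hy => g2 y fun t => by rw [hPW (y, t) (Or.inl hy), hx0])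
    (fun x => by have := g1 x 1; rwa [hx0, hx1] at this)
  refine ⟨r, a, ha, ?_⟩
  have key : Nm (x₀, (0 : I)) (DD P hP) = comm P1 hPP g := by
    ext1 ⟨⟨x, t⟩, s⟩
    have e1 : P (x, t) = (g (x, t)).val * P1 * (g (x, t))⁻¹.val := by
      rw [← hx0 x, g1 x t, mul_assoc, Units.mul_inv, mul_one]
    have e2 : ddU (P (x, t)) (hP _) (eU s) = g (x, t) * ddU P1 hPP (eU s) * (g (x, t))⁻¹ := by
      apply Units.ext
      simp [ddU, e1, mul_add, add_mul]
    rw [Nm_apply, comm_apply, commutatorElement_def]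
    simp only [DD_apply, eU_zero, ddU_one, e2, inv_one, mul_one]
    rfl
  rw [key] at hE
  obtain ⟨l', i1', i2', A, B, hAB⟩ := hS
  exact ⟨l', i1', i2', A.comp e, B, by rw [Frame.comp_app]; exact (A.app_eqv hE).trans hAB⟩

end Surj
end BottPer

namespace BottPer
open unitInterval Matrix
open scoped commutatorElement ComplexOrder Kronecker

/-! ### Stable injectivity of the Bott map -/

section Inj

variable {X : Type} [TopologicalSpace X]
variable {ι κ lam : Type} [Fintype ι] [DecidableEq ι] [Fintype κ] [DecidableEq κ]
  [Fintype lam] [DecidableEq lam]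

/-- The tensor product of a line `v` with a frame. -/
def Frame.tens (v v' : κ → ℂ) (h : v' ⬝ᵥ v = 1) (F : Frame ι lam) : Frame ι (κ × lam) where
  V := Matrix.of fun p j => v p.1 * F.V p.2 j
  V' := Matrix.of fun j p => v' p.1 * F.V' j p.2
  h := by
    ext i j
    rw [← F.h]
    simp only [Matrix.mul_apply, Matrix.of_apply, Fintype.sum_prod_type]
    rw [← one_mul (∑ x, F.V' i x * F.V x j), ← h, dotProduct, Finset.sum_mul_sum]
    refine Finset.sum_congr rfl fun k _ => Finset.sum_congr rfl fun l _ => ?_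
    ring

theorem Frame.tens_extM (v v' : κ → ℂ) (h : v' ⬝ᵥ v = 1) (F : Frame ι lam) (M : Matrix ι ι ℂ) :
    (F.tens v v' h).extM M = 1 + (vecMulVec v v') ⊗ₖ (F.extM M - 1) := by
  have key : ∀ N : Matrix ι ι ℂ, (F.tens v v' h).V * N * (F.tens v v' h).V' =
      (vecMulVec v v') ⊗ₖ (F.V * N * F.V') := by
    intro N
    ext p q
    simp only [Frame.tens, Matrix.mul_apply, Matrix.of_apply, Matrix.kroneckerMap_apply, vecMulVec,
      Finset.sum_mul, Finset.mul_sum]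
    refine Finset.sum_congr rfl fun k _ => Finset.sum_congr rfl fun l _ => ?_
    ring
  have key1 := key 1
  rw [Matrix.mul_one, Matrix.mul_one] at key1
  rw [Frame.extM_apply, Frame.extM_apply, key, key1]
  ext p q
  simp only [Matrix.add_apply, Matrix.sub_apply, Matrix.kroneckerMap_apply]
  ring

/-- Along `Im F ⊗ Im E`, with `F` of rank `r`, a family `a` contributes its `r`-th power stably. -/
theorem exists_power {Y : Set X} (E : Frame ι lam) (a : C(X, GLC ι)) (ha : ∀ y ∈ Y, a y = 1) :
    ∀ {r : ℕ} (F : Frame (Fin r) κ), ∃ f : C(X, GLC (κ × lam)),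
      (∀ x, (f x).val = 1 + (F.V * F.V') ⊗ₖ ((E.ext (a x)).val - 1)) ∧
      Eqv Y ((Frame.inl (κ := ι)).app f) ((Frame.inr (ι := κ × lam) (κ := ι)).app a ^ r) := by
  intro r
  induction r with
  | zero =>
    intro F
    refine ⟨1, fun x => ?_, ?_⟩
    · have : F.V * F.V' = 0 := by ext; simp [Matrix.mul_apply]
      simp [this]
    · rw [map_one, pow_zero]; exact Eqv.refl _ _
  | succ r ih =>
    intro F
    let F0 : Frame (Fin r) κ :=
      { V := F.V.submatrix id Fin.castSucc
        V' := F.V'.submatrix Fin.castSucc id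
        h := by
          rw [← Matrix.submatrix_mul _ _ _ _ _ Function.bijective_id, F.h,
            Matrix.submatrix_one _ (Fin.castSucc_injective r)] }
    let v : κ → ℂ := fun k => F.V k (Fin.last r)
    let v' : κ → ℂ := fun k => F.V' (Fin.last r) k
    have hh : ∀ i j, ∑ k, F.V' i k * F.V k j = if i = j then 1 else 0 := by
      intro i j
      have := congrFun (congrFun F.h i) j
      rwa [Matrix.mul_apply, Matrix.one_apply] at this
    have hv : v' ⬝ᵥ v = 1 := by
      have := hh (Fin.last r) (Fin.last r)
      simpa [dotProduct, v, v'] using this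
    obtain ⟨f, hf, hfe⟩ := ih F0
    have hs : F.V * F.V' = F0.V * F0.V' + vecMulVec v v' := by
      ext p q
      simp [Matrix.mul_apply, Fin.sum_univ_castSucc, F0, v, v', vecMulVec]
    have ho : F0.V * F0.V' * vecMulVec v v' = 0 := by
      rw [Matrix.mul_assoc]
      have : F0.V' * vecMulVec v v' = 0 := by
        ext i q
        simp only [Matrix.mul_apply, vecMulVec, Matrix.of_apply, F0, v, v', Matrix.submatrix_apply, id,
          ← mul_assoc, ← Finset.sum_mul, hh, (Fin.castSucc_lt_last i).ne]
        simp
      rw [this, Matrix.mul_zero]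
    refine ⟨f * (E.tens v v' hv).app a, fun x => ?_, ?_⟩
    · rw [ContinuousMap.mul_apply, Units.val_mul, hf, Frame.app_apply, Frame.ext_val (E.tens v v' hv), Frame.tens_extM, hs,
        ← Frame.ext_val, Matrix.add_kronecker]
      rw [mul_add, mul_one, add_mul, one_mul, ← Matrix.mul_kronecker_mul, ho, Matrix.zero_kronecker,
        add_zero, add_assoc]
    · rw [map_mul, pow_succ]
      refine hfe.mul ?_
      rw [← Frame.comp_app]
      exact eqv_of_orth a ha (Frame.orth_inl_inr.comp_left _)

/-- If `g` commutes with `Q`, restricting `g` to the image of `Q` and extending by the identity on the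
kernel gives an invertible matrix. -/
theorem cut_isUnit {Q : Matrix ι ι ℂ} (hQ : Q * Q = Q) {g : GLC ι} (h : Commute g.val Q) :
    IsUnit (g.val * Q + (1 - Q)) := by
  refine isUnit_of_mul_eq_one (B := g⁻¹.val * Q + (1 - Q)) ?_
  have h1 : g.val * Q * (g⁻¹.val * Q) = Q := by
    rw [h.eq, mul_assoc, ← mul_assoc g.val, Units.mul_inv, one_mul, hQ]
  have h2 : g.val * Q * (1 - Q) = 0 := by rw [mul_assoc, mul_sub, hQ]; simp
  have h3 : (1 - Q) * (g⁻¹.val * Q) = 0 := by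
    rw [(Commute.units_inv_left h).eq, ← mul_assoc, sub_mul, hQ]; simp
  have h4 : (1 - Q) * (1 - Q) = 1 - Q := by rw [mul_sub, sub_mul, sub_mul, hQ]; simp
  rw [mul_add, add_mul, add_mul, h1, h2, h3, h4]
  simp

theorem isUnit_smul_ee {x : ℝ} {M : Matrix ι ι ℂ} (h : IsUnit M) : IsUnit (ee x • M) := by
  rw [Matrix.isUnit_iff_isUnit_det] at h ⊢
  rw [Matrix.det_smul]
  exact ((Units.mk0 _ (ee_ne x)).isUnit.pow _).mul h

theorem ev_line {d : ℕ} (a b : Fin (d + 1) → Matrix ι ι ℂ) (t z : ℂ) :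
    ev (a + t • (b - a)) z = ev a z + t • (ev b z - ev a z) := by
  simp only [ev, Finset.smul_sum, ← Finset.sum_sub_distrib, ← Finset.sum_add_distrib]
  refine Finset.sum_congr rfl fun k _ => ?_
  simp only [Pi.add_apply, Pi.smul_apply, Pi.sub_apply, smul_add, smul_sub, smul_comm t]

/-- The coefficients of `z ^ m (1 - P + z P)`. -/
noncomputable def dco (m : ℕ) (hm : 1 ≤ m) (P : Matrix ι ι ℂ) : Fin (2 * m + 1) → Matrix ι ι ℂ :=
  fun l => (Pi.single ⟨m + 1, by omega⟩ P : Fin (2 * m + 1) → Matrix ι ι ℂ) l +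
    (Pi.single ⟨m, by omega⟩ (1 - P) : Fin (2 * m + 1) → Matrix ι ι ℂ) l

theorem dco_continuous (m : ℕ) (hm : 1 ≤ m) : Continuous (dco (ι := ι) m hm) := by
  unfold dco
  refine continuous_pi fun l => ?_
  simp only [Pi.single_apply]
  split_ifs <;> fun_prop

theorem ev_dco (m : ℕ) (hm : 1 ≤ m) (P : Matrix ι ι ℂ) (s : ℝ) :
    ev (dco m hm P) (ee s) = ee (m * s) • (1 + (ee s - 1) • P) := by
  have e : dco m hm P = (Pi.single ⟨m + 1, by omega⟩ P : Fin (2 * m + 1) → Matrix ι ι ℂ) +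
    (Pi.single ⟨m, by omega⟩ (1 - P) : Fin (2 * m + 1) → Matrix ι ι ℂ) := rfl
  have h1 : ev (dco m hm P) (ee s) = ev (Pi.single (⟨m + 1, by omega⟩ : Fin (2 * m + 1)) P) (ee s) +
      ev (Pi.single (⟨m, by omega⟩ : Fin (2 * m + 1)) (1 - P)) (ee s) := by
    rw [e]; simp only [ev, Pi.add_apply, smul_add, Finset.sum_add_distrib]
  rw [h1, ev_single, ev_single]
  simp only [pow_succ, ee_pow]
  simp only [smul_add, smul_sub, sub_smul, one_smul, smul_smul, mul_comm]
  abel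

theorem pm_idem (d : ℕ) (k : Fin (d + 1)) :
    (Pm d k).submatrix (fun k => (k, ())) (fun k => (k, ())) *
      (Pm d k).submatrix (fun k => (k, ())) (fun k => (k, ())) =
      (Pm d k).submatrix (fun k => (k, ())) (fun k => (k, ())) := by
  have h : Function.Bijective (fun k : Fin (d + 1) => (k, ())) := (Equiv.prodPUnit _).symm.bijective
  rw [← Matrix.submatrix_mul _ _ _ _ _ h]
  congr 1
  exact QQ_idem (mono_mem k)

theorem pm_trace (d : ℕ) (k : Fin (d + 1)) :
    ((Pm d k).submatrix (fun k => (k, ())) (fun k => (k, ()))).trace = k.val := by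
  rw [← trace_Pm d k]
  simp [Matrix.trace, Fintype.sum_prod_type]

/-- Restricting `1 ⊗ (M ⊕ N)` to the image of the idempotent `R1 ⊗ (1 ⊕ 0) + R0 ⊗ (0 ⊕ 1)`. -/
theorem cut_eq (R1 R0 : Matrix κ κ ℂ) (M N : Matrix ι ι ℂ) :
    (1 : Matrix κ κ ℂ) ⊗ₖ (fromBlocks M 0 0 1 * fromBlocks 1 0 0 N) *
        (R1 ⊗ₖ pz ι + R0 ⊗ₖ (1 - pz ι)) + (1 - (R1 ⊗ₖ pz ι + R0 ⊗ₖ (1 - pz ι))) =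
      (1 + R1 ⊗ₖ (fromBlocks M 0 0 1 - 1)) * (1 + R0 ⊗ₖ (fromBlocks 1 0 0 N - 1)) := by
  have e0 : (fromBlocks M 0 0 1 - 1 : Matrix (ι ⊕ ι) (ι ⊕ ι) ℂ) = fromBlocks (M - 1) 0 0 0 := by
    rw [sub_eq_iff_eq_add, ← fromBlocks_one, fromBlocks_add]; simp
  have e0' : (fromBlocks 1 0 0 N - 1 : Matrix (ι ⊕ ι) (ι ⊕ ι) ℂ) = fromBlocks 0 0 0 (N - 1) := by
    rw [sub_eq_iff_eq_add, ← fromBlocks_one, fromBlocks_add]; simp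
  have e1 : (1 - pz ι : Matrix (ι ⊕ ι) (ι ⊕ ι) ℂ) = fromBlocks 0 0 0 1 := by
    rw [sub_eq_iff_eq_add, ← fromBlocks_one, pz, sblk, fromBlocks_add]; simp
  have e2 : pz ι = fromBlocks 1 0 0 0 := by simp [pz, sblk]
  have e4 : (fromBlocks M 0 0 0 : Matrix (ι ⊕ ι) (ι ⊕ ι) ℂ) =
      fromBlocks (M - 1) 0 0 0 + fromBlocks 1 0 0 0 := by rw [fromBlocks_add]; simp
  have e5 : (fromBlocks 0 0 0 N : Matrix (ι ⊕ ι) (ι ⊕ ι) ℂ) =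
      fromBlocks 0 0 0 (N - 1) + fromBlocks 0 0 0 1 := by rw [fromBlocks_add]; simp
  rw [e0, e0', e1, e2]
  simp only [mul_add, add_mul, ← Matrix.mul_kronecker_mul, fromBlocks_multiply, one_mul, mul_one, mul_zero,
    zero_mul, add_zero, zero_add, fromBlocks_zero, Matrix.kronecker_zero, Matrix.mul_zero, Matrix.zero_mul,
    Matrix.mul_one, Matrix.one_mul]
  rw [e4, e5, Matrix.kronecker_add, Matrix.kronecker_add]
  abel

set_option maxHeartbeats 2000000 in
/-- The kernel of the Bott map is stably trivial: the null-homotopy of `bott a` is turned into a homotopy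
of families of idempotents. Transport around the `t`-loop in these families gives a null-homotopy of
`a ^ (m + 1) * a ^ (-m)`, stably. -/
theorem bott_inj [CompactSpace X] [Nonempty X] {Y : Set X} (a : C(X, GLC κ)) (ha : ∀ y ∈ Y, a y = 1)
    (hb : bott a ∈ Nul (bd (bd Y))) :
    ∃ (lam : Type) (_ : Fintype lam) (_ : DecidableEq lam),
      (Frame.inr (ι := lam) (κ := κ)).app a ∈ Nul Y := by
  obtain ⟨x₀⟩ := ‹Nonempty X›
  obtain ⟨H, H0, H1, HW⟩ := hb
  let U : I → GLC (κ ⊕ κ) := fun s => ddU (pz κ) pz_mul (eU s)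
  have hU : Continuous U := (dC (pz κ) pz_mul).continuous
  -- multiplied by the constant loop `U`, the null-homotopy is a homotopy from `U` to the loops
  -- `1 + (ζ - 1) Pa`, where `Pa` is the projection `pz` conjugated by `wh a`
  let F : C((I × (X × I)) × I, GLC (κ ⊕ κ)) :=
    ⟨fun p => H (p.1.1, (p.1.2, p.2)) * U p.2, by fun_prop⟩
  have hF : ∀ τ z s, F ((τ, z), s) = H (τ, (z, s)) * U s := fun _ _ _ => rfl
  let Pa : X × I → Matrix (κ ⊕ κ) (κ ⊕ κ) ℂ := fun z => (wh a z).val * pz κ * (wh a z)⁻¹.val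
  have hPc : Continuous Pa := by
    have h1 := continuous_val (wh a)
    have h2 := continuous_inv_val (wh a)
    fun_prop
  have hPP : ∀ z, Pa z * Pa z = Pa z := by
    intro z
    calc Pa z * Pa z = (wh a z).val * (pz κ * ((wh a z)⁻¹.val * (wh a z).val) * pz κ) * (wh a z)⁻¹.val := by
          simp only [Pa, mul_assoc]
      _ = Pa z := by rw [Units.inv_mul, mul_one, pz_mul]
  have hF1 : ∀ z (s : I), (F ((1, z), s)).val = 1 + (ee s - 1) • Pa z := by
    intro z s
    have e1 : F ((1, z), s) = wh a z * U s * (wh a z)⁻¹ := by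
      rw [hF, H1]
      change ⁅wh a z, U s⁆ * U s = _
      rw [commutatorElement_def]; group
    rw [e1, ← ddU_conj _ _ _ _ (hPP z)]
    rfl
  have hF0 : ∀ z s, F ((0, z), s) = U s := by intro z s; rw [hF, H0, one_mul]
  have hFW : ∀ τ, ∀ z ∈ bd Y, ∀ s, F ((τ, z), s) = U s := by
    intro τ z hz s; rw [hF, HW τ (z, s) (Or.inl hz), one_mul]
  have hwh0 : ∀ x, wh a (x, 0) = 1 := fun x => by simp [wh_apply, rot_zero]
  have hwhY : ∀ y ∈ Y, ∀ t, wh a (y, t) = 1 := fun y hy t => by simp [wh_apply, ha y hy]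
  have hPaW : ∀ z ∈ bd Y, Pa z = pz κ := by
    rintro ⟨x, t⟩ (h | h | h)
    · simp [Pa, hwhY x h]
    · simp only at h; subst h; simp [Pa, hwh0]
    · simp only at h; subst h
      have h1 : Commute (wh a (x, 1)).val (pz κ) := by
        rw [wh_apply, wh_one, Units.val_mul, Frame.ext_val, Frame.ext_val, Frame.inl_extM, Frame.inr_extM]
        simp [Commute, SemiconjBy, pz, sblk, fromBlocks_multiply]
      simp only [Pa]
      rw [h1.eq, mul_assoc, Units.mul_inv, mul_one]
  have hU0 : U 0 = 1 := by simp [U]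
  have hU1 : U 1 = 1 := by simp [U]
  obtain ⟨m, c, hm, hcw, hKu⟩ := exists_laurent_unit F (by
    rintro ⟨τ, z⟩
    rw [hF, hF, HW τ (z, 0) (Or.inr (Or.inl rfl)), HW τ (z, 1) (Or.inr (Or.inr rfl)), hU0, hU1])
  -- follow the homotopy on `[0, 1/2]`, then join the approximation to the exact Laurent loop
  let sg : I → I := fun τ => Set.projIcc 0 1 zero_le_one (2 * (τ : ℝ))
  let θ : I → I := fun τ => Set.projIcc 0 1 zero_le_one (2 * (τ : ℝ) - 1)
  have hsg : Continuous sg := continuous_projIcc.comp (by fun_prop)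
  have hθ : Continuous θ := continuous_projIcc.comp (by fun_prop)
  have hsg0 : sg 0 = 0 := by apply Subtype.ext; simp [sg, Set.projIcc]
  have hθ0 : θ 0 = 0 := by apply Subtype.ext; simp [θ, Set.projIcc]
  have hθ1 : θ 1 = 1 := by apply Subtype.ext; simp [θ, Set.projIcc]; norm_num
  have hsgθ : ∀ τ, θ τ ≠ 0 → sg τ = 1 := by
    intro τ h
    have h1 : 1 / 2 < (τ : ℝ) := by
      by_contra h'
      exact h (Set.projIcc_of_le_left _ (by linarith))
    exact Set.projIcc_of_right_le _ (by linarith)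
  have hsg1 : sg 1 = 1 := hsgθ 1 (by rw [hθ1]; exact one_ne_zero)
  let cc : I × (X × I) → Fin (2 * m + 1) → Matrix (κ ⊕ κ) (κ ⊕ κ) ℂ := fun p =>
    c (sg p.1, p.2) + ((θ p.1 : ℝ) : ℂ) • (dco m hm (Pa p.2) - c (sg p.1, p.2))
  have hccc : Continuous cc := by
    have h1 : Continuous fun p : I × (X × I) => dco m hm (Pa p.2) :=
      (dco_continuous m hm).comp (hPc.comp continuous_snd)
    have h2 : Continuous fun p : I × (X × I) => ((θ p.1 : ℝ) : ℂ) :=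
      Complex.continuous_ofReal.comp (continuous_subtype_val.comp (hθ.comp continuous_fst))
    fun_prop
  have hmem : ∀ p, cc p ∈ Us _ _ := by
    rintro ⟨τ, z⟩
    refine isUnit_ee (f := ev (cc (τ, z))) fun s => ?_
    by_cases h : θ τ = 0
    · have h1 := hKu ((sg τ, z), s) 1
      have h2 : ev (cc (τ, z)) (ee s) = ee (m * s) • (ee (-(m * s)) • ev (c (sg τ, z)) (ee s)) := by
        simp [cc, h, smul_smul, ← ee_add]
      rw [h2]
      exact isUnit_smul_ee (by simpa using h1)
    · have h1 := hKu ((1, z), s) (unitInterval.symm (θ τ))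
      have h2 : ev (cc (τ, z)) (ee s) = ee (m * s) • ((F ((1, z), s)).val +
          ((unitInterval.symm (θ τ) : ℝ) : ℂ) •
            (ee (-(m * s)) • ev (c (1, z)) (ee s) - (F ((1, z), s)).val)) := by
        simp only [cc, hsgθ τ h]
        rw [ev_line, ev_dco, hF1]
        have e1 : ∀ M : Matrix (κ ⊕ κ) (κ ⊕ κ) ℂ, ee (m * s) • (ee (-(m * s)) • M) = M := by
          intro M; rw [smul_smul, ← ee_add]; simp
        have e2 : ((unitInterval.symm (θ τ) : ℝ) : ℂ) = 1 - ((θ τ : ℝ) : ℂ) := by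
          rw [unitInterval.coe_symm_eq]; push_cast; rfl
        generalize (1 : Matrix (κ ⊕ κ) (κ ⊕ κ) ℂ) + (ee s - 1) • Pa z = B
        rw [e2]
        nth_rewrite 1 2 [← e1 (ev (c (1, z)) (ee s))]
        module
      rw [h2]
      exact isUnit_smul_ee h1
  have hccW : ∀ τ, ∀ z ∈ bd Y, ∀ z' ∈ bd Y, cc (τ, z) = cc (τ, z') := by
    intro τ z hz z' hz'
    have h1 : c (sg τ, z) = c (sg τ, z') := hcw _ _ fun s => by rw [hFW _ _ hz, hFW _ _ hz']
    simp only [cc, h1, hPaW z hz, hPaW z' hz']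
  have hcc0 : ∀ z z', cc (0, z) = cc (0, z') := by
    intro z z'
    have h1 : c (0, z) = c (0, z') := hcw _ _ fun s => by rw [hF0, hF0]
    simp [cc, hsg0, hθ0, h1]
  have hcc1 : ∀ z, cc (1, z) = dco m hm (Pa z) := by
    intro z; simp [cc, hθ1]
  have hQc : Continuous fun p => QQ (cc p) :=
    QQ_continuous.comp (f := fun p => (⟨cc p, hmem p⟩ : Us _ _)) (hccc.subtype_mk _)
  -- a homotopy `τ` of loops, based at `x`, of idempotents; the loops are constant for `τ = 0`
  let q : C((I × X) × I, Matrix (Fin (2 * m + 1) × (κ ⊕ κ)) (Fin (2 * m + 1) × (κ ⊕ κ)) ℂ) :=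
    ⟨fun p => QQ (cc (p.1.1, (p.1.2, p.2))), hQc.comp (by fun_prop)⟩
  have hq : ∀ τ x t, q ((τ, x), t) = QQ (cc (τ, (x, t))) := fun _ _ _ => rfl
  have hqi : ∀ p, q p * q p = q p := fun p => QQ_idem (hmem _)
  have hb0 : ∀ x : X, (x, (0 : I)) ∈ bd Y := fun x => Or.inr (Or.inl rfl)
  have hb1 : ∀ x : X, (x, (1 : I)) ∈ bd Y := fun x => Or.inr (Or.inr rfl)
  have hqx : ∀ τ x, q ((τ, x), 0) = q ((τ, x₀), 0) := fun τ x => by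
    rw [hq, hq, hccW τ _ (hb0 x) _ (hb0 x₀)]
  have hqx1 : ∀ τ x, q ((τ, x), 1) = q ((τ, x₀), 0) := fun τ x => by
    rw [hq, hq, hccW τ _ (hb1 x) _ (hb0 x₀)]
  obtain ⟨g, g0, g1, g2, -⟩ := exists_idem_lift q hqi
  -- `d τ` identifies the base idempotent at time `1` with that at time `τ`
  let q0 : C(Unit × I, Matrix (Fin (2 * m + 1) × (κ ⊕ κ)) (Fin (2 * m + 1) × (κ ⊕ κ)) ℂ) :=
    ⟨fun p => q ((p.2, x₀), 0), by fun_prop⟩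
  obtain ⟨b, b0, b1, -, -⟩ := exists_idem_lift q0 (fun p => hqi _)
  set Q := q ((1, x₀), 0) with hQ
  have hQQ : Q * Q = Q := hqi _
  let d : C(I, GLC (Fin (2 * m + 1) × (κ ⊕ κ))) := ⟨fun τ => b ((), τ) * (b ((), 1))⁻¹, by fun_prop⟩
  have hd1 : d 1 = 1 := by simp [d]
  have hd : ∀ τ, (d τ).val * Q = q ((τ, x₀), 0) * (d τ).val := by
    intro τ
    have e1 : (b ((), 1)).val * q ((0, x₀), 0) = Q * (b ((), 1)).val := b1 () 1
    have e2 : (b ((), τ)).val * q ((0, x₀), 0) = q ((τ, x₀), 0) * (b ((), τ)).val := b1 () τ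
    have e3 : (b ((), 1))⁻¹.val * Q = q ((0, x₀), 0) * (b ((), 1))⁻¹.val := by
      calc (b ((), 1))⁻¹.val * Q = (b ((), 1))⁻¹.val * (Q * (b ((), 1)).val) * (b ((), 1))⁻¹.val := by
            rw [mul_assoc, mul_assoc, Units.mul_inv, mul_one]
        _ = _ := by rw [← e1, ← mul_assoc, Units.inv_mul, one_mul]
    calc (d τ).val * Q = (b ((), τ)).val * ((b ((), 1))⁻¹.val * Q) := by
          rw [← mul_assoc]; rfl
      _ = _ := by rw [e3, ← mul_assoc, e2, mul_assoc]; rfl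
  have hd' : ∀ τ, (d τ)⁻¹.val * q ((τ, x₀), 0) = Q * (d τ)⁻¹.val := by
    intro τ
    calc (d τ)⁻¹.val * q ((τ, x₀), 0) = (d τ)⁻¹.val * (q ((τ, x₀), 0) * (d τ).val) * (d τ)⁻¹.val := by
          rw [mul_assoc, mul_assoc, Units.mul_inv, mul_one]
      _ = _ := by rw [← hd, ← mul_assoc, Units.inv_mul, one_mul]
  -- at the end of the homotopy, `1 ⊗ wh a` is an explicit conjugating family
  let gh : C(X × I, GLC (Fin (2 * m + 1) × (κ ⊕ κ))) :=
    mkGL (fun z => (1 : Matrix (Fin (2 * m + 1)) (Fin (2 * m + 1)) ℂ) ⊗ₖ (wh a z).val)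
      (by
        have h1 := continuous_val (wh a)
        refine continuous_matrix fun i j => ?_
        simp only [Matrix.kroneckerMap_apply]
        fun_prop)
      (fun z => isUnit_of_mul_eq_one (B := 1 ⊗ₖ (wh a z)⁻¹.val) (by
        rw [← Matrix.mul_kronecker_mul, Units.mul_inv, one_mul, Matrix.one_kronecker_one]))
  have hgh : ∀ z, (gh z).val = (1 : Matrix (Fin (2 * m + 1)) (Fin (2 * m + 1)) ℂ) ⊗ₖ (wh a z).val := fun z => rfl
  have hgh1 : ∀ z, wh a z = 1 → gh z = 1 := by
    intro z h; apply Units.ext; rw [hgh, h]; simp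
  let k1 : Fin (2 * m + 1) := ⟨m + 1, by omega⟩
  let k0 : Fin (2 * m + 1) := ⟨m, by omega⟩
  let R1 := (Pm (2 * m) k1).submatrix (fun k => (k, ())) (fun k => (k, ()))
  let R0 := (Pm (2 * m) k0).submatrix (fun k => (k, ())) (fun k => (k, ()))
  have hq1 : ∀ x t, q ((1, x), t) = R1 ⊗ₖ Pa (x, t) + R0 ⊗ₖ (1 - Pa (x, t)) := by
    intro x t
    rw [hq, hcc1, ← kronAlg_apply _ (hPP (x, t))]
    exact (QQ_kron (Pa (x, t)) (hPP (x, t)) k1 k0).2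
  have hQR : Q = R1 ⊗ₖ pz κ + R0 ⊗ₖ (1 - pz κ) := by rw [hQ, hq1, hPaW _ (hb0 x₀)]
  have hconj : ∀ x t, q ((1, x), t) * (gh (x, t)).val = (gh (x, t)).val * Q := by
    intro x t
    have e1 : Pa (x, t) * (wh a (x, t)).val = (wh a (x, t)).val * pz κ := by
      simp only [Pa]; rw [mul_assoc, Units.inv_mul, mul_one]
    rw [hq1, hQR, hgh, add_mul, mul_add]
    simp only [← Matrix.mul_kronecker_mul, one_mul, mul_one, sub_mul, mul_sub, e1]
  have hconj' : ∀ x t, (gh (x, t))⁻¹.val * q ((1, x), t) = Q * (gh (x, t))⁻¹.val := by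
    intro x t
    calc (gh (x, t))⁻¹.val * q ((1, x), t) =
        (gh (x, t))⁻¹.val * (q ((1, x), t) * (gh (x, t)).val) * (gh (x, t))⁻¹.val := by
          rw [mul_assoc, mul_assoc, Units.mul_inv, mul_one]
      _ = _ := by rw [hconj, ← mul_assoc, Units.inv_mul, one_mul]
  -- the transport around the `t`-loop at time `τ`, moved to the base idempotent `Q`; the last factor
  -- replaces the transport `g` at `τ = 1` by the explicit one, and is `1` at `τ = 0`
  let n : C(I × X, GLC (Fin (2 * m + 1) × (κ ⊕ κ))) :=
    ⟨fun p => (d p.1)⁻¹ * g ((p.1, p.2), 1) * d p.1 *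
      ((gh (p.2, p.1))⁻¹ * g ((1, p.2), p.1))⁻¹, by fun_prop⟩
  have hn : ∀ τ x, n (τ, x) = (d τ)⁻¹ * g ((τ, x), 1) * d τ * ((gh (x, τ))⁻¹ * g ((1, x), τ))⁻¹ :=
    fun _ _ => rfl
  have hnQ : ∀ p, Commute (n p).val Q := by
    rintro ⟨τ, x⟩
    have c1 : Commute ((d τ)⁻¹ * g ((τ, x), 1) * d τ).val Q := by
      have e := g1 (τ, x) 1
      rw [hqx, hqx1] at e
      simp only [Commute, SemiconjBy, Units.val_mul]
      rw [mul_assoc, hd, ← mul_assoc, mul_assoc _ (g _).val, e, ← mul_assoc, hd']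
      simp only [mul_assoc]
    have c2 : Commute ((gh (x, τ))⁻¹ * g ((1, x), τ)).val Q := by
      have e := g1 (1, x) τ
      rw [hqx] at e
      simp only [Commute, SemiconjBy, Units.val_mul]
      rw [mul_assoc, e, ← mul_assoc, hconj', mul_assoc]
    rw [hn, Units.val_mul]
    exact c1.mul_left (Commute.units_inv_left c2)
  have hn0 : ∀ x, n (0, x) = 1 := by
    intro x
    have e1 : g ((0, x), 1) = 1 := g2 (0, x) (fun t => by rw [hq, hq, hcc0]) 1
    rw [hn, e1, g0, hgh1 _ (hwh0 x)]
    simp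
  have hnY : ∀ τ, ∀ y ∈ Y, n (τ, y) = 1 := by
    intro τ y hy
    have e1 : ∀ τ t, g ((τ, y), t) = 1 := fun τ => g2 (τ, y) (fun t => by
      rw [hq, hq, hccW τ (y, t) (Or.inl hy) (y, 0) (hb0 y)])
    rw [hn, e1, e1, hgh1 _ (hwhY y hy τ)]
    simp
  have hn1 : ∀ x, n (1, x) = gh (x, 1) := by
    intro x
    rw [hn, hd1]; group
  -- the restriction of `n` to the image of `Q`
  let K : C(I × X, GLC (Fin (2 * m + 1) × (κ ⊕ κ))) := mkGL (fun p => (n p).val * Q + (1 - Q))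
    (by have := continuous_val n; fun_prop) (fun p => cut_isUnit hQQ (hnQ p))
  -- `Q` is the sum of `R1 ⊗ (1 ⊕ 0)` and `R0 ⊗ (0 ⊕ 1)`, where `R1` and `R0` have ranks `m + 1` and `m`
  have hfr : ∀ k, ∃ F : Frame (Fin k.val) (Fin (2 * m + 1)),
      F.V * F.V' = (Pm (2 * m) k).submatrix (fun k => (k, ())) (fun k => (k, ())) := by
    intro k
    obtain ⟨r, F, h⟩ := exists_frame _ (pm_idem (2 * m) k)
    have h1 := frame_rank F
    rw [h, pm_trace] at h1
    have h2 : k.val = r := by exact_mod_cast h1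
    rw [h2]
    exact ⟨F, h⟩
  obtain ⟨F1, hF1⟩ := hfr k1
  obtain ⟨F0, hF0⟩ := hfr k0
  obtain ⟨f1, hf1, hf1e⟩ := exists_power (Frame.inl (ι := κ) (κ := κ)) a ha F1
  obtain ⟨f0, hf0, hf0e⟩ := exists_power (Frame.inr (ι := κ) (κ := κ)) a⁻¹
    (fun y hy => by rw [ContinuousMap.inv_apply, ha y hy, inv_one]) F0
  have hK1 : ∀ x, K (1, x) = (f1 * f0) x := by
    intro x
    apply Units.ext
    change (n (1, x)).val * Q + (1 - Q) = _
    rw [hn1, hgh, wh_apply, wh_one, ContinuousMap.mul_apply, Units.val_mul, Units.val_mul, hf1, hf0, hF1, hF0, hQR,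
      ContinuousMap.inv_apply]
    change _ = (1 + R1 ⊗ₖ _) * (1 + R0 ⊗ₖ _)
    rw [Frame.ext_val, Frame.ext_val, Frame.inl_extM, Frame.inr_extM]
    exact cut_eq R1 R0 _ _
  have hnul : f1 * f0 ∈ Nul Y := by
    refine ⟨K, fun x => ?_, hK1, fun τ y hy => ?_⟩
    · apply Units.ext
      change (n (0, x)).val * Q + (1 - Q) = 1
      rw [hn0]; simp
    · apply Units.ext
      change (n (τ, y)).val * Q + (1 - Q) = 1
      rw [hnY τ y hy]; simp
  refine ⟨_, inferInstance, inferInstance, (Eqv.mem_iff ?_).1 (Frame.app_nul (Frame.inl (κ := κ)) hnul)⟩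
  have h := hf1e.mul hf0e
  rw [← map_mul] at h
  -- `a ^ (m + 1) * a ^ (-m) = a`
  have e : (Frame.inr (ι := Fin (2 * m + 1) × (κ ⊕ κ)) (κ := κ)).app a ^ k1.val *
      (Frame.inr (ι := Fin (2 * m + 1) × (κ ⊕ κ)) (κ := κ)).app a⁻¹ ^ k0.val =
      (Frame.inr (ι := Fin (2 * m + 1) × (κ ⊕ κ)) (κ := κ)).app a := by
    rw [map_inv, inv_pow]
    simp only [k1, k0, pow_succ']
    rw [mul_assoc, mul_inv_cancel, mul_one]
  rw [e] at h
  exact h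

end Inj
end BottPer

namespace BottPer
open unitInterval Matrix
open scoped commutatorElement ComplexOrder

/-! ### Contracting families of nonzero vectors -/

section Stab
variable {ι κ lam : Type} [Fintype ι] [DecidableEq ι] [Fintype κ] [DecidableEq κ]
  [Fintype lam] [DecidableEq lam]

/-- If no segment from `a x` to `b x` contains `0`, then `a` is moved to `b` by a path of invertible
matrices, which at `x` depends only on the end points `a x` and `b x`. -/
theorem exists_segment_lift {V : Type*} [TopologicalSpace V] [CompactSpace V]
    (a b : C(V, κ → ℂ)) (h : ∀ x, ∀ t : I, (1 - (t : ℝ)) • a x + (t : ℝ) • b x ≠ 0) :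
    ∃ g : C(V × I, GLC κ), (∀ x, g (x, 0) = 1) ∧ (∀ x, (g (x, 1)).val *ᵥ a x = b x) ∧
      ∀ x x', a x = a x' → b x = b x' → ∀ t, g (x, t) = g (x', t) := by
  obtain ⟨g, g0, g1, -, g3⟩ := exists_vec_lift (V := V) (κ := κ)
    ⟨fun p => (1 - (p.2 : ℝ)) • a p.1 + (p.2 : ℝ) • b p.1, by fun_prop⟩ (fun p => h p.1 p.2)
  refine ⟨g, g0, fun x => ?_, fun x x' h1 h2 => g3 x x' ?_⟩
  · have := g1 x 1
    simpa using this
  · intro t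
    simp [h1, h2]

/-- A family of nonzero vectors on a cube of dimension less than `2 * card κ - 1`, equal to `e` on the
boundary, is moved to the constant `e` by a path of families of invertible matrices relative to the
boundary. A smooth approximation of the family spans a cone whose complement is dense, so that the
straight line to some vector `-w` near `e` avoids `0`. -/
theorem exists_vec_null {k : ℕ} (hk : k + 1 < 2 * Fintype.card κ) (v : C(Fin k → I, κ → ℂ))
    (hv : ∀ x, v x ≠ 0) (e : κ → ℂ) (he : e ≠ 0) (hb : ∀ x ∈ Cube.boundary (Fin k), v x = e) :
    ∃ G : C(I × (Fin k → I), GLC κ), (∀ x, G (0, x) = 1) ∧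
      (∀ t, ∀ x ∈ Cube.boundary (Fin k), G (t, x) = 1) ∧ ∀ x, (G (1, x)).val *ᵥ v x = e := by
  obtain ⟨ε, hε, hεv⟩ : ∃ ε > 0, ∀ x, ε ≤ ‖v x‖ := by
    obtain ⟨x0, hx0⟩ := (isCompact_univ (X := Fin k → I)).exists_isMinOn ⟨fun _ => 0, trivial⟩
      (f := fun x => ‖v x‖) (by fun_prop)
    exact ⟨‖v x0‖, norm_pos_iff.2 (hv x0), fun x => hx0.2 (Set.mem_univ x)⟩
  -- a smooth approximation of `v - e` with support inside that of `v - e`, hence zero on the boundary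
  obtain ⟨g, gC, gA, gS⟩ := Continuous.exists_contDiff_approx (E := Fin k → ℝ) (F := κ → ℂ)
    (f := fun x => v (fun i => Set.projIcc 0 1 zero_le_one (x i)) - e) (ε := fun _ => ε) 1
    (by
      have : Continuous fun x : Fin k → ℝ => fun i => Set.projIcc (0:ℝ) 1 zero_le_one (x i) :=
        continuous_pi fun i => continuous_projIcc.comp (continuous_apply i)
      exact (v.continuous.comp this).sub continuous_const) continuous_const (fun _ => hε)
  have hpr : ∀ x : Fin k → I, (fun i => Set.projIcc (0:ℝ) 1 zero_le_one ((x i : ℝ))) = x := by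
    intro x; ext i; simp
  let v' : C(Fin k → I, κ → ℂ) := ⟨fun x => g (fun i => (x i : ℝ)) + e, by
    have := gC.continuous
    fun_prop⟩
  have hv'b : ∀ x ∈ Cube.boundary (Fin k), v' x = e := by
    intro x hx
    have : g (fun i => (x i : ℝ)) = 0 := by
      by_contra hne
      exact gS (Function.mem_support.2 hne) (by simp [hpr, hb x hx])
    simp [v', this]
  have hd : ∀ x, ‖v' x - v x‖ < ε := by
    intro x
    have := gA (fun i => (x i : ℝ))
    rw [dist_eq_norm, hpr] at this
    have h2 : v' x - v x = g (fun i => (x i : ℝ)) - (v x - e) := by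
      change g _ + e - v x = _
      abel
    rwa [h2]
  -- the cone over `v'` is the smooth image of a space of smaller dimension
  have hden := ContDiff.dense_compl_range_of_finrank_lt_finrank (E := (Fin k → ℝ) × ℝ) (F := κ → ℂ)
    (f := fun p => p.2 • (g p.1 + e))
    (by
      have : ContDiff ℝ 1 g := gC
      exact contDiff_snd.smul ((this.comp contDiff_fst).add contDiff_const)) (by
      rw [Module.finrank_prod, Module.finrank_fin_fun, Module.finrank_self,
        Module.finrank_pi_fintype]
      simp [Complex.finrank_real_complex]
      omega)
  obtain ⟨w, hw, hwr⟩ := Metric.dense_iff.1 hden (-e) ‖e‖ (norm_pos_iff.2 he)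
  rw [Metric.mem_ball, dist_eq_norm] at hw
  have hwr' : ∀ x : Fin k → I, ∀ r : ℝ, r • v' x ≠ w := fun x r h => hwr ⟨(fun i => (x i : ℝ), r), h⟩
  -- `v` is moved to `e` along segments by way of `v'` and the constant `-w`
  obtain ⟨g1, a1, b1, c1⟩ := exists_segment_lift v v' (by
    intro x t h
    have h1 : v x = -((t : ℝ) • (v' x - v x)) := by
      rw [← sub_eq_zero, ← h]; module
    have h2 : ‖v x‖ ≤ ‖v' x - v x‖ := by
      rw [h1, norm_neg, norm_smul, ← h1, Real.norm_eq_abs, abs_of_nonneg t.2.1]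
      exact mul_le_of_le_one_left (norm_nonneg _) t.2.2
    linarith [hd x, hεv x])
  have hv'0 : ∀ x, v' x ≠ 0 := by
    intro x h
    have := hd x
    rw [h, zero_sub, norm_neg] at this
    linarith [hεv x]
  obtain ⟨g2, a2, b2, c2⟩ := exists_segment_lift v' (ContinuousMap.const _ (-w)) (by
    intro x t h
    simp only [ContinuousMap.const_apply] at h
    by_cases ht : (t : ℝ) = 0
    · rw [ht] at h
      exact hv'0 x (by simpa using h)
    · refine hwr' x ((t : ℝ)⁻¹ * (1 - t)) ?_
      rw [mul_smul, eq_neg_of_add_eq_zero_left h, ← smul_neg, neg_neg, smul_smul,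
        inv_mul_cancel₀ ht, one_smul])
  obtain ⟨g3, a3, b3, c3⟩ := exists_segment_lift (V := Fin k → I) (ContinuousMap.const _ (-w))
    (ContinuousMap.const _ e) (by
    intro x t h
    simp only [ContinuousMap.const_apply] at h
    have h1 : e = (1 - (t : ℝ)) • (w - -e) := by
      rw [← sub_eq_zero, ← h]; module
    have h2 : ‖e‖ ≤ ‖w - -e‖ := by
      have h3 : ‖e‖ = ‖(1 - (t : ℝ)) • (w - -e)‖ := congrArg norm h1
      rw [h3, norm_smul, Real.norm_eq_abs, abs_of_nonneg (by linarith [t.2.2])]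
      exact mul_le_of_le_one_left (norm_nonneg _) (by linarith [t.2.1])
    linarith)
  let sw : C(I × (Fin k → I), (Fin k → I) × I) := ⟨Prod.swap, continuous_swap⟩
  let G : C(I × (Fin k → I), GLC κ) := g3.comp sw * (g2.comp sw * g1.comp sw)
  have G0 : ∀ x, G (0, x) = 1 := fun x => by simp [G, sw, a1, a2, a3]
  have G1 : ∀ x, (G (1, x)).val *ᵥ v x = e := fun x => by
    have e1 := b1 x; have e2 := b2 x; have e3 := b3 x
    simp only [ContinuousMap.const_apply] at e2 e3
    simp only [G, sw, ContinuousMap.mul_apply, ContinuousMap.comp_apply, ContinuousMap.coe_mk,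
      Prod.swap_prod_mk, Units.val_mul, ← mulVec_mulVec, e1, e2, e3]
  by_cases hne : (Cube.boundary (Fin k)).Nonempty
  · obtain ⟨x0, hx0⟩ := hne
    have Gb : ∀ t, ∀ x ∈ Cube.boundary (Fin k), G (t, x) = G (t, x0) := by
      intro t x hx
      have h1 : v x = v x0 := by rw [hb x hx, hb x0 hx0]
      have h2 : v' x = v' x0 := by rw [hv'b x hx, hv'b x0 hx0]
      simp [G, sw, c1 x x0 h1 h2 t, c2 x x0 h2 rfl t, c3 x x0 rfl rfl t]
    -- `G` is constant on the boundary for fixed `t`; dividing by this value normalizes it there, and the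
    -- value at `t = 1` fixes `e`
    let p : C(I × (Fin k → I), I × (Fin k → I)) := ⟨fun q => (q.1, x0), by fun_prop⟩
    refine ⟨(G.comp p)⁻¹ * G, fun x => by simp [p, G0], fun t x hx => by simp [p, Gb t x hx], ?_⟩
    intro x
    have h1 := G1 x0
    rw [hb x0 hx0] at h1
    simp only [ContinuousMap.mul_apply, ContinuousMap.inv_apply, ContinuousMap.comp_apply, p,
      ContinuousMap.coe_mk, Units.val_mul, ← mulVec_mulVec, G1 x]
    nth_rewrite 1 [← h1]
    rw [mulVec_mulVec, ← Units.val_mul, inv_mul_cancel, Units.val_one, one_mulVec]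
  · exact ⟨G, G0, fun t x hx => (hne ⟨x, hx⟩).elim, G1⟩

end Stab
end BottPer

namespace BottPer
open unitInterval Matrix
open scoped commutatorElement ComplexOrder

/-! ### The stable range for general linear groups -/

section Stab2
variable {Z : Type*} [TopologicalSpace Z]
variable {ι κ lam : Type} [Fintype ι] [DecidableEq ι] [Fintype κ] [DecidableEq κ]
  [Fintype lam] [DecidableEq lam]

/-- The first basis vector of `ℂ ⊕ ℂ^ι`. -/
def e₀ : Unit ⊕ ι → ℂ := Pi.single (Sum.inl ()) 1

theorem e₀_ne : (e₀ : Unit ⊕ ι → ℂ) ≠ 0 := fun h => by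
  have := congrFun h (Sum.inl ())
  simp [e₀] at this

theorem mulVec_e₀ (M : Matrix (Unit ⊕ ι) (Unit ⊕ ι) ℂ) : M *ᵥ e₀ = fun i => M i (Sum.inl ()) := by
  ext i; simp [e₀, mulVec_single]

theorem eq_blocks (M : Matrix (Unit ⊕ ι) (Unit ⊕ ι) ℂ) (h : M *ᵥ e₀ = e₀) :
    M = fromBlocks 1 M.toBlocks₁₂ 0 M.toBlocks₂₂ := by
  rw [mulVec_e₀] at h
  ext (i | i) (j | j)
  · simpa [e₀] using congrFun h (Sum.inl i)
  · rfl
  · simpa [e₀] using congrFun h (Sum.inr i)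
  · rfl

theorem isUnit_corner (M : GLC (Unit ⊕ ι)) (h : M.val *ᵥ e₀ = e₀) : IsUnit M.val.toBlocks₂₂ := by
  have h1 : IsUnit M.val.det := (isUnit_iff_isUnit_det _).1 M.isUnit
  rw [eq_blocks M.val h, det_fromBlocks_zero₂₁, det_one, one_mul] at h1
  exact (isUnit_iff_isUnit_det _).2 h1

/-- The lower right corner of a family of invertible matrices fixing the first basis vector. -/
noncomputable def corner (f : C(Z, GLC (Unit ⊕ ι))) (h : ∀ z, (f z).val *ᵥ e₀ = e₀) : C(Z, GLC ι) :=
  mkGL (fun z => (f z).val.toBlocks₂₂)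
    (continuous_matrix fun i j => (continuous_val f).matrix_elem (Sum.inr i) (Sum.inr j))
    (fun z => isUnit_corner _ (h z))

theorem corner_val (f : C(Z, GLC (Unit ⊕ ι))) (h : ∀ z, (f z).val *ᵥ e₀ = e₀) (z : Z) :
    (corner f h z).val = (f z).val.toBlocks₂₂ := by
  simp [corner]

theorem corner_eq_one (f : C(Z, GLC (Unit ⊕ ι))) (h : ∀ z, (f z).val *ᵥ e₀ = e₀) {z : Z}
    (hz : f z = 1) : corner f h z = 1 := by
  apply Units.ext
  rw [corner_val, hz]
  ext i j
  simp [toBlocks₂₂, Matrix.one_apply]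

/-- The off-diagonal block of a matrix with first column `e₀` can be scaled to zero. -/
theorem corner_eqv (f : C(Z, GLC (Unit ⊕ ι))) (h : ∀ z, (f z).val *ᵥ e₀ = e₀) {W : Set Z}
    (hW : ∀ w ∈ W, f w = 1) : Eqv W f ((Frame.inr (ι := Unit)).app (corner f h)) := by
  have hu : ∀ p : I × Z, IsUnit (fromBlocks (1 : Matrix Unit Unit ℂ)
      ((1 - (p.1 : ℂ)) • (f p.2).val.toBlocks₁₂) 0 (f p.2).val.toBlocks₂₂) := by
    intro p
    rw [isUnit_iff_isUnit_det, det_fromBlocks_zero₂₁, det_one, one_mul, ← isUnit_iff_isUnit_det]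
    exact isUnit_corner _ (h _)
  have hc : Continuous fun p : I × Z => (f p.2).val := (continuous_val f).comp continuous_snd
  have h12 : Continuous fun p : I × Z => (f p.2).val.toBlocks₁₂ :=
    continuous_matrix fun i j => hc.matrix_elem (Sum.inl i) (Sum.inr j)
  have h22 : Continuous fun p : I × Z => (f p.2).val.toBlocks₂₂ :=
    continuous_matrix fun i j => hc.matrix_elem (Sum.inr i) (Sum.inr j)
  have ht : Continuous fun p : I × Z => (1 - (((p.1 : ℝ)) : ℂ)) := by fun_prop
  refine Eqv.of_homotopy (mkGL _ (Continuous.matrix_fromBlocks continuous_const (ht.smul h12)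
    continuous_const h22) hu) (fun z => ?_) (fun z => ?_) (fun t w hw => ?_)
  · apply Units.ext
    rw [mkGL_val]
    conv_rhs => rw [eq_blocks _ (h z)]
    simp
  · apply Units.ext
    rw [mkGL_val, Frame.app_apply, Frame.ext_val, Frame.inr_extM, corner_val]
    simp
  · apply Units.ext
    rw [mkGL_val, mkGL_val]
    have : (1 : Matrix (Unit ⊕ ι) (Unit ⊕ ι) ℂ).toBlocks₁₂ = 0 := by
      ext i j; simp [toBlocks₁₂]
    simp [hW w hw, this]

/-- Moving the first column to `e₀` leaves a matrix that is determined by its corner up to homotopy. -/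
theorem compress_step {k : ℕ} (hk : k + 1 < 2 * (Fintype.card ι + 1))
    (f : C(Fin k → I, GLC (Unit ⊕ ι))) (hf : ∀ x ∈ Cube.boundary (Fin k), f x = 1) :
    ∃ g : C(Fin k → I, GLC ι), (∀ x ∈ Cube.boundary (Fin k), g x = 1) ∧
      Eqv (Cube.boundary (Fin k)) f ((Frame.inr (ι := Unit)).app g) := by
  have hc := continuous_val f
  obtain ⟨G, G0, Gb, G1⟩ := exists_vec_null (κ := Unit ⊕ ι) (k := k) (by simpa [add_comm] using hk)
    ⟨fun x => (f x).val *ᵥ e₀, by fun_prop⟩ (fun x h => e₀_ne (by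
      have := congrArg (fun v => ((f x)⁻¹ : GLC _).val *ᵥ v) h
      simpa [-Matrix.coe_units_inv] using this)) e₀ e₀_ne (fun x hx => by simp [hf x hx])
  let f1 : C(Fin k → I, GLC (Unit ⊕ ι)) := G.comp ⟨fun x => (1, x), by fun_prop⟩ * f
  have h1 : Eqv (Cube.boundary (Fin k)) f f1 := by
    refine Eqv.of_homotopy (G * f.comp ContinuousMap.snd) (fun z => by simp [G0])
      (fun z => by simp [f1]) (fun t w hw => by simp [G0, Gb t w hw])
  have h2 : ∀ x, (f1 x).val *ᵥ e₀ = e₀ := fun x => by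
    simpa [f1] using G1 x
  have h3 : ∀ x ∈ Cube.boundary (Fin k), f1 x = 1 := fun x hx => by
    simp [f1, Gb 1 x hx, hf x hx]
  exact ⟨corner f1 h2, fun x hx => corner_eq_one _ _ (h3 x hx), h1.trans (corner_eqv f1 h2 h3)⟩

/-- A null-homotopy of the stabilized family is itself a family on a cube of one dimension more. After its
first column has been moved to `e₀`, its corner is a null-homotopy of `f`. -/
theorem null_step {k : ℕ} (hk : k + 2 < 2 * (Fintype.card ι + 1))
    (f : C(Fin k → I, GLC ι))
    (hf : (Frame.inr (ι := Unit)).app f ∈ Nul (Cube.boundary (Fin k))) :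
    f ∈ Nul (Cube.boundary (Fin k)) := by
  obtain ⟨H, H0, H1, Hb⟩ := hf
  have hb : ∀ x ∈ Cube.boundary (Fin (k + 1)), (H (x 0, fun i => x i.succ)).val *ᵥ e₀ = e₀ := by
    rintro x ⟨i, hi⟩
    refine Fin.cases (fun hi => ?_) (fun j hj => ?_) i hi
    · rcases hi with hi | hi
      · rw [hi, H0]; simp
      · rw [hi, H1]
        rw [Frame.app_apply, Frame.ext_val, Frame.inr_extM, mulVec_e₀]
        ext (i | i) <;> simp [e₀]
    · rw [Hb _ _ ⟨j, hj⟩]; simp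
  have hc := continuous_val H
  have hc' : Continuous fun x : Fin (k + 1) → I => (H (x 0, fun i => x i.succ)).val :=
    hc.comp (by fun_prop)
  obtain ⟨G, G0, Gb, G1⟩ := exists_vec_null (κ := Unit ⊕ ι) (k := k + 1)
    (by simpa [add_comm, add_assoc, add_left_comm] using hk)
    ⟨fun x => (H (x 0, fun i => x i.succ)).val *ᵥ e₀, by fun_prop⟩ (fun x h => e₀_ne (by
      have := congrArg (fun v => ((H (x 0, fun i => x i.succ))⁻¹ : GLC _).val *ᵥ v) h
      simpa [-Matrix.coe_units_inv] using this)) e₀ e₀_ne hb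
  let K : C(I × (Fin k → I), GLC (Unit ⊕ ι)) :=
    G.comp ⟨fun p => (1, Fin.cons p.1 p.2), by
      refine Continuous.prodMk continuous_const (continuous_pi fun i => ?_)
      refine Fin.cases ?_ (fun j => ?_) i
      · simpa using continuous_fst
      · simpa [Function.comp_def] using (continuous_apply j).comp (continuous_snd (X := I))⟩ * H
  have K1 : ∀ p, (K p).val *ᵥ e₀ = e₀ := fun p => by
    simpa [K] using G1 (Fin.cons p.1 p.2)
  have Kb : ∀ t x, ((t = 0 ∨ t = 1) ∨ x ∈ Cube.boundary (Fin k)) → K (t, x) = H (t, x) := by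
    intro t x h
    have : (Fin.cons t x : Fin (k + 1) → I) ∈ Cube.boundary (Fin (k + 1)) := by
      rcases h with h | ⟨i, hi⟩
      · exact ⟨0, by simpa using h⟩
      · exact ⟨i.succ, by simpa using hi⟩
    simp [K, Gb 1 _ this]
  refine ⟨corner K K1, fun z => corner_eq_one _ _ ?_, fun z => ?_, fun t w hw => corner_eq_one _ _ ?_⟩
  · rw [Kb _ _ (by simp), H0]
  · apply Units.ext
    rw [corner_val, Kb _ _ (by simp), H1, Frame.app_apply, Frame.ext_val, Frame.inr_extM,
      toBlocks_fromBlocks₂₂]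
  · rw [Kb _ _ (Or.inr hw), Hb t w hw]

/-- Relabelling of the basis. -/
noncomputable def relabel (e : ι ≃ κ) : GLC ι →* GLC κ :=
  Units.map (reindexAlgEquiv ℂ ℂ e : Matrix ι ι ℂ →* Matrix κ κ ℂ)

theorem relabel_val (e : ι ≃ κ) (a : GLC ι) : (relabel e a).val = reindex e e a.val := rfl

theorem relabel_continuous (e : ι ≃ κ) : Continuous (relabel e) := by
  refine continuous_of_val ?_
  have : Continuous fun z : GLC ι => z.val := Units.continuous_val
  exact this.matrix_reindex e e

/-- Relabelling the rows and columns of a family of matrices. -/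
noncomputable def relabelC (e : ι ≃ κ) : C(Z, GLC ι) →* C(Z, GLC κ) :=
  mapHom (relabel e) (relabel_continuous e)

theorem relabelC_inr (e : lam ≃ κ) (f : C(Z, GLC ι)) :
    relabelC (e.sumCongr (Equiv.refl ι)) ((Frame.inr (ι := lam)).app f) =
      (Frame.inr (ι := κ)).app f := by
  ext z (i | i) (j | j) <;>
  simp [relabelC, relabel_val, Frame.app_apply, Frame.ext_val, Frame.inr_extM, Matrix.one_apply]

theorem relabelC_inr_empty [DecidableEq PEmpty.{1}] (f : C(Z, GLC ι)) :
    relabelC (Equiv.emptySum PEmpty ι) ((Frame.inr (ι := PEmpty)).app f) = f := by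
  ext z i j
  simp [relabelC, relabel_val, Frame.app_apply, Frame.ext_val, Frame.inr_extM]

/-- The bijection `Option lam ⊕ ι ≃ Unit ⊕ (lam ⊕ ι)`. -/
def optEquiv (lam ι : Type) : Option lam ⊕ ι ≃ Unit ⊕ (lam ⊕ ι) :=
  (((Equiv.optionEquivSumPUnit lam).trans (Equiv.sumComm _ _)).sumCongr (Equiv.refl ι)).trans
    (Equiv.sumAssoc Unit lam ι)

theorem relabelC_inr_option [DecidableEq (Option lam)] (f : C(Z, GLC ι)) :
    relabelC (optEquiv lam ι) ((Frame.inr (ι := Option lam)).app f) =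
      (Frame.inr (ι := Unit)).app ((Frame.inr (ι := lam)).app f) := by
  ext z (i | i | i) (j | j | j) <;>
  simp [relabelC, relabel_val, Frame.app_apply, Frame.ext_val, Frame.inr_extM, Matrix.one_apply,
    optEquiv]

theorem relabelC_symm (e : ι ≃ κ) (f : C(Z, GLC ι)) : relabelC e.symm (relabelC e f) = f := by
  ext z i j
  simp [relabelC, relabel_val]

theorem relabelC_apply_one (e : ι ≃ κ) (f : C(Z, GLC ι)) {z : Z} (hz : f z = 1) :
    relabelC e f z = 1 := by
  simp [relabelC, hz]

/-- In the stable range, stabilization is injective; one row and column are removed at a time. -/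
theorem null_of_inr {k : ℕ} (hk : k + 2 < 2 * (Fintype.card ι + 1)) (f : C(Fin k → I, GLC ι))
    (lam : Type) [Fintype lam] : ∀ [DecidableEq lam],
    (Frame.inr (ι := lam)).app f ∈ Nul (Cube.boundary (Fin k)) → f ∈ Nul (Cube.boundary (Fin k)) := by
  classical
  refine Fintype.induction_empty_option (P := fun lam _ => ∀ [DecidableEq lam],
    (Frame.inr (ι := lam)).app f ∈ Nul (Cube.boundary (Fin k)) → f ∈ Nul (Cube.boundary (Fin k)))
    ?_ ?_ ?_ lam
  · intro α β _ e ih _ h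
    let _ : Fintype α := Fintype.ofEquiv _ e.symm
    refine ih ?_
    have h1 := Nul.map h (relabel (e.symm.sumCongr (Equiv.refl ι))) (relabel_continuous _)
    have h2 := relabelC_inr e.symm f
    unfold relabelC at h2
    rw [h2] at h1
    exact h1
  · intro _ h
    have h1 := Nul.map h (relabel (Equiv.emptySum PEmpty ι)) (relabel_continuous _)
    have h2 := relabelC_inr_empty f
    unfold relabelC at h2
    rw [h2] at h1
    exact h1
  · intro α _ ih _ h
    refine ih (null_step ?_ _ ?_)
    · rw [Fintype.card_sum]; omega
    have h1 := Nul.map h (relabel (optEquiv α ι)) (relabel_continuous _)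
    have h2 := relabelC_inr_option (lam := α) f
    unfold relabelC at h2
    rw [h2] at h1
    exact h1

/-- In the stable range, stabilization is surjective; one row and column are removed at a time. -/
theorem exists_compress {k : ℕ} (hk : k + 1 < 2 * (Fintype.card ι + 1))
    (lam : Type) [Fintype lam] : ∀ [DecidableEq lam] (f : C(Fin k → I, GLC (lam ⊕ ι))),
    (∀ x ∈ Cube.boundary (Fin k), f x = 1) →
    ∃ g : C(Fin k → I, GLC ι), (∀ x ∈ Cube.boundary (Fin k), g x = 1) ∧
      Eqv (Cube.boundary (Fin k)) f ((Frame.inr (ι := lam)).app g) := by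
  classical
  refine Fintype.induction_empty_option (P := fun lam _ => ∀ [DecidableEq lam]
    (f : C(Fin k → I, GLC (lam ⊕ ι))),
    (∀ x ∈ Cube.boundary (Fin k), f x = 1) →
    ∃ g : C(Fin k → I, GLC ι), (∀ x ∈ Cube.boundary (Fin k), g x = 1) ∧
      Eqv (Cube.boundary (Fin k)) f ((Frame.inr (ι := lam)).app g))
    ?_ ?_ ?_ lam
  · intro α β _ e ih _ f hf
    let _ : Fintype α := Fintype.ofEquiv _ e.symm
    obtain ⟨g, hg, h⟩ := ih (relabelC (e.symm.sumCongr (Equiv.refl ι)) f)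
      (fun x hx => relabelC_apply_one _ _ (hf x hx))
    refine ⟨g, hg, ?_⟩
    have h1 := Eqv.map h (relabel (e.sumCongr (Equiv.refl ι))) (relabel_continuous _)
    have h2 := relabelC_symm (e.symm.sumCongr (Equiv.refl ι)) f
    have h3 := relabelC_inr (κ := β) (lam := α) e g
    unfold relabelC at h2 h3 h1
    rw [h3] at h1
    rw [← h2]
    exact h1
  · intro _ f hf
    have h2 := relabelC_inr_empty (relabelC (Equiv.emptySum PEmpty ι) f)
    have h3 := congrArg (relabelC (Equiv.emptySum PEmpty ι).symm) h2
    rw [relabelC_symm, relabelC_symm] at h3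
    refine ⟨relabelC (Equiv.emptySum PEmpty ι) f, fun x hx => relabelC_apply_one _ _ (hf x hx), ?_⟩
    have := Eqv.refl (Cube.boundary (Fin k)) f
    nth_rewrite 2 [← h3] at this
    exact this
  · intro α _ ih _ f hf
    obtain ⟨g, hg, h⟩ := compress_step (by rw [Fintype.card_sum]; omega) (relabelC (optEquiv α ι) f)
      (fun x hx => relabelC_apply_one _ _ (hf x hx))
    obtain ⟨g', hg', h'⟩ := ih g hg
    refine ⟨g', hg', ?_⟩
    have h1 := Eqv.map (h.trans ((Frame.inr (ι := Unit)).app_eqv h'))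
      (relabel (optEquiv α ι).symm) (relabel_continuous _)
    have h2 := relabelC_symm (optEquiv α ι) f
    have h4 := relabelC_inr_option (lam := α) g'
    have h3 := relabelC_symm (optEquiv α ι) ((Frame.inr (ι := Option α)).app g')
    rw [← h4] at h1
    change Eqv _ (relabelC (optEquiv α ι).symm _) (relabelC (optEquiv α ι).symm _) at h1
    rw [h3, h2] at h1
    exact h1

end Stab2
end BottPer

namespace BottPer
open unitInterval Matrix
open scoped commutatorElement ComplexOrder Topology.Homotopy

/-! ### Homotopy groups of topological groups -/

section Pi
variable {G H : Type} [Group G] [TopologicalSpace G] [IsTopologicalGroup G]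
  [Group H] [TopologicalSpace H] [IsTopologicalGroup H]

theorem homotopic_iff {N : Type} (p q : Ω^ N G 1) :
    GenLoop.Homotopic p q ↔ Eqv (Cube.boundary N) p.1 q.1 :=
  ⟨Eqv.of_homotopicRel, Eqv.homotopicRel⟩

theorem transAt_apply {N X : Type} [TopologicalSpace X] {x : X} [DecidableEq N] (i : N)
    (f g : Ω^ N X x) (t : N → I) : GenLoop.transAt i f g t = if (t i : ℝ) ≤ 1 / 2
      then f (Function.update t i <| Set.projIcc 0 1 zero_le_one (2 * t i))
      else g (Function.update t i <| Set.projIcc 0 1 zero_le_one (2 * t i - 1)) := rfl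

/-- An isomorphism of homotopy groups, possibly of different degrees, is given by a map of based cubes that
turns concatenation in one coordinate into concatenation in another, respects homotopies, has trivial
kernel and is surjective up to homotopy. -/
theorem piMulEquiv {k m : ℕ} (T : Ω^ (Fin (k + 1)) G 1 → Ω^ (Fin (m + 1)) H 1)
    (i : Fin (k + 1)) (i' : Fin (m + 1))
    (hT : ∀ p q, T (GenLoop.transAt i p q) = GenLoop.transAt i' (T p) (T q))
    (h1 : ∀ p q, Eqv (Cube.boundary _) p.1 q.1 → Eqv (Cube.boundary _) (T p).1 (T q).1)
    (h2 : ∀ p, (T p).1 ∈ Nul (Cube.boundary _) → p.1 ∈ Nul (Cube.boundary _))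
    (h3 : ∀ F : Ω^ (Fin (m + 1)) H 1, ∃ p, Eqv (Cube.boundary _) (T p).1 F.1) :
    Nonempty (π_ (k + 1) G 1 ≃* π_ (m + 1) H 1) := by
  let φ : π_ (k + 1) G 1 →* π_ (m + 1) H 1 := MonoidHom.mk'
    (Quotient.map T fun p q h => (homotopic_iff _ _).2 (h1 p q ((homotopic_iff _ _).1 h)))
    (by
      rintro ⟨p⟩ ⟨q⟩
      have e1 := HomotopyGroup.mul_spec (i := i) (p := p) (q := q)
      have e2 := HomotopyGroup.mul_spec (i := i') (p := T p) (q := T q)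
      refine (congrArg (Quotient.map T _) e1).trans (Eq.trans ?_ e2.symm)
      rw [← hT]
      rfl)
  have hinj : Function.Injective φ := by
    rw [injective_iff_map_eq_one]
    rintro ⟨p⟩ hp
    have hp' : GenLoop.Homotopic (T p) GenLoop.const := Quotient.exact hp
    refine Quotient.sound (?_ : GenLoop.Homotopic p GenLoop.const)
    rw [homotopic_iff] at hp' ⊢
    exact eqv_one.2 (h2 p (eqv_one.1 hp'))
  have hsurj : Function.Surjective φ := by
    rintro ⟨F⟩
    obtain ⟨p, hp⟩ := h3 F
    exact ⟨⟦p⟧, Quotient.sound ((homotopic_iff _ _).2 hp)⟩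
  exact ⟨MulEquiv.ofBijective φ ⟨hinj, hsurj⟩⟩

theorem piMulEquiv_of_hom (φ : G →* H) (hφ : Continuous φ) (k : ℕ)
    (h2 : ∀ f : C(Fin (k + 1) → I, G), mapHom φ hφ f ∈ Nul (Cube.boundary _) →
      (∀ x ∈ Cube.boundary _, f x = 1) → f ∈ Nul (Cube.boundary _))
    (h3 : ∀ F : C(Fin (k + 1) → I, H), (∀ x ∈ Cube.boundary _, F x = 1) →
      ∃ f : C(Fin (k + 1) → I, G), (∀ x ∈ Cube.boundary _, f x = 1) ∧
        Eqv (Cube.boundary _) (mapHom φ hφ f) F) :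
    Nonempty (π_ (k + 1) G 1 ≃* π_ (k + 1) H 1) := by
  refine piMulEquiv (fun p => ⟨mapHom φ hφ p.1, fun y hy => ?_⟩) 0 0 ?_ ?_ ?_ ?_
  · have := p.2 y hy
    simp [this]
  · intro p q
    ext y
    change φ (GenLoop.transAt 0 p q y) = _
    rw [transAt_apply, transAt_apply, apply_ite φ]
    rfl
  · intro p q h; exact h.map φ hφ
  · intro p h; exact h2 _ h p.2
  · intro F
    obtain ⟨f, hf, h⟩ := h3 F.1 F.2
    exact ⟨⟨f, hf⟩, h⟩

end Pi

/-! ### The Bott map on homotopy groups -/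

section BottC
variable {ι κ : Type} [Fintype ι] [DecidableEq ι] [Fintype κ] [DecidableEq κ]

/-- The coordinates `((x, y 1), y 0)` on the cube of dimension `k + 2`. -/
def pc (k : ℕ) : C(Fin (k + 2) → I, ((Fin k → I) × I) × I) :=
  ⟨fun y => ((fun i => y i.succ.succ, y 1), y 0), by fun_prop⟩

/-- The inverse of the coordinate change `pc`. -/
def pd (k : ℕ) : C(((Fin k → I) × I) × I, Fin (k + 2) → I) :=
  ⟨fun p => Fin.cons p.2 (Fin.cons p.1.2 p.1.1), by
    refine continuous_pi fun i => ?_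
    refine Fin.cases ?_ (fun j => ?_) i
    · simp only [Fin.cons_zero]; fun_prop
    · refine Fin.cases ?_ (fun l => ?_) j
      · simp only [Fin.cons_succ, Fin.cons_zero]; fun_prop
      · simp only [Fin.cons_succ]; fun_prop⟩

theorem pc_mem {k : ℕ} {y : Fin (k + 2) → I} (hy : y ∈ Cube.boundary _) :
    pc k y ∈ bd (bd (Cube.boundary (Fin k))) := by
  obtain ⟨i, hi⟩ := hy
  revert hi
  refine Fin.cases (fun hi => ?_) (fun j => ?_) i
  · exact Or.inr hi
  · refine Fin.cases (fun hi => ?_) (fun l hi => ?_) j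
    · exact Or.inl (Or.inr hi)
    · exact Or.inl (Or.inl ⟨l, hi⟩)

theorem pd_mem {k : ℕ} {p : ((Fin k → I) × I) × I} (hp : p ∈ bd (bd (Cube.boundary (Fin k)))) :
    pd k p ∈ Cube.boundary _ := by
  rcases hp with (⟨i, hi⟩ | h) | h
  · exact ⟨i.succ.succ, by simpa [pd] using hi⟩
  · exact ⟨(0 : Fin (k + 1)).succ, by simpa [pd] using h⟩
  · exact ⟨0, by simpa [pd] using h⟩

theorem pc_pd {k : ℕ} (p : ((Fin k → I) × I) × I) : pc k (pd k p) = p := by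
  rfl

theorem pd_pc {k : ℕ} (y : Fin (k + 2) → I) : pd k (pc k y) = y := by
  ext i
  refine Fin.cases ?_ (fun j => ?_) i
  · simp [pc, pd]
  · refine Fin.cases ?_ (fun l => ?_) j
    · simp [pc, pd, -Fin.succ_zero_eq_one]
    · simp [pc, pd]

/-- The Bott map on maps of cubes. -/
noncomputable def bottC {k : ℕ} (a : C(Fin k → I, GLC ι)) : C(Fin (k + 2) → I, GLC (ι ⊕ ι)) :=
  (bott a).comp (pc k)

theorem bottC_eq_one {k : ℕ} (a : C(Fin k → I, GLC ι)) (ha : ∀ x ∈ Cube.boundary _, a x = 1) :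
    ∀ x ∈ Cube.boundary _, bottC a x = 1 := fun x hx =>
  bott_eq_one a ha _ (pc_mem hx)

theorem bottC_eqv {k : ℕ} {a b : C(Fin k → I, GLC ι)} (h : Eqv (Cube.boundary _) a b) :
    Eqv (Cube.boundary _) (bottC a) (bottC b) :=
  (bott_eqv h).comp (pc k) fun _ => pc_mem

/-- By `bott_inj` the family is stably trivial, hence trivial in the stable range. -/
theorem bottC_inj {k : ℕ} (hk : k + 2 < 2 * (Fintype.card ι + 1)) (a : C(Fin k → I, GLC ι))
    (ha : ∀ x ∈ Cube.boundary _, a x = 1) (h : bottC a ∈ Nul (Cube.boundary _)) :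
    a ∈ Nul (Cube.boundary _) := by
  have h1 := Nul.comp h (pd k) (W' := bd (bd (Cube.boundary (Fin k)))) (fun _ => pd_mem)
  have h2 : (bottC a).comp (pd k) = bott a := by
    ext1 p
    simp [bottC, pc_pd]
  rw [h2] at h1
  obtain ⟨lam, _, _, h3⟩ := bott_inj a ha h1
  exact null_of_inr hk a lam h3

/-- The family on matrices of unknown size `r` provided by `bott_surj` is compressed to the index type `ι`,
and the stabilization is removed on the target. -/
theorem bottC_surj {k : ℕ} (hk : k + 4 < 2 * (Fintype.card ι + 1))
    (F : C(Fin (k + 2) → I, GLC (ι ⊕ ι))) (hF : ∀ x ∈ Cube.boundary _, F x = 1) :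
    ∃ a : C(Fin k → I, GLC ι), (∀ x ∈ Cube.boundary _, a x = 1) ∧
      Eqv (Cube.boundary _) (bottC a) F := by
  obtain ⟨r, a, ha, h⟩ := bott_surj (F.comp (pd k)) (Y := Cube.boundary (Fin k))
    (fun w hw => hF _ (pd_mem hw))
  obtain ⟨a', ha', h'⟩ := exists_compress (ι := ι) (by omega) (Fin r)
    ((Frame.inl (κ := ι)).app a) (fun x hx => by simp [ha x hx])
  refine ⟨a', ha', ?_⟩
  have h1 := bott_eqv h'
  rw [bott_app, bott_app] at h1
  have h2 : SE (bd (bd (Cube.boundary (Fin k)))) (bott a) (bott a') := by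
    have e1 := SE.of_app _ (SE.of_eqv h1)
    exact (SE.of_app _ e1.symm).symm
  have h3 := h2.symm.trans (bott_eq_one a ha) h.symm
  obtain ⟨mu, _, _, h4⟩ := h3.exists_inr (bott_eq_one a' ha') (fun w hw => hF _ (pd_mem hw))
  have h5 := h4.comp (pc k) (W' := Cube.boundary _) (fun _ => pc_mem)
  have h6 : (Frame.inr (ι := mu)).app ((bottC a')⁻¹ * F) ∈ Nul (Cube.boundary (Fin (k + 2))) := by
    have e1 : ((Frame.inr (ι := mu)).app (bott a')).comp (pc k) =
        (Frame.inr (ι := mu)).app (bottC a') := by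
      ext1 y
      simp only [Frame.app_apply, ContinuousMap.comp_apply, bottC]
    have e2 : ((Frame.inr (ι := mu)).app (F.comp (pd k))).comp (pc k) =
        (Frame.inr (ι := mu)).app F := by
      ext1 y
      simp only [Frame.app_apply, ContinuousMap.comp_apply, pd_pc]
    rw [e1, e2] at h5
    rw [map_mul, map_inv]
    exact h5
  exact null_of_inr (by rw [Fintype.card_sum]; omega) _ mu h6

/-- The Bott map is an isomorphism on homotopy groups in the stable range. Concatenation in the first
coordinate of the source is concatenation in the third coordinate of the target. -/
theorem pi_bott {k : ℕ} (hk : k + 5 < 2 * (Fintype.card ι + 1)) :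
    Nonempty (π_ (k + 1) (GLC ι) 1 ≃* π_ (k + 2 + 1) (GLC (ι ⊕ ι)) 1) := by
  refine piMulEquiv (k := k) (m := k + 2) (fun p => ⟨bottC p.1, bottC_eq_one _ p.2⟩) 0
    (0 : Fin (k + 1)).succ.succ ?_ ?_ ?_ ?_
  · intro p q
    ext1 y
    have e (s : I) : pc (k + 1) (Function.update y (0 : Fin (k + 1)).succ.succ s) =
        ((Function.update (pc (k + 1) y).1.1 0 s, (pc (k + 1) y).1.2), (pc (k + 1) y).2) := by
      refine Prod.ext (Prod.ext ?_ ?_) ?_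
      · funext j
        simp only [pc, ContinuousMap.coe_mk, Function.update_apply, Fin.succ_inj]
      · exact Function.update_of_ne (f := y) (v := s) (fun h => Fin.succ_ne_zero (0 : Fin (k + 1))
          (Fin.succ_injective _ (show (0 : Fin (k + 2)).succ = _ from h)).symm)
      · exact Function.update_of_ne (f := y) (v := s)
          (fun h => Fin.succ_ne_zero (0 : Fin (k + 1)).succ h.symm)
    rw [transAt_apply]
    change bott (GenLoop.transAt 0 p q).1 (pc (k + 1) y) = ite _ (bott p.1 (pc (k + 1) _))
      (bott q.1 (pc (k + 1) _))
    rw [e, e, bott_apply, bott_apply, bott_apply]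
    change ⁅⁅(Frame.inl (κ := ι)).ext (GenLoop.transAt 0 p q (pc (k + 1) y).1.1), _⁆, _⁆ = _
    rw [transAt_apply]
    change ⁅⁅(Frame.inl (κ := ι)).ext (ite ((y (0 : Fin (k + 1)).succ.succ : ℝ) ≤ 1 / 2) _ _), _⁆, _⁆ = _
    split_ifs <;> rfl
  · intro p q h; exact bottC_eqv h
  · intro p h; exact bottC_inj (by omega) _ p.2 h
  · intro F
    obtain ⟨a, ha, h⟩ := bottC_surj (by omega) F.1 F.2
    exact ⟨⟨a, ha⟩, h⟩

theorem pi_inr {k : ℕ} (hk : k + 3 < 2 * (Fintype.card ι + 1)) :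
    Nonempty (π_ (k + 1) (GLC ι) 1 ≃* π_ (k + 1) (GLC (κ ⊕ ι)) 1) := by
  refine piMulEquiv_of_hom (Frame.inr (ι := κ)).ext (Frame.ext_continuous _) k ?_ ?_
  · intro f h _
    exact null_of_inr (by omega) f κ h
  · intro F hF
    obtain ⟨g, hg, h⟩ := exists_compress (ι := ι) (by omega) κ F hF
    exact ⟨g, hg, h.symm⟩

/-- The general linear group is path connected, as its points can be compressed to matrices of size zero. -/
theorem gl_connected (f : C(Fin 0 → I, GLC ι)) : f ∈ Nul (Cube.boundary _) := by
  obtain ⟨g, -, h⟩ := exists_compress (k := 0) (ι := PEmpty) (by simp) ι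
    (relabelC (Equiv.sumEmpty ι PEmpty).symm f) (by rintro x ⟨i, -⟩; exact i.elim0)
  have hg : g = 1 := by
    ext x i; exact i.elim
  rw [hg, map_one, eqv_one] at h
  have h1 := Nul.map h (relabel (Equiv.sumEmpty ι PEmpty)) (relabel_continuous _)
  have h2 := relabelC_symm (Equiv.sumEmpty ι PEmpty).symm f
  rw [Equiv.symm_symm] at h2
  rw [← h2]
  exact h1

end BottC
end BottPer

namespace BottPer
open unitInterval Matrix
open scoped commutatorElement ComplexOrder Topology.Homotopy

/-! ### Polar decomposition and the unitary groups -/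

section Polar
variable {n : ℕ}

section Sqrt
open scoped Matrix.Norms.L2Operator MatrixOrder

/-- The positive factor `√(g*g)` of the polar decomposition of an invertible matrix `g`. -/
noncomputable def polarS (g : GLC (Fin n)) : Matrix (Fin n) (Fin n) ℂ :=
  CFC.sqrt (star (g : Matrix (Fin n) (Fin n) ℂ) * g)

theorem polarS_continuous : Continuous (polarS (n := n)) := by
  have h : Continuous fun g : GLC (Fin n) => star (g : Matrix (Fin n) (Fin n) ℂ) * g :=
    (Units.continuous_val.star).mul Units.continuous_val
  exact (CFC.continuousOn_sqrt (A := Matrix (Fin n) (Fin n) ℂ)).comp_continuous h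
    fun g => star_mul_self_nonneg (g : Matrix (Fin n) (Fin n) ℂ)

theorem polarS_mul_self (g : GLC (Fin n)) :
    polarS g * polarS g = star (g : Matrix (Fin n) (Fin n) ℂ) * g :=
  CFC.sqrt_mul_sqrt_self _ (star_mul_self_nonneg _)

theorem polarS_posSemidef (g : GLC (Fin n)) : (polarS g).PosSemidef :=
  (CFC.sqrt_nonneg _).posSemidef

theorem polarS_eq_one (g : GLC (Fin n))
    (h : star (g : Matrix (Fin n) (Fin n) ℂ) * g = 1) : polarS g = 1 := by
  rw [polarS, h, CFC.sqrt_one]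

theorem polarS_isUnit (g : GLC (Fin n)) : IsUnit (polarS g) := by
  rw [polarS, CFC.isUnit_sqrt_iff _ (star_mul_self_nonneg _)]
  exact g.isUnit.star.mul g.isUnit

theorem polarS_posDef (g : GLC (Fin n)) : (polarS g).PosDef :=
  (polarS_posSemidef g).posDef_iff_isUnit.2 (polarS_isUnit g)

end Sqrt

/-- The positive factor as an element of the general linear group. -/
noncomputable def polarU : C(GLC (Fin n), GLC (Fin n)) :=
  mkGL polarS polarS_continuous polarS_isUnit

theorem polarU_val (g : GLC (Fin n)) :
    ((polarU g : GLC (Fin n)) : Matrix (Fin n) (Fin n) ℂ) = polarS g := rfl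

theorem polar_unitary (g : GLC (Fin n)) :
    (((g * (polarU g)⁻¹ : GLC (Fin n))) : Matrix (Fin n) (Fin n) ℂ) ∈
      Matrix.unitaryGroup (Fin n) ℂ := by
  rw [Matrix.mem_unitaryGroup_iff']
  have hs : star (polarU g) = polarU g := by
    ext1
    exact (polarS_posSemidef g).1
  have h1 : star g * g = polarU g * polarU g := by
    ext1
    exact (polarS_mul_self g).symm
  have h2 : star (g * (polarU g)⁻¹) * (g * (polarU g)⁻¹) = 1 := by
    rw [star_mul, star_inv, hs, mul_assoc, ← mul_assoc (star g), h1]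
    group
  exact congrArg Units.val h2

/-- The unitary factor of the polar decomposition, a retraction of `GL(n)` onto `U(n)`. -/
noncomputable def polarR : C(GLC (Fin n), Matrix.unitaryGroup (Fin n) ℂ) where
  toFun g := ⟨_, polar_unitary g⟩
  continuous_toFun := by
    refine Continuous.subtype_mk ?_ _
    exact Units.continuous_val.comp (continuous_id.mul polarU.continuous.inv)

/-- The inclusion of `U(n)` into `GL(n)`. -/
noncomputable def uInc : Matrix.unitaryGroup (Fin n) ℂ →* GLC (Fin n) := Unitary.toUnits

theorem uInc_continuous : Continuous (uInc (n := n)) :=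
  continuous_of_val continuous_subtype_val

theorem polarR_uInc (u : Matrix.unitaryGroup (Fin n) ℂ) : polarR (uInc u) = u := by
  have h : polarU (uInc u) = 1 := by
    ext1
    exact polarS_eq_one _ (Matrix.mem_unitaryGroup_iff'.1 u.2)
  apply Subtype.ext
  change (((uInc u * (polarU (uInc u))⁻¹ : GLC (Fin n))) : Matrix (Fin n) (Fin n) ℂ) = _
  rw [h, inv_one, mul_one]
  rfl

theorem polarR_one : polarR (1 : GLC (Fin n)) = 1 := by
  have := polarR_uInc (n := n) 1
  rwa [map_one] at this

theorem uInc_polarR (g : GLC (Fin n)) : uInc (polarR g) = g * (polarU g)⁻¹ := by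
  ext1; rfl

/-- For `t < 1` the matrix is the sum of a positive definite and a positive semidefinite one. -/
theorem polar_path_isUnit (g : GLC (Fin n)) (t : I) :
    IsUnit (((1 - (t : ℝ) : ℝ) : ℂ) • (1 : Matrix (Fin n) (Fin n) ℂ) + ((t : ℝ) : ℂ) • polarS g) := by
  rcases t.2.2.eq_or_lt with h | h
  · rw [h]
    simpa using polarS_isUnit g
  · have h1 : (((1 - (t : ℝ) : ℝ) : ℂ) • (1 : Matrix (Fin n) (Fin n) ℂ)).PosDef :=
      Matrix.PosDef.one.smul (by exact_mod_cast sub_pos.2 h)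
    have h2 : (((t : ℝ) : ℂ) • polarS g).PosSemidef :=
      (polarS_posSemidef g).smul (by exact_mod_cast t.2.1)
    exact (h1.add_posSemidef h2).isUnit

/-- The unitary factor is homotopic to `g` itself, by scaling the positive factor linearly to `1`. -/
theorem polar_eqv {Z : Type*} [TopologicalSpace Z] {W : Set Z} (F : C(Z, GLC (Fin n)))
    (hF : ∀ w ∈ W, F w = 1) : Eqv W (mapHom uInc uInc_continuous (polarR.comp F)) F := by
  let P : C(I × GLC (Fin n), GLC (Fin n)) := mkGL
    (fun p => ((1 - (p.1 : ℝ) : ℝ) : ℂ) • (1 : Matrix (Fin n) (Fin n) ℂ) +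
      ((p.1 : ℝ) : ℂ) • polarS p.2)
    (by
      have := polarS_continuous (n := n)
      fun_prop)
    (fun p => polar_path_isUnit p.2 p.1)
  refine Eqv.of_homotopy
    ⟨fun p => uInc (polarR (F p.2)) * P (p.1, F p.2), ?_⟩ ?_ ?_ ?_
  · have := uInc_continuous (n := n)
    fun_prop
  · intro z
    have : P (0, F z) = 1 := by
      ext1; simp [P]
    simp [this]
  · intro z
    have : P (1, F z) = polarU (F z) := by
      ext1; simp [P, polarU_val]
    simp [this, uInc_polarR]
  · intro t w hw
    have h1 (s : I) : P (s, 1) = 1 := by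
      ext1
      have : polarS (1 : GLC (Fin n)) = 1 := polarS_eq_one _ (by simp)
      simp only [P, mkGL_val, this, ← add_smul]
      simp
    simp [hF w hw, h1]

/-- The retraction onto the unitary group carries null-homotopies back. -/
theorem null_of_uInc {Z : Type*} [TopologicalSpace Z] {W : Set Z}
    (f : C(Z, Matrix.unitaryGroup (Fin n) ℂ)) (h : mapHom uInc uInc_continuous f ∈ Nul W) :
    f ∈ Nul W := by
  obtain ⟨H, h0, h1, hw⟩ := h
  refine ⟨polarR.comp H, fun z => ?_, fun z => ?_, fun t w hm => ?_⟩
  · simp [h0, polarR_one]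
  · simp [h1, polarR_uInc]
  · simp [hw t w hm, polarR_one]

theorem pi_unitary (k : ℕ) :
    Nonempty (π_ (k + 1) (Matrix.unitaryGroup (Fin n) ℂ) 1 ≃* π_ (k + 1) (GLC (Fin n)) 1) := by
  refine piMulEquiv_of_hom uInc uInc_continuous k (fun f h _ => null_of_uInc f h) fun F hF => ?_
  exact ⟨polarR.comp F, fun x hx => by simp [hF x hx, polarR_one], polar_eqv F hF⟩

end Polar

theorem subsingleton_pi {G : Type} [Group G] [TopologicalSpace G] [IsTopologicalGroup G] {k : ℕ}
    (h : ∀ f : C(Fin k → I, G), (∀ x ∈ Cube.boundary _, f x = 1) → f ∈ Nul (Cube.boundary _)) :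
    Subsingleton (π_ k G 1) := by
  refine ⟨fun a b => ?_⟩
  induction a using Quotient.inductionOn with | _ p
  induction b using Quotient.inductionOn with | _ q
  refine Quotient.sound ((homotopic_iff p q).2 ?_)
  exact (eqv_one.2 (h p.1 p.2)).trans (eqv_one.2 (h q.1 q.2)).symm

theorem pi_zero_subsingleton (n : ℕ) :
    Subsingleton (π_ 0 (Matrix.unitaryGroup (Fin n) ℂ) 1) :=
  subsingleton_pi fun _ _ => null_of_uInc _ (gl_connected _)

/-- `π₂(GL(ι ⊕ ι))` is the image of `π₀(GL(ι)) = 0` under the Bott map. -/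
theorem pi_two_gl {ι : Type} [Fintype ι] [DecidableEq ι] (hι : 3 ≤ Fintype.card ι) :
    Subsingleton (π_ 2 (GLC (ι ⊕ ι)) 1) := by
  refine subsingleton_pi fun F hF => ?_
  obtain ⟨a, -, h⟩ := bottC_surj (k := 0) (by omega) F hF
  have h1 := bottC_eqv (eqv_one.2 (gl_connected a))
  have h2 : bottC (1 : C(Fin 0 → I, GLC ι)) = 1 := by
    ext1 y
    simp [bottC, bott_apply]
  rw [h2, eqv_one] at h1
  exact h.mem_iff.1 h1

theorem pi_two_subsingleton (n : ℕ) (hn : 3 ≤ n) :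
    Subsingleton (π_ 2 (Matrix.unitaryGroup (Fin n) ℂ) 1) := by
  obtain ⟨e1⟩ := pi_unitary (n := n) 1
  obtain ⟨e2⟩ := pi_inr (ι := Fin n) (κ := Fin n) (k := 1) (by simp; omega)
  have : Subsingleton (π_ 2 (GLC (Fin n ⊕ Fin n)) 1) := pi_two_gl (by simpa using hn)
  exact (e1.trans e2).toEquiv.subsingleton

/-- The isomorphism is the composite through `GL(n)` in degree `j + 1`, `GL(2n)` in degree `j + 3` (by the
Bott map) and `GL(n)` in degree `j + 3`. -/
theorem periodicity_pos (j n : ℕ) (hn : j + 10 ≤ n) :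
    Nonempty (π_ (j + 1) (Matrix.unitaryGroup (Fin n) ℂ) 1 ≃*
      π_ (j + 2 + 1) (Matrix.unitaryGroup (Fin n) ℂ) 1) := by
  obtain ⟨e1⟩ := pi_unitary (n := n) j
  obtain ⟨e2⟩ := pi_bott (ι := Fin n) (k := j) (by simp; omega)
  obtain ⟨e3⟩ := pi_inr (ι := Fin n) (κ := Fin n) (k := j + 2) (by simp; omega)
  obtain ⟨e4⟩ := pi_unitary (n := n) (j + 2)
  exact ⟨((e1.trans e2).trans e3.symm).trans e4.symm⟩

end BottPer

/-- **Periodicity (period two) of the stable homotopy groups of the unitary groups.**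
For every `i ≥ 0` there is an `N` such that for all `n ≥ N` the homotopy groups
`π_i(U(n), I)` and `π_{i+2}(U(n), I)` (based at the identity) are isomorphic.
The isomorphism is stated as a bijection for every `i` (covering the case `i = 0` of
pointed sets of path components), together with a group isomorphism whenever `i ≥ 1`
(where both homotopy groups carry their group structures). -/
theorem bott_periodicity_unitary_period_two (i : ℕ) :
    ∃ N : ℕ, ∀ n : ℕ, N ≤ n →
      Nonempty ((π_ i) (Matrix.unitaryGroup (Fin n) ℂ) 1 ≃
        (π_ (i + 2)) (Matrix.unitaryGroup (Fin n) ℂ) 1) ∧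
      ∀ j : ℕ, i = j + 1 →
        Nonempty ((π_ (j + 1)) (Matrix.unitaryGroup (Fin n) ℂ) 1 ≃*
          (π_ (j + 2 + 1)) (Matrix.unitaryGroup (Fin n) ℂ) 1) := by
  refine ⟨i + 10, fun n hn => ⟨?_, fun j hj => BottPer.periodicity_pos j n (by omega)⟩⟩
  cases i with
  | zero =>
    -- in degrees `0` and `2` both sets have one element
    have h0 := BottPer.pi_zero_subsingleton n
    have h2 := BottPer.pi_two_subsingleton n (by omega)
    exact ⟨⟨fun _ => ⟦GenLoop.const⟧, fun _ => ⟦GenLoop.const⟧, fun _ => Subsingleton.elim _ _,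
      fun _ => Subsingleton.elim _ _⟩⟩
  | succ j =>
    obtain ⟨e⟩ := BottPer.periodicity_pos j n (by omega)
    exact ⟨e.toEquiv⟩
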